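/- arXiv:0803.2026 — 3 statements merged into one kernel-verified Lean document; each statement's English description precedes it below -/
import Mathlib

section
/- Let f, g ∈ ℂ[x₁,…,xₙ] be polynomials with zero constant term, each having an isolated singularity at the origin (i.e., their Tjurina algebras are finite-dimensional over ℂ). Then f and g are contact equivalent if and only if the Tjurina algebras T_f and T_g are isomorphic as ℂ-algebras. -/
/-!
Contact equivalent series have Tjurina ideals that correspond under an automorphism, which gives one
implication (`algEquiv_of_contactEquiv`). The converse is the formal version of the Mather–Yau
argument.

The Tjurina ideal `Tj f` is described without coordinates as `{a f + δ f}`, where `δ` runs over the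
derivations of the power series ring, and it contains a power of the maximal ideal because the
Tjurina algebra is finite-dimensional. If the Tjurina algebras vanish, both series have nonzero
linear part and are equivalent to a coordinate. Otherwise the isomorphism of Tjurina algebras lifts to
an automorphism of the power series ring (`exists_algEquiv_lift`), so that one may assume
`Tj f = Tj g = I`.

Let `prim I` be the space of all `h` with `Tj h ≤ I`. It contains the complex line joining `f` and
`g`, and all but finitely many points `f_t` of that line have Tjurina ideal exactly `I`
(`finite_Tj_ne`). For such `t` every `h` in `prim I` can be written `a f_t + ξ f_t`, where `ξ`
automatically preserves `I`, `prim I` and the maximal ideal. Hence, in the finite-dimensional algebra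
of jets, the tangent space at `f_t` to the orbit under units and automorphisms is the whole image of
`prim I`. Exponentiating derivations and using the submersion theorem, the orbits are open at these
points (`orbit_nhds`); since the complement of a finite set in `ℂ` is connected, the jets of `f` and
`g` lie in the same orbit (`line_orbit`).

Finally, a series whose Tjurina ideal contains the `k`-th power of the maximal ideal is determined up
to contact equivalence by its jet of order `2k+1` (`determinacy`), which is proved by a Newton
iteration in the power series ring.
-/


open MvPolynomial

noncomputable section

/-- Two formal power series are *contact equivalent* if one is a unit times an
algebra-automorphism image of the other. -/
def ContactEquiv {N : ℕ} (f g : MvPowerSeries (Fin N) ℂ) : Prop :=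
  ∃ (φ : MvPowerSeries (Fin N) ℂ ≃ₐ[ℂ] MvPowerSeries (Fin N) ℂ)
    (u : (MvPowerSeries (Fin N) ℂ)ˣ), f = (u : MvPowerSeries (Fin N) ℂ) * φ g

/-- The Tjurina ideal ⟨f, ∂f/∂x₁, …, ∂f/∂x_N⟩ of a polynomial, as an ideal of the
formal power series ring. -/
def tjurinaIdeal {N : ℕ} (f : MvPolynomial (Fin N) ℂ) : Ideal (MvPowerSeries (Fin N) ℂ) :=
  Ideal.span (insert (↑f) (Set.range fun i =>
    ((pderiv i f : MvPolynomial (Fin N) ℂ) : MvPowerSeries (Fin N) ℂ)))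

/-- The Tjurina algebra ℂ[[x₁,…,x_N]]/⟨f, ∂f/∂x₁,…,∂f/∂x_N⟩. -/
abbrev TjurinaAlgebra {N : ℕ} (f : MvPolynomial (Fin N) ℂ) :=
  MvPowerSeries (Fin N) ℂ ⧸ tjurinaIdeal f

/-! ### The adic filtration of the power series ring -/

/-- The ring `ℂ[[x₁,…,x_n]]`. -/
abbrev PS (n : ℕ) := MvPowerSeries (Fin n) ℂ

/-- The maximal ideal of `ℂ[[x₁,…,x_n]]`: the series without constant term. -/
def maxI (n : ℕ) : Ideal (PS n) := RingHom.ker (MvPowerSeries.constantCoeff (σ := Fin n) (R := ℂ))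

section Filtration
variable {n : ℕ}

theorem mem_maxI {p : PS n} : p ∈ maxI n ↔ MvPowerSeries.constantCoeff p = 0 := RingHom.mem_ker

theorem X_mem_maxI (i : Fin n) : (MvPowerSeries.X i : PS n) ∈ maxI n := by
  simp [mem_maxI]

theorem isUnit_iff_notMem {p : PS n} : IsUnit p ↔ p ∉ maxI n := by
  rw [MvPowerSeries.isUnit_iff_constantCoeff, mem_maxI, isUnit_iff_ne_zero]

theorem le_maxI {I : Ideal (PS n)} (hI : I ≠ ⊤) : I ≤ maxI n := by
  intro p hp
  by_contra h
  exact hI (I.eq_top_of_isUnit_mem hp (isUnit_iff_notMem.2 h))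

/-- A series of order at least `k + 1` is a combination of the variables with coefficients of order
at least `k`. -/
theorem exists_eq_sum_X_mul {k : ℕ} {p : PS n}
    (hp : ∀ d, d.degree < k + 1 → MvPowerSeries.coeff d p = 0) :
    ∃ q : Fin n → PS n, p = ∑ i, MvPowerSeries.X i * q i ∧
      ∀ i d, d.degree < k → MvPowerSeries.coeff d (q i) = 0 := by
  classical
  -- `m d` picks a variable dividing the monomial `x^d`, `d ≠ 0`
  have hex : ∀ d : Fin n →₀ ℕ, ∃ o : Option (Fin n), d ≠ 0 → ∃ i, o = some i ∧ d i ≠ 0 := by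
    intro d
    by_cases hd : d = 0
    · exact ⟨none, fun h => (h hd).elim⟩
    · obtain ⟨i, hi⟩ := Finsupp.ne_iff.1 hd
      exact ⟨some i, fun _ => ⟨i, rfl, hi⟩⟩
  choose m hm using hex
  let q : Fin n → PS n := fun i e =>
    if m (e + Finsupp.single i 1) = some i then MvPowerSeries.coeff (e + Finsupp.single i 1) p
    else 0
  have hq : ∀ i e, MvPowerSeries.coeff e (q i) = if m (e + Finsupp.single i 1) = some i then
    MvPowerSeries.coeff (e + Finsupp.single i 1) p else 0 := fun i e => rfl
  refine ⟨q, ?_, fun i d hd => ?_⟩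
  · ext d
    rw [map_sum]
    have hterm : ∀ i, MvPowerSeries.coeff d (MvPowerSeries.X i * q i) =
        if d i ≠ 0 ∧ m d = some i then MvPowerSeries.coeff d p else 0 := by
      intro i
      rw [MvPowerSeries.X, MvPowerSeries.coeff_monomial_mul, one_mul]
      by_cases hdi : d i = 0
      · rw [if_neg, if_neg (fun h => h.1 hdi)]
        intro h
        have := h i
        simp [hdi] at this
      · have hle : Finsupp.single i 1 ≤ d := by
          rw [Finsupp.single_le_iff]; exact Nat.one_le_iff_ne_zero.2 hdi
        rw [if_pos hle, hq, tsub_add_cancel_of_le hle]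
        simp [hdi]
    simp only [hterm]
    by_cases hd : d = 0
    · subst hd
      simp [hp 0 (by simp)]
    · obtain ⟨i, hi, hdi⟩ := hm d hd
      rw [Finset.sum_eq_single i]
      · simp [hi, hdi]
      · intro j _ hj
        rw [if_neg]
        rintro ⟨-, h⟩
        rw [hi] at h
        exact hj (Option.some.inj h).symm
      · simp
  · rw [hq]
    split_ifs
    · exact hp _ (by rw [map_add, Finsupp.degree_single]; omega)
    · rfl

/-- The powers of the maximal ideal in terms of coefficients. -/
theorem mem_pow_iff {k : ℕ} {p : PS n} :
    p ∈ maxI n ^ k ↔ ∀ d, d.degree < k → MvPowerSeries.coeff d p = 0 := by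
  constructor
  · intro h
    suffices h' : (k : ℕ∞) ≤ p.order by
      intro d hd
      exact MvPowerSeries.coeff_of_lt_order (lt_of_lt_of_le (by exact_mod_cast hd) h')
    induction k generalizing p with
    | zero => simp
    | succ k ih =>
      rw [pow_succ] at h
      refine Submodule.mul_induction_on h (fun a ha b hb => ?_) (fun a b ha hb => ?_)
      · refine le_trans ?_ MvPowerSeries.le_order_mul
        push_cast
        exact add_le_add (ih ha)
          (MvPowerSeries.one_le_order_iff_constCoeff_eq_zero.2 (mem_maxI.1 hb))
      · exact le_trans (le_min ha hb) MvPowerSeries.min_order_le_add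
  · intro h
    induction k generalizing p with
    | zero => simp
    | succ k ih =>
      obtain ⟨q, rfl, hq⟩ := exists_eq_sum_X_mul h
      rw [pow_succ']
      exact Ideal.sum_mem _ fun i _ => Ideal.mul_mem_mul (X_mem_maxI i) (ih (hq i))

theorem maxI_le_of_X_mem {I : Ideal (PS n)} (h : ∀ i, (MvPowerSeries.X i : PS n) ∈ I) :
    maxI n ≤ I := by
  intro p hp
  rw [← pow_one (maxI n), mem_pow_iff] at hp
  obtain ⟨q, rfl, -⟩ := exists_eq_sum_X_mul (k := 0) hp
  exact I.sum_mem fun i _ => I.mul_mem_right _ (h i)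

theorem eq_zero_of_forall_mem_pow {p : PS n} (h : ∀ k, p ∈ maxI n ^ k) : p = 0 := by
  ext d
  exact mem_pow_iff.1 (h (d.degree + 1)) d (Nat.lt_succ_self _)

theorem sub_truncTotal_mem (p : PS n) (k : ℕ) :
    p - (MvPowerSeries.truncTotal k p : MvPolynomial (Fin n) ℂ) ∈ maxI n ^ k := by
  rw [mem_pow_iff]
  intro d hd
  rw [map_sub, MvPolynomial.coeff_coe, MvPowerSeries.coeff_truncTotal _ hd, sub_self]

/-- Completeness of `ℂ[[x₁,…,x_n]]` for the filtration by powers of the maximal ideal. -/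
theorem exists_limit (p : ℕ → PS n) (h : ∀ j, p (j + 1) - p j ∈ maxI n ^ j) :
    ∃ q, ∀ j, q - p j ∈ maxI n ^ j := by
  have hmono : ∀ j l, p (j + l) - p j ∈ maxI n ^ j := by
    intro j l
    induction l with
    | zero => simp
    | succ l ih =>
      have : p (j + (l + 1)) - p j = (p (j + l + 1) - p (j + l)) + (p (j + l) - p j) := by
        rw [add_assoc]; ring
      rw [this]
      exact add_mem (Ideal.pow_le_pow_right (Nat.le_add_right j l) (h _)) ih
  let q : PS n := fun d => MvPowerSeries.coeff d (p (d.degree + 1))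
  refine ⟨q, fun j => mem_pow_iff.2 ?_⟩
  intro d hd
  obtain ⟨l, rfl⟩ := Nat.exists_eq_add_of_le (Nat.succ_le_of_lt hd)
  have := mem_pow_iff.1 (hmono (d.degree + 1) l) d (Nat.lt_succ_self _)
  rw [map_sub, sub_eq_zero] at this
  rw [map_sub, sub_eq_zero]
  exact this.symm

instance finiteDimensional_jets (k : ℕ) : FiniteDimensional ℂ (PS n ⧸ maxI n ^ k) := by
  have hfin : Finite {d : Fin n →₀ ℕ // d.degree < k} :=
    ((Finsupp.finite_of_degree_le (σ := Fin n) k).subset fun d (hd : d.degree < k) => hd.le)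
  let L : PS n →ₗ[ℂ] ({d : Fin n →₀ ℕ // d.degree < k} → ℂ) :=
    LinearMap.pi fun d => MvPowerSeries.coeff (R := ℂ) d.1
  let L' : (PS n ⧸ (maxI n ^ k).restrictScalars ℂ) →ₗ[ℂ] ({d : Fin n →₀ ℕ // d.degree < k} → ℂ) :=
    Submodule.liftQ _ L (fun p hp => by
      ext d; exact mem_pow_iff.1 hp d.1 d.2)
  have hL' : Function.Injective L' := by
    rw [← LinearMap.ker_eq_bot]
    refine Submodule.ker_liftQ_eq_bot _ _ _ fun p hp => mem_pow_iff.2 fun d hd => ?_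
    exact congrFun hp ⟨d, hd⟩
  exact FiniteDimensional.of_injective (V₂ := {d : Fin n →₀ ℕ // d.degree < k} → ℂ)
    (L' : (PS n ⧸ maxI n ^ k) →ₗ[ℂ] _) hL'

theorem algHom_pow_mem {φ : PS n →ₐ[ℂ] PS n} (h : ∀ i, φ (MvPowerSeries.X i) ∈ maxI n)
    {k : ℕ} {p : PS n} (hp : p ∈ maxI n ^ k) : φ p ∈ maxI n ^ k := by
  have h1 : maxI n ≤ (maxI n).comap φ := maxI_le_of_X_mem h
  exact Ideal.le_comap_pow φ k (Ideal.pow_right_mono h1 k hp)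

theorem algEquiv_mem_iff (φ : PS n ≃ₐ[ℂ] PS n) {p : PS n} : φ p ∈ maxI n ↔ p ∈ maxI n := by
  rw [← not_iff_not, ← isUnit_iff_notMem, ← isUnit_iff_notMem]
  exact MulEquiv.isUnit_map φ

theorem algEquiv_pow_mem (φ : PS n ≃ₐ[ℂ] PS n) {k : ℕ} {p : PS n} (hp : p ∈ maxI n ^ k) :
    φ p ∈ maxI n ^ k :=
  algHom_pow_mem (φ := φ.toAlgHom) (fun i => (algEquiv_mem_iff φ).2 (X_mem_maxI i)) hp

/-- Homomorphisms that factor through jets of order `k` are determined by the coordinates. -/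
theorem algHom_eq_of_X {B : Type*} [CommRing B] [Algebra ℂ B] (α β : PS n →ₐ[ℂ] B) (k : ℕ)
    (hα : ∀ p ∈ maxI n ^ k, α p = 0) (hβ : ∀ p ∈ maxI n ^ k, β p = 0)
    (h : ∀ i, α (MvPowerSeries.X i) = β (MvPowerSeries.X i)) (p : PS n) : α p = β p := by
  have hpoly : α.comp (MvPolynomial.coeToMvPowerSeries.algHom ℂ) =
      β.comp (MvPolynomial.coeToMvPowerSeries.algHom ℂ) := by
    ext i; simpa using h i
  have h1 := hα _ (sub_truncTotal_mem p k)
  have h2 := hβ _ (sub_truncTotal_mem p k)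
  have h3 := DFunLike.congr_fun hpoly (MvPowerSeries.truncTotal k p)
  rw [map_sub, sub_eq_zero] at h1 h2
  rw [h1, h2]
  simpa using h3

theorem exists_subst (y : Fin n → PS n) (hy : ∀ i, y i ∈ maxI n) :
    ∃ φ : PS n →ₐ[ℂ] PS n, ∀ i, φ (MvPowerSeries.X i) = y i := by
  have hs : MvPowerSeries.HasSubst y :=
    MvPowerSeries.hasSubst_of_constantCoeff_zero fun i => mem_maxI.1 (hy i)
  exact ⟨(MvPowerSeries.substAlgHom hs), fun i => MvPowerSeries.substAlgHom_X hs i⟩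

theorem derivation_pow_mem (δ : Derivation ℂ (PS n) (PS n)) {k : ℕ} {p : PS n}
    (hp : p ∈ maxI n ^ (k + 1)) : δ p ∈ maxI n ^ k := by
  induction k generalizing p with
  | zero => simp
  | succ k ih =>
    rw [pow_succ] at hp
    refine Submodule.mul_induction_on hp (fun a ha b hb => ?_) (fun a b ha hb => ?_)
    · rw [δ.leibniz, smul_eq_mul, smul_eq_mul]
      refine add_mem (Ideal.mul_mem_right _ _ ha) ?_
      rw [pow_succ']
      exact Ideal.mul_mem_mul hb (ih ha)
    · rw [map_add]; exact add_mem ha hb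

/-- The formal vector field `∑ bᵢ ∂/∂xᵢ`, as a derivation. -/
def vf (b : Fin n → PS n) : Derivation ℂ (PS n) (PS n) := ∑ i, b i • MvPowerSeries.pderiv ℂ i

theorem vf_apply (b : Fin n → PS n) (q : PS n) :
    vf b q = ∑ i, b i * MvPowerSeries.pderiv ℂ i q := by
  rw [vf, ← Derivation.coeFnAddMonoidHom_apply, map_sum, Finset.sum_apply]
  rfl

/-- Every derivation of `ℂ[[x₁,…,x_n]]` is a formal vector field: no continuity assumption is
needed, since derivations lower the adic filtration by at most one. -/
theorem derivation_eq_sum (δ : Derivation ℂ (PS n) (PS n)) (p : PS n) :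
    δ p = ∑ i, δ (MvPowerSeries.X i) * MvPowerSeries.pderiv ℂ i p := by
  classical
  let η : Derivation ℂ (PS n) (PS n) :=
    δ - vf fun i => δ (MvPowerSeries.X i)
  have hη : ∀ q, η q = δ q - ∑ i, δ (MvPowerSeries.X i) * MvPowerSeries.pderiv ℂ i q := by
    intro q; simp [η, vf_apply]
  rw [← sub_eq_zero, ← hη]
  have hX : ∀ i, η (MvPowerSeries.X i) = 0 := by
    intro i; rw [hη]
    simp [MvPowerSeries.pderiv_X, Pi.single_apply]
  have hpoly : ∀ P : MvPolynomial (Fin n) ℂ, η (P : PS n) = 0 := by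
    intro P
    induction P using MvPolynomial.induction_on with
    | C a =>
      rw [MvPolynomial.coe_C]
      exact η.map_algebraMap a
    | add p q hp hq => rw [MvPolynomial.coe_add, map_add, hp, hq, add_zero]
    | mul_X p i hp => rw [MvPolynomial.coe_mul, MvPolynomial.coe_X, η.leibniz, hp, hX]; simp
  refine eq_zero_of_forall_mem_pow fun k => ?_
  have := derivation_pow_mem η (sub_truncTotal_mem p (k + 1))
  rwa [map_sub, hpoly, sub_zero] at this

end Filtration

/-! ### Automorphisms and lifting of isomorphisms -/

section Lifting
variable {n : ℕ}

theorem algHom_sub_mem {χ : PS n →ₐ[ℂ] PS n}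
    (h : ∀ i, χ (MvPowerSeries.X i) - MvPowerSeries.X i ∈ maxI n ^ 2) {k : ℕ} {p : PS n}
    (hp : p ∈ maxI n ^ k) : χ p - p ∈ maxI n ^ (k + 1) := by
  have hX : ∀ i, χ (MvPowerSeries.X i) ∈ maxI n := fun i => by
    have := add_mem (Ideal.pow_le_self two_ne_zero (h i)) (X_mem_maxI i)
    rwa [sub_add_cancel] at this
  have h1 : ∀ q ∈ maxI n, χ q ∈ maxI n := fun q hq => by
    rw [← pow_one (maxI n)] at hq ⊢
    exact algHom_pow_mem hX hq
  have h0 : ∀ q, χ q - q ∈ maxI n := by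
    intro q
    have hq : q - MvPowerSeries.C (MvPowerSeries.constantCoeff q) ∈ maxI n := by simp [mem_maxI]
    have h2 := sub_mem (h1 _ hq) hq
    have h3 : χ (MvPowerSeries.C (MvPowerSeries.constantCoeff q)) =
      MvPowerSeries.C (MvPowerSeries.constantCoeff q) := χ.commutes _
    rw [map_sub, h3] at h2
    simpa using h2
  have hmul : ∀ a b, χ (a * b) - a * b = (χ a - a) * χ b + a * (χ b - b) := fun a b => by
    rw [map_mul]; ring
  have h2 : ∀ q ∈ maxI n, χ q - q ∈ maxI n ^ 2 := by
    intro q hq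
    rw [← pow_one (maxI n), mem_pow_iff] at hq
    obtain ⟨r, rfl, -⟩ := exists_eq_sum_X_mul (k := 0) hq
    rw [map_sum, ← Finset.sum_sub_distrib]
    refine Ideal.sum_mem _ fun i _ => ?_
    rw [hmul]
    refine add_mem (Ideal.mul_mem_right _ _ (h i)) ?_
    rw [pow_two]
    exact Ideal.mul_mem_mul (X_mem_maxI i) (h0 _)
  induction k generalizing p with
  | zero => simpa using h0 p
  | succ k ih =>
    rw [pow_succ] at hp
    refine Submodule.mul_induction_on hp (fun a ha b hb => ?_) (fun a b ha hb => ?_)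
    · rw [hmul]
      refine add_mem ?_ ?_
      · rw [pow_succ]; exact Ideal.mul_mem_mul (ih ha) (h1 b hb)
      · rw [add_assoc, pow_add]; exact Ideal.mul_mem_mul ha (h2 b hb)
    · rw [map_add, add_sub_add_comm]; exact add_mem ha hb

/-- An endomorphism with identity linear part is bijective, by successive approximation. -/
theorem bijective_of_sub_mem {χ : PS n →ₐ[ℂ] PS n}
    (h : ∀ i, χ (MvPowerSeries.X i) - MvPowerSeries.X i ∈ maxI n ^ 2) :
    Function.Bijective χ := by
  have hX : ∀ i, χ (MvPowerSeries.X i) ∈ maxI n := fun i => by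
    have := add_mem (Ideal.pow_le_self two_ne_zero (h i)) (X_mem_maxI i)
    rwa [sub_add_cancel] at this
  constructor
  · rw [injective_iff_map_eq_zero]
    intro p hp
    refine eq_zero_of_forall_mem_pow fun k => ?_
    induction k with
    | zero => simp
    | succ k ih =>
      have := algHom_sub_mem h ih
      rwa [hp, zero_sub, neg_mem_iff] at this
  · intro b
    let p : ℕ → PS n := fun j => Nat.rec 0 (fun _ x => x + (b - χ x)) j
    have hp : ∀ j, p (j + 1) = p j + (b - χ (p j)) := fun j => rfl
    have hb : ∀ j, b - χ (p j) ∈ maxI n ^ j := by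
      intro j
      induction j with
      | zero => simp
      | succ j ih =>
        have := algHom_sub_mem h ih
        rw [← neg_mem_iff] at this
        rw [hp, map_add]
        convert this using 1
        ring
    obtain ⟨q, hq⟩ := exists_limit p (fun j => by rw [hp, add_sub_cancel_left]; exact hb j)
    refine ⟨q, ?_⟩
    rw [← sub_eq_zero, ← neg_eq_zero]
    refine eq_zero_of_forall_mem_pow fun k => ?_
    have := sub_mem (hb k) (algHom_pow_mem hX (hq k))
    rw [map_sub] at this
    convert this using 1
    ring

/-- The linear part of a power series. -/
def lin (n : ℕ) : PS n →ₗ[ℂ] (Fin n → ℂ) :=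
  LinearMap.pi fun i => MvPowerSeries.coeff (R := ℂ) (Finsupp.single i 1)

/-- The linear form `∑ vᵢ xᵢ`. -/
def linForm (n : ℕ) : (Fin n → ℂ) →ₗ[ℂ] PS n :=
  Fintype.linearCombination ℂ fun i => (MvPowerSeries.X i : PS n)

theorem lin_X (i : Fin n) : lin n (MvPowerSeries.X i) = Pi.single i 1 := by
  classical
  ext j
  simp [lin, MvPowerSeries.coeff_index_single_X, Pi.single_apply]

theorem linForm_mem (v : Fin n → ℂ) : linForm n v ∈ maxI n := by
  rw [linForm, Fintype.linearCombination_apply]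
  exact Ideal.sum_mem _ fun i _ => Submodule.smul_of_tower_mem _ _ (X_mem_maxI i)

theorem lin_linForm (v : Fin n → ℂ) : lin n (linForm n v) = v := by
  rw [linForm, Fintype.linearCombination_apply, map_sum]
  simp only [map_smul, lin_X]
  exact (pi_eq_sum_univ' v).symm

theorem lin_eq_zero {p : PS n} (hp : p ∈ maxI n ^ 2) : lin n p = 0 := by
  ext i
  exact mem_pow_iff.1 hp _ (by simp)

theorem mem_sq_of_lin {p : PS n} (h0 : p ∈ maxI n) (h : lin n p = 0) : p ∈ maxI n ^ 2 := by
  rw [mem_pow_iff]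
  intro d hd
  obtain h1 | h1 : d.degree = 0 ∨ d.degree = 1 := by omega
  · rw [Finsupp.degree_eq_zero_iff] at h1
    rw [h1]; exact mem_maxI.1 h0
  · obtain ⟨i, hi⟩ := Finsupp.ne_iff.1 (show d ≠ 0 by rintro rfl; simp at h1)
    have hle : Finsupp.single i 1 ≤ d := by
      rw [Finsupp.single_le_iff]; exact Nat.one_le_iff_ne_zero.2 hi
    have h2 : (d - Finsupp.single i 1).degree + 1 = d.degree := by
      conv_rhs => rw [← tsub_add_cancel_of_le hle, map_add, Finsupp.degree_single]
    have h3 : d - Finsupp.single i 1 = 0 := by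
      rw [← Finsupp.degree_eq_zero_iff]; omega
    have h4 : d = Finsupp.single i 1 := le_antisymm (tsub_eq_zero_iff_le.1 h3) hle
    rw [h4]; exact congrFun h i

theorem lin_algHom {φ : PS n →ₐ[ℂ] PS n} (hX : ∀ i, φ (MvPowerSeries.X i) ∈ maxI n)
    {p : PS n} (hp : p ∈ maxI n) :
    lin n (φ p) =
      Fintype.linearCombination ℂ (fun i => lin n (φ (MvPowerSeries.X i))) (lin n p) := by
  have h1 : p - linForm n (lin n p) ∈ maxI n ^ 2 :=
    mem_sq_of_lin (sub_mem hp (linForm_mem _)) (by rw [map_sub, lin_linForm, sub_self])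
  have h2 := lin_eq_zero (algHom_pow_mem hX h1)
  rw [map_sub, map_sub, sub_eq_zero] at h2
  rw [h2, linForm, Fintype.linearCombination_apply, Fintype.linearCombination_apply, map_sum,
    map_sum]
  simp

/-- Formal inverse function theorem: an endomorphism with bijective linear part is bijective. It is
bijective after composition with a linear substitution on either side. -/
theorem bijective_of_lin {φ : PS n →ₐ[ℂ] PS n} (hX : ∀ i, φ (MvPowerSeries.X i) ∈ maxI n)
    (hL : Function.Bijective
      (Fintype.linearCombination ℂ (fun i => lin n (φ (MvPowerSeries.X i))))) :
    Function.Bijective φ := by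
  let L := LinearEquiv.ofBijective _ hL
  obtain ⟨ψ, hψ⟩ := exists_subst (fun i : Fin n => linForm n (L.symm (Pi.single i 1)))
    (fun i => linForm_mem _)
  have hψX : ∀ i, ψ (MvPowerSeries.X i) ∈ maxI n := fun i => by rw [hψ]; exact linForm_mem _
  have hL' : ∀ v, Fintype.linearCombination ℂ (fun i => lin n (φ (MvPowerSeries.X i))) v = L v :=
    fun v => rfl
  have hLψ : ∀ v, Fintype.linearCombination ℂ (fun i => lin n (ψ (MvPowerSeries.X i))) v =
      L.symm v := by
    intro v
    simp only [hψ, lin_linForm]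
    rw [Fintype.linearCombination_apply]
    conv_rhs => rw [pi_eq_sum_univ' v, map_sum]
    simp
  have hm : ∀ {α : PS n →ₐ[ℂ] PS n}, (∀ i, α (MvPowerSeries.X i) ∈ maxI n) →
      ∀ {p}, p ∈ maxI n → α p ∈ maxI n := fun hα p hp => by
    rw [← pow_one (maxI n)] at hp ⊢
    exact algHom_pow_mem hα hp
  have h1 : Function.Bijective (φ.comp ψ) := by
    refine bijective_of_sub_mem fun i => mem_sq_of_lin
      (sub_mem (hm hX (hψX i)) (X_mem_maxI i)) ?_
    rw [map_sub, AlgHom.comp_apply, lin_algHom hX (hψX i), hψ, lin_linForm, hL', lin_X,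
      LinearEquiv.apply_symm_apply, sub_self]
  have h2 : Function.Bijective (ψ.comp φ) := by
    refine bijective_of_sub_mem fun i => mem_sq_of_lin
      (sub_mem (hm hψX (hX i)) (X_mem_maxI i)) ?_
    rw [map_sub, AlgHom.comp_apply, lin_algHom hψX (hX i), hLψ, lin_algHom hX (X_mem_maxI i), hL',
      LinearEquiv.symm_apply_apply, sub_self]
  refine ⟨fun a b hab => h2.1 ?_, fun b => ?_⟩
  · simp [hab]
  · obtain ⟨a, ha⟩ := h1.2 b
    exact ⟨ψ a, ha⟩

/-- A linear endomorphism whose image spans together with `B` can be made bijective by adding a map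
into `B`: map the kernel isomorphically onto a complement of the image contained in `B`. -/
theorem exists_bijective_sub_mem {V : Type*} [AddCommGroup V] [Module ℂ V] [FiniteDimensional ℂ V]
    (P : V →ₗ[ℂ] V) (B : Submodule ℂ V) (h : LinearMap.range P ⊔ B = ⊤) :
    ∃ L : V →ₗ[ℂ] V, Function.Bijective L ∧ ∀ v, L v - P v ∈ B := by
  let q := (LinearMap.range P).mkQ
  have hq : Function.Surjective (q.comp B.subtype) := by
    intro x
    obtain ⟨v, rfl⟩ := Submodule.mkQ_surjective _ x
    obtain ⟨a, ha, b, hb, rfl⟩ := Submodule.mem_sup.1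
      (h ▸ Submodule.mem_top : v ∈ LinearMap.range P ⊔ B)
    refine ⟨⟨b, hb⟩, ?_⟩
    have : q a = 0 := by simpa [q] using ha
    simp only [LinearMap.comp_apply, Submodule.subtype_apply]
    change q b = q (a + b)
    rw [map_add, this, zero_add]
  obtain ⟨s, hs⟩ := LinearMap.exists_rightInverse_of_surjective _ (LinearMap.range_eq_top.2 hq)
  have hdim : Module.finrank ℂ (LinearMap.ker P) = Module.finrank ℂ (V ⧸ LinearMap.range P) := by
    have h1 := P.finrank_range_add_finrank_ker
    have h2 := (LinearMap.range P).finrank_quotient_add_finrank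
    omega
  let e := LinearEquiv.ofFinrankEq _ _ hdim
  obtain ⟨π, hπ⟩ := LinearMap.exists_leftInverse_of_injective (LinearMap.ker P).subtype
    (LinearMap.ker P).ker_subtype
  let L : V →ₗ[ℂ] V := P + B.subtype.comp (s.comp (e.toLinearMap.comp π))
  have hinj : Function.Injective L := by
    rw [injective_iff_map_eq_zero]
    intro x hx
    have h1 : P x + (s (e (π x)) : V) = 0 := hx
    have h2 : q (s (e (π x)) : V) = e (π x) := LinearMap.congr_fun hs (e (π x))
    have h3 : q (P x) = 0 := by simp [q]
    have h4 := congrArg q h1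
    rw [map_add, h2, h3, zero_add, map_zero] at h4
    have h5 : π x = 0 := by simpa using h4
    rw [h5] at h1
    have h6 : P x = 0 := by simpa using h1
    have h7 : π x = ⟨x, h6⟩ := LinearMap.congr_fun hπ (⟨x, h6⟩ : LinearMap.ker P)
    rw [h5] at h7
    exact congrArg Subtype.val h7.symm
  refine ⟨L, ⟨hinj, LinearMap.injective_iff_surjective.1 hinj⟩, fun v => ?_⟩
  have : L v - P v = (s (e (π v)) : V) := by simp [L]
  rw [this]; exact (s _).2

theorem exists_lift {I J : Ideal (PS n)} (hJ : J ≠ ⊤) {k : ℕ} (hIk : maxI n ^ k ≤ I)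
    (θ : PS n →ₐ[ℂ] PS n ⧸ J) (hθ : ∀ p ∈ I, θ p = 0) :
    ∃ y : Fin n → PS n, (∀ i, y i ∈ maxI n) ∧
      ∀ i, Ideal.Quotient.mk J (y i) = θ (MvPowerSeries.X i) := by
  choose y hy using fun i => Ideal.Quotient.mk_surjective (I := J) (θ (MvPowerSeries.X i))
  refine ⟨y, fun i => ?_, hy⟩
  have h1 : y i ^ k ∈ J := by
    rw [← Ideal.Quotient.eq_zero_iff_mem, map_pow, hy, ← map_pow]
    exact hθ _ (hIk (Ideal.pow_mem_pow (X_mem_maxI i) k))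
  have : (maxI n).IsPrime := RingHom.ker_isPrime _
  exact this.mem_of_pow_mem k (le_maxI hJ h1)

theorem mk_eq_of_X {I J : Ideal (PS n)} {k : ℕ} (hIk : maxI n ^ k ≤ I)
    (hJk : maxI n ^ k ≤ J) (θ : PS n →ₐ[ℂ] PS n ⧸ J) (hθ : ∀ p ∈ I, θ p = 0)
    {φ : PS n →ₐ[ℂ] PS n} (hX : ∀ i, φ (MvPowerSeries.X i) ∈ maxI n)
    (h : ∀ i, Ideal.Quotient.mk J (φ (MvPowerSeries.X i)) = θ (MvPowerSeries.X i)) (p : PS n) :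
    Ideal.Quotient.mk J (φ p) = θ p :=
  algHom_eq_of_X ((Ideal.Quotient.mkₐ ℂ J).comp φ) θ k
    (fun _ hp => Ideal.Quotient.eq_zero_iff_mem.2 (hJk (algHom_pow_mem hX hp)))
    (fun _ hp => hθ _ (hIk hp)) h p

/-- An isomorphism between proper quotients of finite colength of `ℂ[[x₁,…,x_n]]` lifts to an
automorphism. Any lift of the images of the coordinates gives an endomorphism inducing `θ`; its
linear part can be corrected by linear parts of elements of `J` to become bijective. -/
theorem exists_algEquiv_lift {I J : Ideal (PS n)} (hI : I ≠ ⊤) (hJ : J ≠ ⊤) {k : ℕ}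
    (hIk : maxI n ^ k ≤ I) (hJk : maxI n ^ k ≤ J) (θ : (PS n ⧸ I) ≃ₐ[ℂ] (PS n ⧸ J)) :
    ∃ φ : PS n ≃ₐ[ℂ] PS n, ∀ p, Ideal.Quotient.mk J (φ p) = θ (Ideal.Quotient.mk I p) := by
  classical
  let α : PS n →ₐ[ℂ] PS n ⧸ J := (θ : (PS n ⧸ I) →ₐ[ℂ] (PS n ⧸ J)).comp (Ideal.Quotient.mkₐ ℂ I)
  let β : PS n →ₐ[ℂ] PS n ⧸ I :=
    (θ.symm : (PS n ⧸ J) →ₐ[ℂ] (PS n ⧸ I)).comp (Ideal.Quotient.mkₐ ℂ J)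
  have hα' : ∀ p, α p = θ (Ideal.Quotient.mk I p) := fun p => rfl
  have hβ' : ∀ p, β p = θ.symm (Ideal.Quotient.mk J p) := fun p => rfl
  have hα : ∀ p ∈ I, α p = 0 := fun p hp => by
    rw [hα', Ideal.Quotient.eq_zero_iff_mem.2 hp, map_zero]
  have hβ : ∀ p ∈ J, β p = 0 := fun p hp => by
    rw [hβ', Ideal.Quotient.eq_zero_iff_mem.2 hp, map_zero]
  obtain ⟨y, hy, hyα⟩ := exists_lift hJ hIk α hα
  obtain ⟨z, hz, hzβ⟩ := exists_lift hI hJk β hβ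
  obtain ⟨φ₀, hφ₀⟩ := exists_subst y hy
  have hφ₀X : ∀ i, φ₀ (MvPowerSeries.X i) ∈ maxI n := fun i => by rw [hφ₀]; exact hy i
  have hφ₀α := mk_eq_of_X hIk hJk α hα hφ₀X (fun i => by rw [hφ₀, hyα])
  let P := Fintype.linearCombination ℂ (fun i => lin n (φ₀ (MvPowerSeries.X i)))
  let B : Submodule ℂ (Fin n → ℂ) := (J.restrictScalars ℂ).map (lin n)
  -- `φ₀ (z i)` is congruent to the `i`-th coordinate modulo `J`, where `z i` lifts its preimage
  have hPB : LinearMap.range P ⊔ B = ⊤ := by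
    rw [eq_top_iff, ← (Pi.basisFun ℂ (Fin n)).span_eq, Submodule.span_le]
    rintro _ ⟨i, rfl⟩
    rw [Pi.basisFun_apply, SetLike.mem_coe, Submodule.mem_sup]
    have hz' : φ₀ (z i) - MvPowerSeries.X i ∈ J := by
      rw [← Ideal.Quotient.eq_zero_iff_mem, map_sub, hφ₀α, hα', hzβ, hβ',
        AlgEquiv.apply_symm_apply, sub_self]
    refine ⟨_, ⟨lin n (z i), rfl⟩, - lin n (φ₀ (z i) - MvPowerSeries.X i),
      B.neg_mem ⟨_, hz', rfl⟩, ?_⟩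
    rw [map_sub, lin_algHom hφ₀X (hz i), lin_X]
    simp [P]
  obtain ⟨L, hL, hLP⟩ := exists_bijective_sub_mem P B hPB
  choose j hj hjl using fun i => hLP (Pi.single i 1)
  obtain ⟨φ, hφ⟩ := exists_subst (fun i => y i + j i)
    (fun i => add_mem (hy i) (le_maxI hJ (hj i)))
  have hφX : ∀ i, φ (MvPowerSeries.X i) ∈ maxI n := fun i => by
    rw [hφ]; exact add_mem (hy i) (le_maxI hJ (hj i))
  have hφα := mk_eq_of_X hIk hJk α hα hφX (fun i => by
    rw [hφ, map_add, hyα, Ideal.Quotient.eq_zero_iff_mem.2 (hj i), add_zero])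
  have hφL : Fintype.linearCombination ℂ (fun i => lin n (φ (MvPowerSeries.X i))) = L := by
    refine LinearMap.pi_ext' fun i => LinearMap.ext_ring ?_
    have := hjl i
    have hP : P (Pi.single i 1) = lin n (y i) := by simp [P, hφ₀]
    rw [LinearMap.comp_apply, LinearMap.comp_apply, LinearMap.coe_single,
      Fintype.linearCombination_apply_single, one_smul, hφ, map_add, this, hP,
      add_sub_cancel]
  refine ⟨AlgEquiv.ofBijective φ (bijective_of_lin hφX (hφL ▸ hL)), fun p => ?_⟩
  exact hφα p

end Lifting

/-! ### Orbits of units and automorphisms in a finite-dimensional algebra -/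

section Analytic
open NormedSpace Topology

variable {A : Type*} [NormedCommRing A] [NormedAlgebra ℂ A]

theorem summable_norm_exp_apply (T : A →L[ℂ] A) (x : A) :
    Summable (fun n : ℕ => ‖((n.factorial : ℂ)⁻¹) • (T ^ n) x‖) := by
  have h := (norm_expSeries_summable' (𝕂 := ℂ) T).mul_right ‖x‖
  refine Summable.of_nonneg_of_le (fun _ => norm_nonneg _) (fun n => ?_) h
  exact ContinuousLinearMap.le_opNorm (((n.factorial : ℂ)⁻¹) • (T ^ n)) x

/-- The Leibniz rule for the divided powers `Tⁿ / n!` of a derivation. -/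
theorem leibniz_pow_div (T : A →L[ℂ] A) (hT : ∀ x y, T (x * y) = x * T y + y * T x)
    (n : ℕ) (x y : A) :
    ((n.factorial : ℂ)⁻¹) • (T ^ n) (x * y) =
      ∑ ij ∈ Finset.HasAntidiagonal.antidiagonal n, (((ij.1.factorial : ℂ)⁻¹) • (T ^ ij.1) x) *
        (((ij.2.factorial : ℂ)⁻¹) • (T ^ ij.2) y) := by
  have key : (T ^ n) (x * y) =
      ∑ ij ∈ Finset.HasAntidiagonal.antidiagonal n,
        n.choose ij.1 • ((T ^ ij.1) x * (T ^ ij.2) y) := by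
    induction n with
    | zero => simp
    | succ n ih =>
      rw [Finset.sum_antidiagonal_choose_succ_nsmul (fun i j => (T ^ i) x * (T ^ j) y) n,
        pow_succ', mul_apply_eq_comp, ih, map_sum, ← Finset.sum_add_distrib]
      refine Finset.sum_congr rfl fun ij hij => ?_
      rw [n.choose_symm_of_eq_add (Finset.HasAntidiagonal.mem_antidiagonal.1 hij).symm, map_nsmul,
        hT,
        pow_succ', pow_succ', mul_apply_eq_comp, mul_apply_eq_comp,
        smul_add, mul_comm (T ((T ^ ij.1) x))]
  rw [key, Finset.smul_sum]
  refine Finset.sum_congr rfl fun ij hij => ?_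
  rw [smul_mul_smul_comm, ← Nat.cast_smul_eq_nsmul ℂ, smul_smul]
  congr 1
  have h := Nat.add_choose_mul_factorial_mul_factorial ij.1 ij.2
  rw [Finset.HasAntidiagonal.mem_antidiagonal.1 hij,
    ← n.choose_symm_of_eq_add (Finset.HasAntidiagonal.mem_antidiagonal.1 hij).symm] at h
  have h' : (n.choose ij.1 : ℂ) * ij.1.factorial * ij.2.factorial = n.factorial := by
    exact_mod_cast h
  rw [← h']
  have h1 : (ij.1.factorial : ℂ) ≠ 0 := by exact_mod_cast Nat.factorial_ne_zero _
  have h2 : (ij.2.factorial : ℂ) ≠ 0 := by exact_mod_cast Nat.factorial_ne_zero _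
  have h3 : (n.choose ij.1 : ℂ) ≠ 0 := by
    intro h3; rw [h3] at h'; simp at h'; exact Nat.factorial_ne_zero n (by exact_mod_cast h'.symm)
  field_simp

variable [CompleteSpace A]

theorem hasSum_exp_apply (T : A →L[ℂ] A) (x : A) :
    HasSum (fun n : ℕ => ((n.factorial : ℂ)⁻¹) • (T ^ n) x) (exp T x) := by
  have h := exp_series_hasSum_exp' (𝕂 := ℂ) T
  have h2 := (ContinuousLinearMap.apply ℂ A x).hasSum h
  simpa [Function.comp_def] using h2

theorem exp_apply_mem [FiniteDimensional ℂ A] (W : Submodule ℂ A) (T : A →L[ℂ] A)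
    (hT : ∀ w ∈ W, T w ∈ W) {w : A} (hw : w ∈ W) : exp T w ∈ W := by
  have hc : IsClosed (W : Set A) := W.closed_of_finiteDimensional
  refine hc.mem_of_tendsto (hasSum_exp_apply T w) (Filter.Eventually.of_forall fun s => ?_)
  refine W.sum_mem fun n _ => W.smul_mem _ ?_
  clear * - hT hw
  induction n with
  | zero => simpa using hw
  | succ n ih => rw [pow_succ']; exact hT _ ih

theorem exp_mul_mem [FiniteDimensional ℂ A] (W : Submodule ℂ A) (a : A)
    (ha : ∀ w ∈ W, a * w ∈ W) {w : A} (hw : w ∈ W) : exp a * w ∈ W := by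
  have hc : IsClosed (W : Set A) := W.closed_of_finiteDimensional
  refine hc.mem_of_tendsto ((exp_series_hasSum_exp' (𝕂 := ℂ) a).mul_right w)
    (Filter.Eventually.of_forall fun s => ?_)
  refine W.sum_mem fun n _ => ?_
  rw [smul_mul_assoc]
  refine W.smul_mem _ ?_
  clear * - ha hw
  induction n with
  | zero => simpa using hw
  | succ n ih => rw [pow_succ', mul_assoc]; exact ha _ ih

/-- The exponential of a derivation is multiplicative: Cauchy product of the exponential series. -/
theorem exp_derivation_mul (T : A →L[ℂ] A) (hT : ∀ x y, T (x * y) = x * T y + y * T x)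
    (x y : A) : exp T (x * y) = exp T x * exp T y := by
  rw [← (hasSum_exp_apply T x).tsum_eq, ← (hasSum_exp_apply T y).tsum_eq,
    ← (hasSum_exp_apply T (x * y)).tsum_eq,
    tsum_mul_tsum_eq_tsum_sum_antidiagonal_of_summable_norm
      (summable_norm_exp_apply T x) (summable_norm_exp_apply T y)]
  exact tsum_congr fun n => leibniz_pow_div T hT n x y

/-- The exponential of a derivation is an algebra automorphism. -/
theorem exists_algEquiv_exp (T : A →L[ℂ] A) (hT : ∀ x y, T (x * y) = x * T y + y * T x) :
    ∃ φ : A ≃ₐ[ℂ] A, ∀ x, φ x = exp T x := by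
  have h1 : T 1 = 0 := by simpa using hT 1 1
  have hone : exp T 1 = (1 : A) := by
    rw [← (hasSum_exp_apply T 1).tsum_eq, tsum_eq_single 0]
    · simp
    · intro n hn
      obtain ⟨m, rfl⟩ := Nat.exists_eq_succ_of_ne_zero hn
      rw [Nat.succ_eq_add_one, pow_succ, mul_apply_eq_comp, h1, map_zero, smul_zero]
  let φ : A →ₐ[ℂ] A := AlgHom.ofLinearMap (exp T : A →L[ℂ] A).toLinearMap hone
    (exp_derivation_mul T hT)
  have hb : Function.Bijective φ := by
    let : NormedAlgebra ℚ (A →L[ℂ] A) := NormedAlgebra.restrictScalars ℚ ℂ _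
    have hu : exp (-T) * exp T = 1 := by
      rw [← exp_add_of_commute (Commute.neg_left (Commute.refl T))]; simp
    have hu' : exp T * exp (-T) = 1 := by
      rw [← exp_add_of_commute (Commute.neg_right (Commute.refl T))]; simp
    refine Function.bijective_iff_has_inverse.2 ⟨fun x => exp (-T) x, fun x => ?_, fun x => ?_⟩
    · exact congrArg (fun S : A →L[ℂ] A => S x) hu
    · exact congrArg (fun S : A →L[ℂ] A => S x) hu'
  exact ⟨AlgEquiv.ofBijective φ hb, fun x => rfl⟩

/-- The infinitesimal contact transformations preserving `W`: pairs `(a, T)` of an element and a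
(bounded) derivation of `A`, both mapping `W` into itself. Such a pair acts on `W` by
`w ↦ a w + T w`, which is the differential at the identity of the action of pairs
(unit, automorphism) by `w ↦ u φ(w)`. -/
def infContact (W : Submodule ℂ A) : Submodule ℂ (A × (A →L[ℂ] A)) where
  carrier := {p | (∀ x y, p.2 (x * y) = x * p.2 y + y * p.2 x) ∧
    (∀ w ∈ W, p.1 * w ∈ W) ∧ ∀ w ∈ W, p.2 w ∈ W}
  zero_mem' := by simp
  add_mem' := by
    rintro p q ⟨h1, h2, h3⟩ ⟨k1, k2, k3⟩
    refine ⟨fun x y => ?_, fun w hw => ?_, fun w hw => ?_⟩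
    · simp only [Prod.snd_add, add_apply, h1, k1]; ring
    · rw [Prod.fst_add, add_mul]; exact W.add_mem (h2 w hw) (k2 w hw)
    · exact W.add_mem (h3 w hw) (k3 w hw)
  smul_mem' := by
    rintro c p ⟨h1, h2, h3⟩
    refine ⟨fun x y => ?_, fun w hw => ?_, fun w hw => ?_⟩
    · simp only [Prod.smul_snd, smul_apply, h1, smul_add, mul_smul_comm]
    · rw [Prod.smul_fst, smul_mul_assoc]; exact W.smul_mem _ (h2 w hw)
    · exact W.smul_mem _ (h3 w hw)

/-- If the tangent space `{a w + T w}` to the orbit of `w` is all of `W`, then the orbit of `w`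
contains a neighbourhood of `w` in `W`: the map `c ↦ exp (a_c) · exp (T_c) w`, with `(a_c, T_c)`
depending linearly on `c`, is a submersion onto `W` at `c = 0`. -/
theorem orbit_nhds [FiniteDimensional ℂ A] (W : Submodule ℂ A) {w : A} (hw : w ∈ W)
    (hsurj : ∀ h ∈ W, ∃ p ∈ infContact W, p.1 * w + p.2 w = h) :
    ∀ᶠ v : W in 𝓝 ⟨w, hw⟩, ∃ (u : Aˣ) (φ : A ≃ₐ[ℂ] A), (v : A) = u * φ w := by
  have : CompleteSpace W := FiniteDimensional.complete ℂ W
  obtain ⟨π₁, hπ₁⟩ := LinearMap.exists_leftInverse_of_injective W.subtype (W.ker_subtype)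
  -- a linear retraction of `A` onto `W`, so that the orbit map takes its values in `W`
  let π : A →L[ℂ] W := LinearMap.toContinuousLinearMap π₁
  have hπ : ∀ x : W, π (x : A) = x := fun x => congrArg (fun f : W →ₗ[ℂ] W => f x) hπ₁
  let b := Module.finBasis ℂ W
  choose p hp hpw using fun j => hsurj (b j) (b j).2
  let i1 : (Fin (Module.finrank ℂ W) → ℂ) →L[ℂ] A :=
    LinearMap.toContinuousLinearMap (Fintype.linearCombination ℂ fun j => (p j).1)
  let i2 : (Fin (Module.finrank ℂ W) → ℂ) →L[ℂ] (A →L[ℂ] A) :=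
    LinearMap.toContinuousLinearMap (Fintype.linearCombination ℂ fun j => (p j).2)
  have hi : ∀ c, (i1 c, i2 c) ∈ infContact W := by
    intro c
    have : (i1 c, i2 c) = ∑ j, c j • p j := by
      ext1 <;> simp [i1, i2, Fintype.linearCombination_apply, Prod.fst_sum, Prod.snd_sum]
    rw [this]
    exact Submodule.sum_mem _ fun j _ => Submodule.smul_mem _ _ (hp j)
  have d1 : HasStrictFDerivAt (fun c => exp (i1 c)) i1 0 := by
    have h : HasStrictFDerivAt (exp : A → A) (1 : A →L[ℂ] A) (i1 0) := by
      rw [i1.map_zero]; exact hasStrictFDerivAt_exp_zero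
    exact h.comp 0 (i1.hasStrictFDerivAt (x := 0))
  have d2 : HasStrictFDerivAt (fun c => exp (i2 c)) i2 0 := by
    have h : HasStrictFDerivAt (exp : (A →L[ℂ] A) → (A →L[ℂ] A))
        (1 : (A →L[ℂ] A) →L[ℂ] (A →L[ℂ] A)) (i2 0) := by
      rw [i2.map_zero]; exact hasStrictFDerivAt_exp_zero
    exact h.comp 0 (i2.hasStrictFDerivAt (x := 0))
  have d3 : HasStrictFDerivAt (fun c => (exp (i2 c) : A →L[ℂ] A) w)
      ((ContinuousLinearMap.apply ℂ A w).comp i2) 0 :=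
    (ContinuousLinearMap.apply ℂ A w).hasStrictFDerivAt.comp 0 d2
  have d4 : HasStrictFDerivAt (fun c => π (exp (i1 c) * (exp (i2 c) : A →L[ℂ] A) w)) _ 0 :=
    π.hasStrictFDerivAt.comp 0 (d1.mul d3)
  have hmap := d4.map_nhds_eq_of_surj (by
    rw [LinearMap.range_eq_top]
    intro h
    refine ⟨b.equivFun h, ?_⟩
    have h1 : i1 (b.equivFun h) * w + i2 (b.equivFun h) w = h := by
      simp only [i1, i2, LinearMap.coe_toContinuousLinearMap', Fintype.linearCombination_apply,
        Finset.sum_mul, sum_apply, ← Finset.sum_add_distrib,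
        smul_apply, smul_mul_assoc, ← smul_add, hpw]
      have h2 := congrArg Subtype.val (b.sum_equivFun h)
      rwa [Submodule.coe_sum] at h2
    have h3 : exp (i1 0) • i2 (b.equivFun h) w +
        (exp (i2 0) : A →L[ℂ] A) w • i1 (b.equivFun h) = h := by
      rw [map_zero, map_zero, exp_zero, exp_zero, one_smul, one_apply_eq_self, smul_eq_mul,
        mul_comm, add_comm]
      exact h1
    exact (congrArg π h3).trans (hπ h))
  have h0 : π (exp (i1 0) * (exp (i2 0) : A →L[ℂ] A) w) = ⟨w, hw⟩ := by
    simpa using hπ ⟨w, hw⟩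
  rw [h0] at hmap
  rw [← hmap, Filter.eventually_map]
  refine Filter.Eventually.of_forall fun c => ?_
  obtain ⟨hp1, hp2, hp3⟩ := hi c
  obtain ⟨φ, hφ⟩ := exists_algEquiv_exp (i2 c) hp1
  let : NormedAlgebra ℚ A := NormedAlgebra.restrictScalars ℚ ℂ _
  obtain ⟨u, hu⟩ := isUnit_exp (i1 c)
  refine ⟨u, φ, ?_⟩
  have hmem : exp (i1 c) * (exp (i2 c) : A →L[ℂ] A) w ∈ W :=
    exp_mul_mem W (i1 c) hp2 (exp_apply_mem W (i2 c) hp3 hw)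
  rw [hu, hφ]
  exact congrArg Subtype.val (hπ ⟨_, hmem⟩)

/-- If the orbits are open at all points of the complex line through `f` and `g` outside a
countable set `S` missing `f` and `g`, then `f` and `g` lie in one orbit, because the complement
of a countable set in `ℂ` is connected. -/
theorem line_orbit [FiniteDimensional ℂ A] (W : Submodule ℂ A) {f g : A} (hf : f ∈ W) (hg : g ∈ W)
    (S : Set ℂ) (hS : S.Countable) (h0 : (0 : ℂ) ∉ S) (h1 : (1 : ℂ) ∉ S)
    (hsurj : ∀ t ∉ S, ∀ h ∈ W, ∃ p ∈ infContact W,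
      p.1 * (f + t • (g - f)) + p.2 (f + t • (g - f)) = h) :
    ∃ (u : Aˣ) (φ : A ≃ₐ[ℂ] A), g = u * φ f := by
  have hm : ∀ t : ℂ, f + t • (g - f) ∈ W := fun t =>
    W.add_mem hf (W.smul_mem _ (W.sub_mem hg hf))
  let γ : ℂ → W := fun t => ⟨f + t • (g - f), hm t⟩
  have hγ : Continuous γ := by
    refine Continuous.subtype_mk ?_ _
    fun_prop
  have hloc : ∀ t ∉ S, ∀ᶠ s in 𝓝 t, ∃ (u : Aˣ) (φ : A ≃ₐ[ℂ] A),
      f + s • (g - f) = u * φ (f + t • (g - f)) := fun t ht =>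
    hγ.continuousAt.eventually (orbit_nhds W (hm t) (hsurj t ht))
  have hconn : IsPreconnected Sᶜ :=
    (hS.isConnected_compl_of_one_lt_rank (by simp)).isPreconnected
  have key := hconn.induction₂ (fun t s => ∃ (u : Aˣ) (φ : A ≃ₐ[ℂ] A),
      f + s • (g - f) = u * φ (f + t • (g - f)))
    (fun t ht => (hloc t ht).filter_mono nhdsWithin_le_nhds)
    (by
      rintro x y z hx hy hz ⟨u, φ, h⟩ ⟨v, ψ, h'⟩
      refine ⟨v * Units.map (ψ : A →* A) u, φ.trans ψ, ?_⟩
      rw [h', h]; simp [mul_assoc])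
    (by
      rintro x y hx hy ⟨u, φ, h⟩
      refine ⟨Units.map (φ.symm : A →* A) u⁻¹, φ.symm, ?_⟩
      rw [h, map_mul, AlgEquiv.symm_apply_apply, ← mul_assoc]
      have : (Units.map (φ.symm : A →* A) u⁻¹ : A) * φ.symm u = 1 := by
        simp [← map_mul]
      rw [this, one_mul]) h0 h1
  simpa using key

end Analytic

/-- `line_orbit` for a finite-dimensional algebra without a chosen norm. The algebra is given the
operator norm of its regular representation. -/
theorem exists_unit_algEquiv {A : Type*} [CommRing A] [Algebra ℂ A] [FiniteDimensional ℂ A]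
    (W : Submodule ℂ A) {f g : A} (hf : f ∈ W) (hg : g ∈ W)
    (S : Set ℂ) (hS : S.Countable) (h0 : (0 : ℂ) ∉ S) (h1 : (1 : ℂ) ∉ S)
    (hsurj : ∀ t ∉ S, ∀ h ∈ W, ∃ (a : A) (D : Derivation ℂ A A),
      (∀ w ∈ W, a * w ∈ W) ∧ (∀ w ∈ W, D w ∈ W) ∧
      a * (f + t • (g - f)) + D (f + t • (g - f)) = h) :
    ∃ (u : Aˣ) (φ : A ≃ₐ[ℂ] A), g = u * φ f := by
  let e : A ≃ₗ[ℂ] (Fin (Module.finrank ℂ A) → ℂ) := (Module.finBasis ℂ A).equivFun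
  let ι : A →ₐ[ℂ] ((Fin (Module.finrank ℂ A) → ℂ) →L[ℂ] (Fin (Module.finrank ℂ A) → ℂ)) :=
    AlgHom.ofLinearMap
      ((LinearMap.toContinuousLinearMap.toLinearMap).comp
        (e.conj.toLinearMap.comp (Algebra.lmul ℂ A).toLinearMap))
      (by ext1 x; simp [LinearEquiv.conj_apply])
      (by intro x y; ext1 z; simp [LinearEquiv.conj_apply, mul_assoc])
  have hι : Function.Injective ι := by
    intro x y hxy
    have h := congrArg (fun T : (Fin (Module.finrank ℂ A) → ℂ) →L[ℂ] _ => e.symm (T (e 1))) hxy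
    simpa [ι, LinearEquiv.conj_apply] using h
  let : NormedCommRing A := NormedCommRing.induced A _ ι hι
  let : NormedAlgebra ℂ A := NormedAlgebra.induced ℂ A _ ι
  have : CompleteSpace A := FiniteDimensional.complete ℂ A
  refine line_orbit W hf hg S hS h0 h1 fun t ht h hh => ?_
  obtain ⟨a, D, ha, hD, hh'⟩ := hsurj t ht h hh
  refine ⟨(a, LinearMap.toContinuousLinearMap D.toLinearMap), ⟨fun x y => ?_, ha, hD⟩, hh'⟩
  exact D.leibniz x y

/-! ### The Tjurina ideal -/

section Tjurina
variable {n : ℕ}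

/-- The Tjurina ideal of a power series `f`: all `a f + δ f` with `a` a power series and `δ` a
derivation of `ℂ[[x₁,…,x_n]]`. This description does not refer to the coordinates. -/
def Tj (f : PS n) : Ideal (PS n) where
  carrier := {h | ∃ (a : PS n) (δ : Derivation ℂ (PS n) (PS n)), h = a * f + δ f}
  zero_mem' := ⟨0, 0, by simp⟩
  add_mem' := by
    rintro _ _ ⟨a, δ, rfl⟩ ⟨b, ε, rfl⟩
    exact ⟨a + b, δ + ε, by rw [Derivation.add_apply]; ring⟩
  smul_mem' := by
    rintro c _ ⟨a, δ, rfl⟩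
    exact ⟨c * a, c • δ, by rw [Derivation.smul_apply, smul_eq_mul, smul_eq_mul]; ring⟩

theorem mem_Tj {f h : PS n} :
    h ∈ Tj f ↔ ∃ (a : PS n) (δ : Derivation ℂ (PS n) (PS n)), h = a * f + δ f := Iff.rfl

theorem self_mem_Tj (f : PS n) : f ∈ Tj f := ⟨1, 0, by simp⟩

theorem derivation_mem_Tj (f : PS n) (δ : Derivation ℂ (PS n) (PS n)) : δ f ∈ Tj f :=
  ⟨0, δ, by simp⟩

theorem Tj_le {f : PS n} {I : Ideal (PS n)} (h0 : f ∈ I)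
    (h : ∀ δ : Derivation ℂ (PS n) (PS n), δ f ∈ I) : Tj f ≤ I := by
  rintro _ ⟨a, δ, rfl⟩
  exact add_mem (I.mul_mem_left _ h0) (h δ)

/-- The coordinate-free ideal `Tj` is the ideal generated by `f` and its partial derivatives. -/
theorem tjurinaIdeal_eq (f : MvPolynomial (Fin n) ℂ) : tjurinaIdeal f = Tj (f : PS n) := by
  apply le_antisymm
  · rw [tjurinaIdeal, Ideal.span_le]
    rintro _ (rfl | ⟨i, rfl⟩)
    · exact self_mem_Tj _
    · change ((MvPolynomial.pderiv i f : MvPolynomial (Fin n) ℂ) : PS n) ∈ Tj (f : PS n)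
      rw [← MvPowerSeries.pderiv_coe]
      exact derivation_mem_Tj _ _
  · refine Tj_le (Ideal.subset_span (Set.mem_insert _ _)) fun δ => ?_
    rw [derivation_eq_sum]
    refine Ideal.sum_mem _ fun i _ => Ideal.mul_mem_left _ _ (Ideal.subset_span ?_)
    exact Set.mem_insert_of_mem _ ⟨i, (MvPowerSeries.pderiv_coe ..).symm⟩

theorem Tj_mul_le (u f : PS n) : Tj (u * f) ≤ Tj f := by
  refine Tj_le (Ideal.mul_mem_left _ _ (self_mem_Tj f)) fun δ => ?_
  rw [δ.leibniz, smul_eq_mul, smul_eq_mul]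
  exact add_mem (Ideal.mul_mem_left _ _ (derivation_mem_Tj f δ))
    (Ideal.mul_mem_right _ _ (self_mem_Tj f))

theorem Tj_unit_mul (u : (PS n)ˣ) (f : PS n) : Tj ((u : PS n) * f) = Tj f := by
  refine le_antisymm (Tj_mul_le _ _) ?_
  conv_lhs => rw [← u.inv_mul_cancel_left f]
  exact Tj_mul_le _ _

/-- Transport of a derivation along an automorphism. -/
def conjDer (φ : PS n ≃ₐ[ℂ] PS n) (δ : Derivation ℂ (PS n) (PS n)) :
    Derivation ℂ (PS n) (PS n) :=
  Derivation.mk' (φ.toLinearMap ∘ₗ δ.toLinearMap ∘ₗ φ.symm.toLinearMap) fun a b => by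
    simp [δ.leibniz]

theorem conjDer_apply (φ : PS n ≃ₐ[ℂ] PS n) (δ : Derivation ℂ (PS n) (PS n)) (p : PS n) :
    conjDer φ δ (φ p) = φ (δ p) := by
  change φ (δ (φ.symm (φ p))) = _
  rw [φ.symm_apply_apply]

theorem map_mem_Tj (φ : PS n ≃ₐ[ℂ] PS n) {f p : PS n} (h : p ∈ Tj f) : φ p ∈ Tj (φ f) := by
  obtain ⟨a, δ, rfl⟩ := h
  exact ⟨φ a, conjDer φ δ, by rw [conjDer_apply, map_add, map_mul]⟩

theorem map_mem_Tj_iff (φ : PS n ≃ₐ[ℂ] PS n) {f p : PS n} : φ p ∈ Tj (φ f) ↔ p ∈ Tj f := by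
  refine ⟨fun h => ?_, map_mem_Tj φ⟩
  simpa using map_mem_Tj φ.symm h

theorem Tj_map (φ : PS n ≃ₐ[ℂ] PS n) (f : PS n) : Tj (φ f) = (Tj f).map (φ : PS n →+* PS n) := by
  apply le_antisymm
  · intro p hp
    have h := map_mem_Tj φ.symm hp
    rw [φ.symm_apply_apply] at h
    have := Ideal.mem_map_of_mem (φ : PS n →+* PS n) h
    simpa using this
  · rw [Ideal.map_le_iff_le_comap]
    intro p hp
    exact map_mem_Tj φ hp

end Tjurina

/-! ### Finite determinacy -/

section Determinacy
variable {n : ℕ}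

theorem ContactEquiv.symm' {f g : PS n} (h : ContactEquiv f g) : ContactEquiv g f := by
  obtain ⟨φ, u, rfl⟩ := h
  refine ⟨φ.symm, Units.map (φ.symm : PS n →* PS n) u⁻¹, ?_⟩
  rw [map_mul, φ.symm_apply_apply, Units.coe_map, ← mul_assoc]
  change g = φ.symm _ * φ.symm _ * g
  rw [← map_mul, Units.inv_mul, map_one, one_mul]

theorem ContactEquiv.trans' {f g h : PS n} (h₁ : ContactEquiv f g) (h₂ : ContactEquiv g h) :
    ContactEquiv f h := by
  obtain ⟨φ, u, rfl⟩ := h₁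
  obtain ⟨ψ, v, rfl⟩ := h₂
  refine ⟨ψ.trans φ, u * Units.map (φ : PS n →* PS n) v, ?_⟩
  rw [map_mul, Units.val_mul, Units.coe_map, mul_assoc]
  rfl

theorem X_add_mem {b : PS n} {s : ℕ} (hs : s ≠ 0) (hb : b ∈ maxI n ^ s) (i : Fin n) :
    MvPowerSeries.X i + b ∈ maxI n :=
  add_mem (X_mem_maxI i) (Ideal.pow_le_self hs hb)

/-- Endomorphisms congruent on the coordinates modulo a power of the maximal ideal are congruent
everywhere. -/
theorem algHom_sub_mem_pow {φ ψ : PS n →ₐ[ℂ] PS n} (hφ : ∀ i, φ (MvPowerSeries.X i) ∈ maxI n)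
    (hψ : ∀ i, ψ (MvPowerSeries.X i) ∈ maxI n) {s : ℕ}
    (h : ∀ i, φ (MvPowerSeries.X i) - ψ (MvPowerSeries.X i) ∈ maxI n ^ s) (p : PS n) :
    φ p - ψ p ∈ maxI n ^ s := by
  rw [← Ideal.Quotient.mk_eq_mk_iff_sub_mem]
  refine algHom_eq_of_X ((Ideal.Quotient.mkₐ ℂ (maxI n ^ s)).comp φ)
    ((Ideal.Quotient.mkₐ ℂ (maxI n ^ s)).comp ψ) s
    (fun q hq => Ideal.Quotient.eq_zero_iff_mem.2 (algHom_pow_mem hφ hq))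
    (fun q hq => Ideal.Quotient.eq_zero_iff_mem.2 (algHom_pow_mem hψ hq)) (fun i => ?_) p
  exact Ideal.Quotient.mk_eq_mk_iff_sub_mem _ _ |>.2 (h i)

/-- First order Taylor expansion of a substitution. -/
theorem taylor {φ φ' : PS n →ₐ[ℂ] PS n} (hφ : ∀ i, φ (MvPowerSeries.X i) ∈ maxI n)
    {s : ℕ} (hs : s ≠ 0) {β : Fin n → PS n} (hβ : ∀ i, β i ∈ maxI n ^ s)
    (hφ' : ∀ i, φ' (MvPowerSeries.X i) = φ (MvPowerSeries.X i) + β i) (p : PS n) :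
    φ' p - φ p - ∑ i, β i * φ (MvPowerSeries.pderiv ℂ i p) ∈ maxI n ^ (s + s) := by
  classical
  have hφ'X : ∀ i, φ' (MvPowerSeries.X i) ∈ maxI n := fun i => by
    rw [hφ']; exact add_mem (hφ i) (Ideal.pow_le_self hs (hβ i))
  have hD : ∀ q, ∑ i, β i * φ (MvPowerSeries.pderiv ℂ i q) ∈ maxI n ^ s := fun q =>
    Ideal.sum_mem _ fun i _ => Ideal.mul_mem_right _ _ (hβ i)
  have hpoly : ∀ P : MvPolynomial (Fin n) ℂ, φ' (P : PS n) - φ (P : PS n) -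
      ∑ i, β i * φ (MvPowerSeries.pderiv ℂ i (P : PS n)) ∈ maxI n ^ (s + s) := by
    intro P
    induction P using MvPolynomial.induction_on with
    | C a =>
      have h1 : ((MvPolynomial.C a : MvPolynomial (Fin n) ℂ) : PS n) = algebraMap ℂ (PS n) a :=
        MvPolynomial.coe_C a
      rw [h1, φ.commutes, φ'.commutes]
      simp
    | add p q hp hq =>
      rw [MvPolynomial.coe_add]
      convert add_mem hp hq using 1
      simp only [map_add, mul_add, Finset.sum_add_distrib]
      ring
    | mul_X p j hp =>
      rw [MvPolynomial.coe_mul, MvPolynomial.coe_X]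
      have h1 : ∑ i, β i * φ (MvPowerSeries.pderiv ℂ i ((p : PS n) * MvPowerSeries.X j)) =
          φ p * β j +
            φ (MvPowerSeries.X j) * ∑ i, β i * φ (MvPowerSeries.pderiv ℂ i (p : PS n)) := by
        simp only [Derivation.leibniz, smul_eq_mul, map_add, map_mul, mul_add,
          Finset.sum_add_distrib, MvPowerSeries.pderiv_X, Pi.single_apply, Finset.mul_sum]
        congr 1
        · rw [Finset.sum_eq_single j]
          · simp [mul_comm]
          · intro i _ hi
            simp [Ne.symm hi]
          · simp
        · exact Finset.sum_congr rfl fun i _ => by ring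
      rw [h1, map_mul, map_mul, hφ']
      have h2 := Ideal.mul_mem_right (φ (MvPowerSeries.X j) + β j) _ hp
      have h3 := Ideal.mul_mem_mul (hD (p : PS n)) (hβ j)
      rw [← pow_add] at h3
      convert add_mem h2 h3 using 1
      ring
  have hq := sub_truncTotal_mem p (s + s + 1)
  set P := MvPowerSeries.truncTotal (s + s + 1) p
  have h1 := Ideal.pow_le_pow_right (Nat.le_succ _) hq
  have h2 := sub_mem (sub_mem (algHom_pow_mem hφ'X h1) (algHom_pow_mem hφ h1))
    (Ideal.sum_mem (t := Finset.univ) _ fun i _ =>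
      Ideal.mul_mem_left _ (β i)
        (algHom_pow_mem hφ (derivation_pow_mem (MvPowerSeries.pderiv ℂ i) hq)))
  convert add_mem h2 (hpoly P) using 1
  simp only [map_sub, mul_sub, Finset.sum_sub_distrib]
  ring

/-- Solving the linearized equation: a series of order `s + k` is an infinitesimal deformation of `F`
with coefficients of order `s`. -/
theorem mem_pow_mul_Tj {F e : PS n} {k s : ℕ} (hk : maxI n ^ k ≤ Tj F)
    (he : e ∈ maxI n ^ (s + k)) :
    ∃ (α : PS n) (β : Fin n → PS n), α ∈ maxI n ^ s ∧ (∀ i, β i ∈ maxI n ^ s) ∧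
      e = α * F + ∑ i, β i * MvPowerSeries.pderiv ℂ i F := by
  rw [pow_add] at he
  refine Submodule.mul_induction_on he (fun a ha b hb => ?_) ?_
  · obtain ⟨c, δ, rfl⟩ := hk hb
    refine ⟨a * c, fun i => a * δ (MvPowerSeries.X i), Ideal.mul_mem_right _ _ ha,
      fun i => Ideal.mul_mem_right _ _ ha, ?_⟩
    rw [derivation_eq_sum δ F, mul_add, Finset.mul_sum]
    simp only [mul_assoc]
  · rintro _ _ ⟨α, β, hα, hβ, rfl⟩ ⟨α', β', hα', hβ', rfl⟩
    refine ⟨α + α', fun i => β i + β' i, add_mem hα hα', fun i => add_mem (hβ i) (hβ' i), ?_⟩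
    simp only [add_mul, Finset.sum_add_distrib]
    ring

/-- One Newton step, always solving the linearization at the identity: the residual
`G - (1 + a) F(x + b)` gains at least one order. -/
theorem newton_step {F G : PS n} {k j : ℕ} (hk : maxI n ^ k ≤ Tj F) {a : PS n} {b : Fin n → PS n}
    (ha : a ∈ maxI n ^ (k + 2)) (hb : ∀ i, b i ∈ maxI n ^ (k + 2))
    (h : ∀ φ : PS n →ₐ[ℂ] PS n, (∀ i, φ (MvPowerSeries.X i) = MvPowerSeries.X i + b i) →
      G - (1 + a) * φ F ∈ maxI n ^ (k + 2 + j + k)) :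
    ∃ (α : PS n) (β : Fin n → PS n), α ∈ maxI n ^ (k + 2 + j) ∧
      (∀ i, β i ∈ maxI n ^ (k + 2 + j)) ∧
      ∀ φ : PS n →ₐ[ℂ] PS n, (∀ i, φ (MvPowerSeries.X i) = MvPowerSeries.X i + (b i + β i)) →
        G - (1 + (a + α)) * φ F ∈ maxI n ^ (k + 2 + (j + 1) + k) := by
  obtain ⟨φ, hφ⟩ := exists_subst (fun i => MvPowerSeries.X i + b i)
    (fun i => X_add_mem (by omega) (hb i) i)
  obtain ⟨α, β, hα, hβ, he⟩ := mem_pow_mul_Tj hk (h φ hφ)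
  refine ⟨α, β, hα, hβ, fun φ' hφ' => ?_⟩
  have hφX : ∀ i, φ (MvPowerSeries.X i) ∈ maxI n := fun i => by
    rw [hφ]; exact X_add_mem (by omega) (hb i) i
  have hβ' : ∀ i, β i ∈ maxI n ^ (k + 2) := fun i =>
    Ideal.pow_le_pow_right (by omega) (hβ i)
  have hφX' : ∀ i, φ' (MvPowerSeries.X i) ∈ maxI n := fun i => by
    rw [hφ']; exact X_add_mem (by omega) (add_mem (hb i) (hβ' i)) i
  have hnear : ∀ q, φ q - q ∈ maxI n ^ (k + 2) :=
    algHom_sub_mem_pow (ψ := AlgHom.id ℂ _) hφX X_mem_maxI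
      (fun i => by rw [hφ, AlgHom.id_apply, add_sub_cancel_left]; exact hb i)
  have hnear' : ∀ q, φ' q - q ∈ maxI n ^ (k + 2) :=
    algHom_sub_mem_pow (ψ := AlgHom.id ℂ _) hφX' X_mem_maxI
      (fun i => by rw [hφ', AlgHom.id_apply, add_sub_cancel_left]; exact add_mem (hb i) (hβ' i))
  have hdiff : φ' F - φ F ∈ maxI n ^ (k + 2 + j) :=
    algHom_sub_mem_pow hφX' hφX (fun i => by rw [hφ', hφ]; convert hβ i using 1; ring) F
  have ht := taylor hφX (by omega) hβ (fun i => by rw [hφ', hφ, add_assoc]) F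
  have hle : maxI n ^ (k + 2 + j + (k + 2)) ≤ maxI n ^ (k + 2 + (j + 1) + k) :=
    Ideal.pow_le_pow_right (by omega)
  have hle' : maxI n ^ (k + 2 + j + (k + 2 + j)) ≤ maxI n ^ (k + 2 + (j + 1) + k) :=
    Ideal.pow_le_pow_right (by omega)
  have e1 : α * (φ' F - F) ∈ maxI n ^ (k + 2 + (j + 1) + k) :=
    hle (by rw [pow_add]; exact Ideal.mul_mem_mul hα (hnear' F))
  have e2 : (φ' F - φ F) * a ∈ maxI n ^ (k + 2 + (j + 1) + k) :=
    hle (by rw [pow_add]; exact Ideal.mul_mem_mul hdiff ha)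
  have e3 : ∑ i, β i * (φ (MvPowerSeries.pderiv ℂ i F) - MvPowerSeries.pderiv ℂ i F) ∈
      maxI n ^ (k + 2 + (j + 1) + k) :=
    Ideal.sum_mem _ fun i _ => hle (by rw [pow_add]; exact Ideal.mul_mem_mul (hβ i) (hnear _))
  have e4 := neg_mem (add_mem (add_mem (add_mem e1 e2) e3) (hle' ht))
  convert e4 using 1
  simp only [mul_sub, Finset.sum_sub_distrib]
  linear_combination he

/-- Finite contact determinacy: if the Tjurina ideal of `F` contains the `k`-th power of the
maximal ideal, then `F` is determined up to contact equivalence by its jet of order `2k+1`. -/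
theorem determinacy {F G : PS n} {k : ℕ} (hk : maxI n ^ k ≤ Tj F)
    (h : G - F ∈ maxI n ^ (k + 2 + k)) : ContactEquiv G F := by
  let Q : ℕ → PS n × (Fin n → PS n) → Prop := fun j x =>
    x.1 ∈ maxI n ^ (k + 2) ∧ (∀ i, x.2 i ∈ maxI n ^ (k + 2)) ∧
    ∀ φ : PS n →ₐ[ℂ] PS n, (∀ i, φ (MvPowerSeries.X i) = MvPowerSeries.X i + x.2 i) →
      G - (1 + x.1) * φ F ∈ maxI n ^ (k + 2 + j + k)
  have step : ∀ j (x : {x // Q j x}), ∃ y : {y // Q (j + 1) y},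
      y.1.1 - x.1.1 ∈ maxI n ^ j ∧ ∀ i, y.1.2 i - x.1.2 i ∈ maxI n ^ j := by
    rintro j ⟨⟨a, b⟩, ha, hb, hx⟩
    obtain ⟨α, β, hα, hβ, hy⟩ := newton_step hk ha hb hx
    have hle : maxI n ^ (k + 2 + j) ≤ maxI n ^ (k + 2) := Ideal.pow_le_pow_right (by omega)
    have hle' : maxI n ^ (k + 2 + j) ≤ maxI n ^ j := Ideal.pow_le_pow_right (by omega)
    refine ⟨⟨(a + α, fun i => b i + β i), add_mem ha (hle hα),
      fun i => add_mem (hb i) (hle (hβ i)), hy⟩, ?_, fun i => ?_⟩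
    · simpa using hle' hα
    · simpa using hle' (hβ i)
  choose next hn1 hn2 using step
  have h0 : Q 0 (0, fun _ => 0) := by
    refine ⟨zero_mem _, fun _ => zero_mem _, fun φ hφ => ?_⟩
    have hφX : ∀ i, φ (MvPowerSeries.X i) = MvPowerSeries.X i := fun i => by
      rw [hφ]; exact add_zero _
    have : φ F - F = 0 := eq_zero_of_forall_mem_pow fun s =>
      algHom_sub_mem_pow (ψ := AlgHom.id ℂ _) (fun i => by rw [hφX]; exact X_mem_maxI i) X_mem_maxI
        (fun i => by rw [hφX, AlgHom.id_apply, sub_self]; exact zero_mem _) F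
    rw [sub_eq_zero.1 this]
    simpa using h
  let x : ∀ j, {x // Q j x} := fun j => Nat.rec ⟨_, h0⟩ next j
  obtain ⟨a, ha⟩ := exists_limit (fun j => (x j).1.1) (fun j => hn1 j (x j))
  choose b hb using fun i => exists_limit (fun j => (x j).1.2 i) (fun j => hn2 j (x j) i)
  have ha1 : a ∈ maxI n := by
    have h1 := ha 1
    rw [pow_one] at h1
    have := add_mem h1 (Ideal.pow_le_self (by omega) (x 1).2.1)
    rwa [sub_add_cancel] at this
  have hb2 : ∀ i, b i ∈ maxI n ^ 2 := fun i => by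
    have := add_mem (hb i 2) (Ideal.pow_le_pow_right (by omega) ((x 2).2.2.1 i))
    rwa [sub_add_cancel] at this
  have hbX : ∀ i, MvPowerSeries.X i + b i ∈ maxI n := fun i => X_add_mem two_ne_zero (hb2 i) i
  obtain ⟨φ, hφ⟩ := exists_subst _ hbX
  have hφX : ∀ i, φ (MvPowerSeries.X i) ∈ maxI n := fun i => by rw [hφ]; exact hbX i
  have hbij : Function.Bijective φ := bijective_of_sub_mem fun i => by
    rw [hφ, add_sub_cancel_left]; exact hb2 i
  have hu : IsUnit (1 + a) := by
    rw [isUnit_iff_notMem]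
    intro hc
    have := sub_mem hc ha1
    rw [add_sub_cancel_right, mem_maxI, map_one] at this
    exact one_ne_zero this
  refine ⟨AlgEquiv.ofBijective φ hbij, hu.unit, ?_⟩
  rw [IsUnit.unit_spec, ← sub_eq_zero]
  refine eq_zero_of_forall_mem_pow fun j => ?_
  have hjX : ∀ i, MvPowerSeries.X i + (x j).1.2 i ∈ maxI n := fun i =>
    X_add_mem (by omega) ((x j).2.2.1 i) i
  obtain ⟨ψ, hψ⟩ := exists_subst _ hjX
  have e1 := Ideal.pow_le_pow_right (by omega : j ≤ k + 2 + j + k) ((x j).2.2.2 ψ hψ)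
  have e2 := algHom_sub_mem_pow hφX (fun i => by rw [hψ]; exact hjX i) (s := j)
    (fun i => by rw [hφ, hψ, add_sub_add_left_eq_sub]; exact hb i j) F
  have e3 := sub_mem (sub_mem e1 (Ideal.mul_mem_left _ (1 + a) e2))
    (Ideal.mul_mem_right (ψ F) _ (ha j))
  convert e3 using 1
  change G - (1 + a) * φ F = _
  ring

end Determinacy

/-! ### The pencil joining two series with the same Tjurina ideal -/

section Family
variable {n : ℕ}

/-- The series whose Tjurina ideal is contained in `I`: those `h ∈ I` all of whose derivatives
lie in `I`. -/
def prim (I : Ideal (PS n)) : Ideal (PS n) where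
  carrier := {h | h ∈ I ∧ ∀ δ : Derivation ℂ (PS n) (PS n), δ h ∈ I}
  zero_mem' := ⟨I.zero_mem, fun δ => by rw [map_zero]; exact I.zero_mem⟩
  add_mem' := fun ha hb => ⟨I.add_mem ha.1 hb.1, fun δ => by
    rw [map_add]; exact I.add_mem (ha.2 δ) (hb.2 δ)⟩
  smul_mem' := fun c x hx => ⟨I.mul_mem_left c hx.1, fun δ => by
    rw [smul_eq_mul, δ.leibniz]
    exact I.add_mem (I.mul_mem_left _ (hx.2 δ)) (I.mul_mem_right _ hx.1)⟩

theorem mem_prim {I : Ideal (PS n)} {h : PS n} :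
    h ∈ prim I ↔ h ∈ I ∧ ∀ δ : Derivation ℂ (PS n) (PS n), δ h ∈ I := Iff.rfl

theorem mem_prim_Tj (f : PS n) : f ∈ prim (Tj f) := ⟨self_mem_Tj f, derivation_mem_Tj f⟩

theorem Tj_le_of_mem_prim {I : Ideal (PS n)} {f : PS n} (h : f ∈ prim I) : Tj f ≤ I :=
  Tj_le h.1 h.2

/-- In the pencil `F + t h`, with `h ∈ prim (Tj F)`, the Tjurina ideal is constant outside finitely
many values of `t`: the generators of `Tj (F + t h)` are obtained from those of `Tj F` by a matrix
`1 + t C`, invertible unless `t` is a root of a polynomial with value `1` at `0`. -/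
theorem finite_Tj_ne {F h : PS n} (hh : h ∈ prim (Tj F)) :
    {t : ℂ | Tj (F + t • h) ≠ Tj F}.Finite := by
  classical
  let gen : PS n → Option (Fin n) → PS n := fun q o => o.elim q fun i => MvPowerSeries.pderiv ℂ i q
  have hex : ∀ p ∈ Tj F, ∃ c : Option (Fin n) → PS n, p = ∑ o, c o * gen F o := by
    rintro _ ⟨a, δ, rfl⟩
    refine ⟨fun o => o.elim a fun i => δ (MvPowerSeries.X i), ?_⟩
    rw [Fintype.sum_option, derivation_eq_sum δ F]
    rfl
  have hgen : ∀ o, gen h o ∈ Tj F := by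
    rintro (_ | i)
    · exact hh.1
    · exact hh.2 _
  choose C hC using fun o => hex _ (hgen o)
  let C₀ : Matrix (Option (Fin n)) (Option (Fin n)) ℂ :=
    Matrix.of fun o o' => - MvPowerSeries.constantCoeff (C o o')
  have hne : C₀.charpolyRev ≠ 0 := fun h0 => by
    have := Matrix.eval_charpolyRev (M := C₀)
    rw [h0, Polynomial.eval_zero] at this
    exact zero_ne_one this
  refine (C₀.charpolyRev.rootSet_finite ℂ).subset fun t ht => ?_
  rw [Polynomial.mem_rootSet]
  refine ⟨hne, ?_⟩
  by_contra hroot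
  refine ht (le_antisymm (Tj_le_of_mem_prim (add_mem (mem_prim_Tj F)
    (Submodule.smul_of_tower_mem _ t hh))) ?_)
  let M : Matrix (Option (Fin n)) (Option (Fin n)) (PS n) := 1 + t • Matrix.of C
  have hdet : MvPowerSeries.constantCoeff M.det = Polynomial.aeval t C₀.charpolyRev := by
    rw [RingHom.map_det, Matrix.charpolyRev, Polynomial.coe_aeval_eq_eval,
      ← Polynomial.coe_evalRingHom, RingHom.map_det]
    congr 1
    ext o o'
    simp [M, C₀, Matrix.one_apply, apply_ite]
    ring
  have hM : IsUnit M.det := by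
    rw [isUnit_iff_notMem, mem_maxI, hdet]; exact hroot
  have hMv : M.mulVec (gen F) = gen (F + t • h) := by
    ext1 o
    have h1 : gen (F + t • h) o = gen F o + t • gen h o := by
      rcases o with _ | i
      · rfl
      · simp [gen]
    rw [h1, hC o, Matrix.add_mulVec, Matrix.one_mulVec, Matrix.smul_mulVec]
    rfl
  have hinv : M⁻¹.mulVec (gen (F + t • h)) = gen F := by
    rw [← hMv, Matrix.mulVec_mulVec, Matrix.nonsing_inv_mul _ hM, Matrix.one_mulVec]
  have hgt : ∀ o, gen (F + t • h) o ∈ Tj (F + t • h) := by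
    rintro (_ | i)
    · exact self_mem_Tj _
    · exact derivation_mem_Tj _ _
  have hgF : ∀ o, gen F o ∈ Tj (F + t • h) := fun o => by
    rw [← hinv]
    change ∑ o', M⁻¹ o o' * gen (F + t • h) o' ∈ _
    exact Ideal.sum_mem _ fun o' _ => Ideal.mul_mem_left _ _ (hgt o')
  intro p hp
  obtain ⟨c, rfl⟩ := hex p hp
  exact Ideal.sum_mem _ fun o _ => Ideal.mul_mem_left _ _ (hgF o)

/-- A derivation sending `f` into `prim (Tj f)` preserves the Tjurina ideal of `f`. -/
theorem derivation_preserves_Tj {f : PS n} {ξ : Derivation ℂ (PS n) (PS n)}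
    (hξ : ξ f ∈ prim (Tj f)) {p : PS n} (hp : p ∈ Tj f) : ξ p ∈ Tj f := by
  obtain ⟨a, δ, rfl⟩ := hp
  have h1 : ξ (δ f) = δ (ξ f) + ⁅ξ, δ⁆ f := by rw [Derivation.commutator_apply]; ring
  rw [map_add, ξ.leibniz, h1]
  exact add_mem (add_mem (Ideal.mul_mem_left _ _ hξ.1) (Ideal.mul_mem_right _ _ (self_mem_Tj f)))
    (add_mem (hξ.2 δ) (derivation_mem_Tj f _))

theorem derivation_preserves_prim {I : Ideal (PS n)} {ξ : Derivation ℂ (PS n) (PS n)}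
    (hξ : ∀ p ∈ I, ξ p ∈ I) {h : PS n} (hh : h ∈ prim I) : ξ h ∈ prim I := by
  refine ⟨hξ _ hh.1, fun δ => ?_⟩
  have h1 : δ (ξ h) = ξ (δ h) + ⁅δ, ξ⁆ h := by rw [Derivation.commutator_apply]; ring
  rw [h1]
  exact add_mem (hξ _ (hh.2 δ)) (hh.2 _)

/-- A derivation preserving a proper ideal `I` of finite colength preserves the maximal ideal.
Otherwise `ξ x` would be a unit for some non-unit `x`, and applying `ξ` repeatedly to a power of
`x` lying in `I` would give `1 ∈ I`. -/
theorem derivation_preserves_maxI {I : Ideal (PS n)} (hI : I ≠ ⊤) {k : ℕ}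
    (hk : maxI n ^ k ≤ I) {ξ : Derivation ℂ (PS n) (PS n)} (hξ : ∀ p ∈ I, ξ p ∈ I)
    {x : PS n} (hx : x ∈ maxI n) : ξ x ∈ maxI n := by
  by_contra hu
  rw [← isUnit_iff_notMem] at hu
  have key : ∀ j, x ^ j ∉ I := by
    intro j
    induction j with
    | zero => rw [pow_zero]; exact fun h => hI ((Ideal.eq_top_iff_one I).2 h)
    | succ j ih =>
      intro h
      have h1 := hξ _ h
      rw [ξ.leibniz_pow, Nat.add_sub_cancel, smul_eq_mul, ← Nat.cast_smul_eq_nsmul ℂ] at h1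
      have h2 := Submodule.smul_of_tower_mem I ((j + 1 : ℕ) : ℂ)⁻¹ h1
      rw [smul_smul, inv_mul_cancel₀ (Nat.cast_ne_zero.2 (Nat.succ_ne_zero j)), one_smul] at h2
      exact ih ((Ideal.mul_unit_mem_iff_mem I hu).1 h2)
  exact key k (hk (Ideal.pow_mem_pow hx k))

theorem derivation_preserves_pow {I : Ideal (PS n)} {ξ : Derivation ℂ (PS n) (PS n)}
    (hξ : ∀ p ∈ I, ξ p ∈ I) (k : ℕ) : ∀ p ∈ I ^ k, ξ p ∈ I ^ k := by
  induction k with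
  | zero => intro p _; simp
  | succ k ih =>
    intro p hp
    rw [pow_succ] at hp ⊢
    refine Submodule.mul_induction_on hp (fun a ha b hb => ?_) (fun a b ha hb => ?_)
    · rw [ξ.leibniz, smul_eq_mul, smul_eq_mul, mul_comm b]
      exact add_mem (Ideal.mul_mem_mul ha (hξ b hb)) (Ideal.mul_mem_mul (ih a ha) hb)
    · rw [map_add]; exact add_mem ha hb

theorem exists_quotient_derivation {J : Ideal (PS n)} {ξ : Derivation ℂ (PS n) (PS n)}
    (hξ : ∀ p ∈ J, ξ p ∈ J) : ∃ D : Derivation ℂ (PS n ⧸ J) (PS n ⧸ J),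
      ∀ p, D (Ideal.Quotient.mk J p) = Ideal.Quotient.mk J (ξ p) := by
  let L : (PS n ⧸ J) →ₗ[ℂ] (PS n ⧸ J) :=
    Submodule.mapQ (J.restrictScalars ℂ) (J.restrictScalars ℂ) ξ.toLinearMap hξ
  have hL : ∀ p, L (Ideal.Quotient.mk J p) = Ideal.Quotient.mk J (ξ p) := fun p => rfl
  refine ⟨Derivation.mk' L fun a b => ?_, hL⟩
  obtain ⟨a, rfl⟩ := Ideal.Quotient.mk_surjective a
  obtain ⟨b, rfl⟩ := Ideal.Quotient.mk_surjective b
  rw [← map_mul, hL, hL, hL, ξ.leibniz, map_add]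
  rfl

/-- Two series with the same proper Tjurina ideal `I` of finite colength are contact equivalent.
For all but finitely many `t`, the series `f + t (g - f)` also has Tjurina ideal `I`, so every
element of `prim I` is tangent to its contact orbit. Modulo a high power of the maximal ideal this
puts `f` and `g` in one orbit, and finite determinacy removes the truncation. -/
theorem contactEquiv_of_Tj_eq {f g : PS n} (hfg : Tj f = Tj g) (htop : Tj f ≠ ⊤) {k : ℕ}
    (hk : maxI n ^ k ≤ Tj f) : ContactEquiv g f := by
  set J := maxI n ^ (k + 2 + k) with hJdef
  have hJmax : J ≤ maxI n := Ideal.pow_le_self (by omega)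
  have hmax : maxI n ≠ ⊤ := RingHom.ker_ne_top _
  have hJ : J ≠ ⊤ := fun h => hmax (top_le_iff.1 (h ▸ hJmax))
  let π : PS n →ₗ[ℂ] PS n ⧸ J := (Ideal.Quotient.mkₐ ℂ J).toLinearMap
  have hπ : ∀ p, π p = Ideal.Quotient.mk J p := fun p => rfl
  let W : Submodule ℂ (PS n ⧸ J) := ((prim (Tj f)).restrictScalars ℂ).map π
  have hf : f ∈ prim (Tj f) := mem_prim_Tj f
  have hg : g ∈ prim (Tj f) := hfg ▸ mem_prim_Tj g
  have hW : ∀ {p}, p ∈ prim (Tj f) → π p ∈ W := fun hp => ⟨_, hp, rfl⟩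
  obtain ⟨u, φ, hu⟩ := exists_unit_algEquiv W (hW hf) (hW hg)
    {t : ℂ | Tj (f + t • (g - f)) ≠ Tj f} (finite_Tj_ne (sub_mem hg hf)).countable
    (by simp) (by simp [hfg]) (by
      rintro t ht _ ⟨h, hh, rfl⟩
      have ht' : Tj (f + t • (g - f)) = Tj f := not_not.1 ht
      have hh' : h ∈ prim (Tj f) := hh
      set ft := f + t • (g - f) with hft
      obtain ⟨a, ξ, rfl⟩ : h ∈ Tj ft := ht'.symm ▸ hh'.1
      have hftp : ft ∈ prim (Tj f) := ht' ▸ mem_prim_Tj ft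
      have hξf : ξ ft ∈ prim (Tj f) := by
        have := sub_mem hh' (Ideal.mul_mem_left _ a hftp)
        rwa [add_sub_cancel_left] at this
      have hξI : ∀ p ∈ Tj f, ξ p ∈ Tj f := by
        rw [← ht'] at hξf ⊢
        exact fun p hp => derivation_preserves_Tj hξf hp
      obtain ⟨D, hD⟩ := exists_quotient_derivation (derivation_preserves_pow
        (fun x hx => derivation_preserves_maxI htop hk hξI hx) (k + 2 + k))
      refine ⟨Ideal.Quotient.mk J a, D, ?_, ?_, ?_⟩
      · rintro _ ⟨w, hw, rfl⟩
        exact hW (Ideal.mul_mem_left _ a hw)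
      · rintro _ ⟨w, hw, rfl⟩
        rw [hπ, hD]
        exact hW (derivation_preserves_prim hξI hw)
      · rw [← map_sub, ← map_smul, ← map_add, ← hft, hπ, hD, ← map_mul, ← map_add]
        rfl)
  obtain ⟨Φ, hΦ⟩ := exists_algEquiv_lift hJ hJ le_rfl le_rfl φ
  obtain ⟨v, hv⟩ := Ideal.Quotient.mk_surjective (u : PS n ⧸ J)
  obtain ⟨v', hv'⟩ := Ideal.Quotient.mk_surjective ((u⁻¹ : (PS n ⧸ J)ˣ) : PS n ⧸ J)
  have hvu : IsUnit v := by
    rw [isUnit_iff_notMem]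
    intro hvm
    have h1 : v * v' - 1 ∈ maxI n := hJmax (by
      rw [← Ideal.Quotient.eq_zero_iff_mem, map_sub, map_mul, hv, hv', Units.mul_inv, map_one,
        sub_self])
    have h2 := sub_mem (Ideal.mul_mem_right v' _ hvm) h1
    rw [sub_sub_cancel] at h2
    exact hmax ((Ideal.eq_top_iff_one _).2 h2)
  have hmod : g - (hvu.unit : PS n) * Φ f ∈ J := by
    rw [← Ideal.Quotient.eq_zero_iff_mem, map_sub, map_mul, hΦ, IsUnit.unit_spec, hv, sub_eq_zero]
    exact hu
  have hkΦ : maxI n ^ k ≤ Tj ((hvu.unit : PS n) * Φ f) := by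
    rw [Tj_unit_mul]
    intro p hp
    have := map_mem_Tj Φ (hk (algEquiv_pow_mem Φ.symm hp))
    rwa [Φ.apply_symm_apply] at this
  exact (determinacy hkΦ hmod).trans' ⟨Φ, hvu.unit, rfl⟩

end Family

/-! ### From Tjurina algebras to contact classes -/

section MatherYau
variable {n : ℕ}

/-- In a finite-dimensional quotient the image of the maximal ideal is nilpotent. -/
theorem exists_pow_le (I : Ideal (PS n)) (h : FiniteDimensional ℂ (PS n ⧸ I)) :
    ∃ k, maxI n ^ k ≤ I := by
  have : IsArtinianRing (PS n ⧸ I) := IsArtinianRing.of_finite ℂ _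
  obtain ⟨k, hk⟩ := IsArtinianRing.isNilpotent_jacobson_bot (R := PS n ⧸ I)
  have hle : (maxI n).map (Ideal.Quotient.mk I) ≤ Ideal.jacobson ⊥ := by
    rw [Ideal.map_le_iff_le_comap]
    intro x hx
    rw [Ideal.mem_comap, Ideal.mem_jacobson_bot]
    intro y
    obtain ⟨y, rfl⟩ := Ideal.Quotient.mk_surjective y
    rw [← map_mul, ← map_one (Ideal.Quotient.mk I), ← map_add]
    refine IsUnit.map _ (isUnit_iff_notMem.2 fun hc => ?_)
    have := sub_mem hc (Ideal.mul_mem_right y _ hx)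
    rw [add_sub_cancel_left, mem_maxI, map_one] at this
    exact one_ne_zero this
  refine ⟨k, fun p hp => ?_⟩
  have h1 := Ideal.mem_map_of_mem (Ideal.Quotient.mk I) hp
  rw [Ideal.map_pow] at h1
  have h2 := Ideal.pow_right_mono hle k h1
  rw [hk] at h2
  exact Ideal.Quotient.eq_zero_iff_mem.1 h2

/-- A series vanishing at the origin whose Tjurina ideal is the unit ideal has nonzero linear
part, hence is contact equivalent to any coordinate function. -/
theorem contactEquiv_X {f : PS n} (h0 : f ∈ maxI n) (htop : Tj f = ⊤) (i : Fin n) :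
    ContactEquiv f (MvPowerSeries.X i) := by
  classical
  have hlin : lin n f ≠ 0 := by
    intro hl
    have hsq := mem_sq_of_lin h0 hl
    have hle : Tj f ≤ maxI n := Tj_le h0 fun δ => by
      rw [← pow_one (maxI n)]; exact derivation_pow_mem δ hsq
    exact RingHom.ker_ne_top _ (top_le_iff.1 (htop ▸ hle))
  have hei : (Pi.single i 1 : Fin n → ℂ) ≠ 0 := by simp
  obtain ⟨A, hA⟩ := SeparatingDual.exists_continuousLinearEquiv_apply_eq (R := ℂ) hei hlin
  let y : Fin n → PS n := fun j => if j = i then f else linForm n (A (Pi.single j 1))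
  have hy : ∀ j, y j ∈ maxI n := fun j => by
    simp only [y]; split_ifs; exacts [h0, linForm_mem _]
  obtain ⟨φ, hφ⟩ := exists_subst y hy
  have hφA : Fintype.linearCombination ℂ (fun j => lin n (φ (MvPowerSeries.X j))) =
      A.toLinearEquiv.toLinearMap := by
    refine LinearMap.pi_ext' fun j => LinearMap.ext_ring ?_
    rw [LinearMap.comp_apply, LinearMap.comp_apply, LinearMap.coe_single,
      Fintype.linearCombination_apply_single, one_smul, hφ]
    change lin n (y j) = A (Pi.single j 1)
    by_cases hj : j = i
    · subst hj; simp [y, hA]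
    · simp [y, hj, lin_linForm]
  refine ⟨AlgEquiv.ofBijective φ (bijective_of_lin (fun j => hφ j ▸ hy j)
    (hφA ▸ A.bijective)), 1, ?_⟩
  simp [hφ, y]

/-- The Tjurina algebra determines the contact class. If it vanishes, both series have nonzero linear
part; otherwise the isomorphism lifts to an automorphism making the two Tjurina ideals equal. -/
theorem contactEquiv_of_algEquiv {f g : PS n} (hf0 : f ∈ maxI n) (hg0 : g ∈ maxI n)
    {k : ℕ} (hfk : maxI n ^ k ≤ Tj f) (hgk : maxI n ^ k ≤ Tj g)
    (θ : (PS n ⧸ Tj f) ≃ₐ[ℂ] (PS n ⧸ Tj g)) : ContactEquiv f g := by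
  have htop : Tj f = ⊤ ↔ Tj g = ⊤ := by
    rw [← Ideal.Quotient.subsingleton_iff, ← Ideal.Quotient.subsingleton_iff]
    exact θ.toEquiv.subsingleton_congr
  by_cases hf : Tj f = ⊤
  · have hg := htop.1 hf
    rcases n with _ | n
    -- without variables the maximal ideal vanishes, so `f = g = 0`
    · have hz : ∀ p : PS 0, p ∈ maxI 0 → p = 0 := fun p hp => by
        rw [← pow_one (maxI 0)] at hp
        obtain ⟨q, rfl, -⟩ := exists_eq_sum_X_mul (k := 0) (mem_pow_iff.1 hp)
        simp
      rw [hz f hf0, hz g hg0]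
      exact ⟨AlgEquiv.refl, 1, by simp⟩
    · exact (contactEquiv_X hf0 hf 0).trans' (contactEquiv_X hg0 hg 0).symm'
  · have hg : Tj g ≠ ⊤ := fun h => hf (htop.2 h)
    obtain ⟨φ, hφ⟩ := exists_algEquiv_lift hf hg hfk hgk θ
    have hmem : ∀ p, φ p ∈ Tj g ↔ p ∈ Tj f := fun p => by
      rw [← Ideal.Quotient.eq_zero_iff_mem, hφ, EmbeddingLike.map_eq_zero_iff,
        Ideal.Quotient.eq_zero_iff_mem]
    have hTj : Tj g = Tj (φ f) := by
      ext p
      rw [← φ.apply_symm_apply p, hmem, map_mem_Tj_iff]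
    have h1 := contactEquiv_of_Tj_eq hTj hg hgk
    exact ContactEquiv.trans' ⟨φ.symm, 1, by simp⟩ h1

theorem algEquiv_of_contactEquiv {f g : PS n} (h : ContactEquiv f g) :
    Nonempty ((PS n ⧸ Tj f) ≃ₐ[ℂ] (PS n ⧸ Tj g)) := by
  obtain ⟨φ, u, rfl⟩ := h
  exact ⟨(Ideal.quotientEquivAlg (Tj g) (Tj ((u : PS n) * φ g)) φ
    (by rw [Tj_unit_mul, Tj_map])).symm⟩

end MatherYau

/-- **Mather–Yau.** Two polynomials with zero constant term and isolated singularities are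
contact equivalent iff their Tjurina algebras are isomorphic as ℂ-algebras. -/
theorem statement_0 {n : ℕ} (f g : MvPolynomial (Fin n) ℂ)
    (hf0 : constantCoeff f = 0) (hg0 : constantCoeff g = 0)
    (hf : FiniteDimensional ℂ (TjurinaAlgebra f))
    (hg : FiniteDimensional ℂ (TjurinaAlgebra g)) :
    ContactEquiv (f : MvPowerSeries (Fin n) ℂ) (g : MvPowerSeries (Fin n) ℂ) ↔
      Nonempty (TjurinaAlgebra f ≃ₐ[ℂ] TjurinaAlgebra g) := by
  have hf1 : (f : PS n) ∈ maxI n := by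
    rw [mem_maxI, ← MvPowerSeries.coeff_zero_eq_constantCoeff_apply, MvPolynomial.coeff_coe]
    exact hf0
  have hg1 : (g : PS n) ∈ maxI n := by
    rw [mem_maxI, ← MvPowerSeries.coeff_zero_eq_constantCoeff_apply, MvPolynomial.coeff_coe]
    exact hg0
  unfold TjurinaAlgebra at *
  rw [tjurinaIdeal_eq] at hf hg
  rw [tjurinaIdeal_eq, tjurinaIdeal_eq]
  obtain ⟨k, hk⟩ := exists_pow_le _ hf
  obtain ⟨l, hl⟩ := exists_pow_le _ hg
  refine ⟨algEquiv_of_contactEquiv, fun ⟨θ⟩ => contactEquiv_of_algEquiv hf1 hg1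
    (k := k + l) ?_ ?_ θ⟩
  · exact (Ideal.pow_le_pow_right (Nat.le_add_right k l)).trans hk
  · exact (Ideal.pow_le_pow_right (Nat.le_add_left l k)).trans hl
end
end

section
/- Let l ≤ n and let f, g ∈ ℂ[x₁,…,x_l] be polynomials with zero constant term. Then f + x_{l+1}² + … + xₙ² and g + x_{l+1}² + … + xₙ² (viewed in ℂ[[x₁,…,xₙ]]) are contact equivalent if and only if f and g are contact equivalent in ℂ[[x₁,…,x_l]]. -/
/-!
The theorem reduces, one variable at a time, to a complete Noetherian local `ℂ`-algebra `A` with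
residue field `ℂ`: for `f, g ∈ 𝔪`, one has `f + X² ~ g + X²` in `A⟦X⟧` if and only if `f ~ g` in
`A` (`CE_stab_iff`). If `f = u·φ(g)`, then with `w² = u` the extension of `φ` sending `X` to `w⁻¹X`
gives `f + X² = u·φ(g + X²)`. The interesting direction is cancellation of the square.

Two tools produce all automorphisms and implicit functions. If `Q ∈ A⟦T⟧` has order one modulo
`𝔪`, Weierstrass division identifies `A⟦T⟧ ⧸ (Q)` with `A`, which gives an evaluation map at the
root of `Q` (`exists_eval`); composing the exponential `exp(T·D) : A → A⟦T⟧` of a derivation with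
evaluation at `T = τ` gives the flow of `D` stopped at the non-constant time `τ`
(`exists_flow`), an automorphism as soon as `τ ∈ 𝔪` and `1 + D τ` is a unit.

If `f ∉ 𝔪²`, then `g ∉ 𝔪²` as well, and a flow along a derivation transverse to both takes one to
the other (`CE_of_regular`). Suppose `f ∈ 𝔪²` and `f + X² = u·φ(g + X²)`, and put `Y = φ(X)`.

* If `∂Y/∂X` is a unit (`CE_of_transverse`), then `Y = 0` defines a section of `A → A⟦X⟧`.
  Restricting to it turns the relation into `f + s² ~ g`, where `s` is the restriction of `X`.
  Differentiating the relation along `δ = φ ∘ ∂/∂X ∘ φ⁻¹`, for which `δ Y = 1`, and restricting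
  shows that `s = D f + (a multiple of f)` for a derivation `D` of `A`. Hence `f + s²` is a unit
  times `f + ε·(D f)²`, and the term `ε·(D f)²` is absorbed by flowing `f` along `D` for a time
  divisible by `D f` (`square_solver`). The nondegeneracy condition this requires is a
  consequence of second-order information at the closed point (`conj_second_order`).
* If `∂Y/∂X` is not a unit (`CE_of_degenerate`), then the vector field on `A` induced by `δ` has
  nonzero second derivative on `f`. Flowing along its extension to `A⟦X⟧` for time `c·X`, with
  `c ∈ ℂ` generic, and then completing the square takes `f + X²` to some `k + X²` up to a unit.
  Both resulting equivalences, of `k + X²` with `f + X²` and with `g + X²`, are of the first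
  kind, so `f ~ k ~ g`.
-/

open MvPolynomial

noncomputable section

set_option linter.unusedSectionVars false

namespace StableContact

open IsLocalRing

/-! ### Complex points of local algebras -/

section Basic

variable {A : Type*} [CommRing A] [Algebra ℂ A] [IsLocalRing A]

/-- A complex point of a local `ℂ`-algebra has the maximal ideal as its kernel; it serves throughout
as the residue map at the closed point. -/
lemma ker_eq (κ : A →ₐ[ℂ] ℂ) : RingHom.ker κ = maximalIdeal A := by
  have : (RingHom.ker κ).IsMaximal :=
    RingHom.ker_isMaximal_of_surjective κ (fun c => ⟨algebraMap ℂ A c, by simp⟩)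
  exact IsLocalRing.eq_maximalIdeal this

lemma mem_max (κ : A →ₐ[ℂ] ℂ) {a : A} : a ∈ maximalIdeal A ↔ κ a = 0 := by
  rw [← ker_eq κ, RingHom.mem_ker]

lemma isUnit_iff (κ : A →ₐ[ℂ] ℂ) {a : A} : IsUnit a ↔ κ a ≠ 0 := by
  rw [← IsLocalRing.notMem_maximalIdeal, mem_max κ]

/-- A complex point of a local `ℂ`-algebra is unique, since its kernel is the maximal ideal. -/
lemma point_unique (κ κ' : A →ₐ[ℂ] ℂ) : κ = κ' := by
  ext a
  have h : a - algebraMap ℂ A (κ a) ∈ maximalIdeal A := by rw [mem_max κ]; simp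
  rw [mem_max κ'] at h
  rw [map_sub, sub_eq_zero] at h
  simpa using h.symm

lemma point_equiv (κ : A →ₐ[ℂ] ℂ) (φ : A ≃ₐ[ℂ] A) (a : A) : κ (φ a) = κ a :=
  congrArg (fun k : A →ₐ[ℂ] ℂ => k a) (point_unique (κ.comp φ.toAlgHom) κ)

lemma sq_induction (κ : A →ₐ[ℂ] ℂ) {P : A → Prop} (hadd : ∀ a b, P a → P b → P (a + b))
    (hmul : ∀ a b, κ a = 0 → κ b = 0 → P (a * b)) {a : A} (ha : a ∈ maximalIdeal A ^ 2) : P a := by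
  rw [pow_two] at ha
  exact Submodule.mul_induction_on ha
    (fun x hx y hy => hmul x y ((mem_max κ).1 hx) ((mem_max κ).1 hy)) hadd

/-- Elements of `𝔪²` have vanishing first derivatives at the closed point. -/
lemma der_sq (κ : A →ₐ[ℂ] ℂ) (D : Derivation ℂ A A) {a : A} (ha : a ∈ maximalIdeal A ^ 2) :
    κ (D a) = 0 := by
  refine sq_induction κ (P := fun a => κ (D a) = 0) ?_ ?_ ha
  · intro a b h1 h2; simp [h1, h2]
  · intro a b h1 h2; simp [h1, h2]

/-- At a critical point, second derivatives taken along two vector fields commute. -/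
lemma der_comm (κ : A →ₐ[ℂ] ℂ) (D D' : Derivation ℂ A A) {a : A} (ha : a ∈ maximalIdeal A ^ 2) :
    κ (D (D' a)) = κ (D' (D a)) := by
  refine sq_induction κ (P := fun a => κ (D (D' a)) = κ (D' (D a))) ?_ ?_ ha
  · intro a b h1 h2; simp [h1, h2]
  · intro a b h1 h2; simp [h1, h2]; ring

lemma mul_mem_sq (κ : A →ₐ[ℂ] ℂ) {a b : A} (ha : κ a = 0) (hb : κ b = 0) :
    a * b ∈ maximalIdeal A ^ 2 := by
  rw [pow_two]; exact Ideal.mul_mem_mul ((mem_max κ).2 ha) ((mem_max κ).2 hb)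

end Basic

/-! ### Automorphisms close to the identity -/

section Automorphism

/-- A surjective endomorphism of a Noetherian ring is injective. -/
lemma injective_of_surjective {A : Type*} [CommRing A] [IsNoetherianRing A] (f : A →+* A)
    (hf : Function.Surjective f) : Function.Injective f := by
  let K : ℕ →o Ideal A :=
    ⟨fun n => RingHom.ker (f ^ n), monotone_nat_of_le_succ fun n x hx => by
      rw [RingHom.mem_ker] at hx ⊢
      rw [pow_succ', RingHom.mul_def, RingHom.comp_apply, hx, map_zero]⟩
  obtain ⟨N, hN⟩ := monotone_stabilizes_iff_noetherian.mpr ‹IsNoetherianRing A› K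
  rw [injective_iff_map_eq_zero]
  intro x hx
  have hs : Function.Surjective (f ^ N : A →+* A) := by
    rw [RingHom.coe_pow]; exact hf.iterate N
  obtain ⟨y, rfl⟩ := hs x
  have h1 : y ∈ K (N + 1) := by
    change y ∈ RingHom.ker (f ^ (N + 1))
    rw [RingHom.mem_ker, pow_succ', RingHom.mul_def, RingHom.comp_apply, hx]
  rw [← hN (N + 1) (Nat.le_succ N)] at h1
  exact h1

variable {A : Type*} [CommRing A] [Algebra ℂ A] [IsLocalRing A] [IsNoetherianRing A]
  [IsAdicComplete (maximalIdeal A) A]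

/-- Formal inverse function theorem for a rank-one perturbation of the identity: an endomorphism
of the form `a ↦ a + τ·D a` modulo `𝔪²` is bijective as soon as `1 + D τ` is a unit. -/
lemma bijective_of_flow (κ : A →ₐ[ℂ] ℂ) (Φ : A →ₐ[ℂ] A) (D : Derivation ℂ A A) (τ : A)
    (hτ : κ τ = 0) (hD : 1 + κ (D τ) ≠ 0)
    (hΦ : ∀ a, ∃ r, Φ a = a + τ * D a + τ ^ 2 * r) : Function.Bijective Φ := by
  set m := maximalIdeal A with hm
  have hκΦ : ∀ a, κ (Φ a) = κ a := fun a => by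
    obtain ⟨r, hr⟩ := hΦ a; rw [hr]; simp [hτ]
  have hτ2 : ∀ r, τ ^ 2 * r ∈ m ^ 2 := fun r => by
    refine Ideal.mul_mem_right _ _ ?_
    rw [pow_two τ]; exact mul_mem_sq κ hτ hτ
  have hle : m.map (Φ : A →+* A) ≤ m := by
    rw [Ideal.map_le_iff_le_comap]
    intro a ha
    rw [Ideal.mem_comap, mem_max κ]
    exact (hκΦ a).trans ((mem_max κ).1 ha)
  have hge : m ≤ m.map (Φ : A →+* A) ⊔ m * m := by
    rw [← pow_two]
    have hτm : τ ∈ m.map (Φ : A →+* A) ⊔ m ^ 2 := by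
      obtain ⟨r, hr⟩ := hΦ τ
      have hu : IsUnit (1 + D τ) := by rw [isUnit_iff κ]; simpa using hD
      rw [← Ideal.mul_unit_mem_iff_mem _ hu]
      have : τ * (1 + D τ) = Φ τ - τ ^ 2 * r := by rw [hr]; ring
      rw [this]
      exact sub_mem (Ideal.mem_sup_left (Ideal.mem_map_of_mem (Φ : A →+* A) ((mem_max κ).2 hτ)))
        (Ideal.mem_sup_right (hτ2 r))
    intro a ha
    obtain ⟨r, hr⟩ := hΦ a
    have : a = Φ a - τ * D a - τ ^ 2 * r := by rw [hr]; ring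
    rw [this]
    exact sub_mem (sub_mem (Ideal.mem_sup_left (Ideal.mem_map_of_mem (Φ : A →+* A) ha))
      (Ideal.mul_mem_right _ _ hτm)) (Ideal.mem_sup_right (hτ2 r))
  have hmap : m.map (Φ : A →+* A) = m := by
    refine le_antisymm hle ?_
    refine Submodule.le_of_le_smul_of_le_jacobson_bot (I := m) (IsNoetherian.noetherian m) ?_ ?_
    · exact (IsLocalRing.jacobson_eq_maximalIdeal ⊥ bot_ne_top).ge
    · simpa using hge
  have hsurj : Function.Surjective (Φ : A →+* A) := by
    have hH : IsHausdorff (m.map (Φ : A →+* A)) A := by rw [hmap]; infer_instance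
    refine surjective_of_mk_map_comp_surjective (I := m) (Φ : A →+* A) ?_
    intro y
    obtain ⟨y, rfl⟩ := Ideal.Quotient.mk_surjective y
    refine ⟨y, ?_⟩
    rw [RingHom.comp_apply, Ideal.Quotient.eq, hmap, mem_max κ]
    simp [hκΦ]
  exact ⟨injective_of_surjective _ hsurj, hsurj⟩

end Automorphism

/-! ### Evaluation of power series by Weierstrass division -/

section Evaluation

variable {A : Type*} [CommRing A] [Algebra ℂ A] [IsLocalRing A]
  [IsAdicComplete (maximalIdeal A) A]

/-- Order modulo `𝔪` of a power series, read off from its coefficients at the closed point. -/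
lemma order_map_residue (κ : A →ₐ[ℂ] ℂ) (Q : PowerSeries A) (n : ℕ)
    (h0 : ∀ i < n, κ (PowerSeries.coeff i Q) = 0) (h1 : κ (PowerSeries.coeff n Q) ≠ 0) :
    (Q.map (residue A)).order = n := by
  rw [PowerSeries.order_eq_nat]
  constructor
  · rw [PowerSeries.coeff_map, Ne, residue_eq_zero_iff, mem_max κ]; exact h1
  · intro i hi
    rw [PowerSeries.coeff_map, residue_eq_zero_iff, mem_max κ]; exact h0 i hi

/-- Evaluation at the root of a power series of order one modulo `𝔪`. By Weierstrass division
`A → A⟦T⟧ ⧸ (Q)` is bijective; the inverse gives the evaluation map. This is how both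
implicit functions and substitutions of elements of `𝔪` are obtained. -/
lemma exists_eval (κ : A →ₐ[ℂ] ℂ) (Q : PowerSeries A) (h0 : κ (PowerSeries.coeff 0 Q) = 0)
    (h1 : κ (PowerSeries.coeff 1 Q) ≠ 0) :
    ∃ π : PowerSeries A →ₐ[A] A, ∀ h, π h = 0 ↔ Q ∣ h := by
  have hord : (Q.map (residue A)).order = (1 : ℕ) := order_map_residue κ Q 1 (by simpa using h0) h1
  have hne : Q.map (residue A) ≠ 0 := by
    intro h; rw [h, PowerSeries.order_zero] at hord; simp at hord
  have hord' : (Q.map (Ideal.Quotient.mk (maximalIdeal A))).order.toNat = 1 := by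
    change (Q.map (residue A)).order.toNat = 1
    rw [hord]; rfl
  let j : A →ₐ[A] (PowerSeries A ⧸ Ideal.span {Q}) := Algebra.ofId _ _
  have hj : ∀ a, j a = Ideal.Quotient.mk (Ideal.span {Q}) (PowerSeries.C a) := fun a => rfl
  have hbij : Function.Bijective j := by
    constructor
    · rw [injective_iff_map_eq_zero]
      intro a ha
      rw [hj, Ideal.Quotient.eq_zero_iff_mem, Ideal.mem_span_singleton] at ha
      obtain ⟨q, hq⟩ := ha
      have := ((PowerSeries.IsWeierstrassDivisor.of_map_ne_zero hne).eq_zero_of_mul_eq (q := q)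
        (r := Polynomial.C a) ?_ ?_).2
      · simpa using this
      · rw [hord']
        exact lt_of_le_of_lt Polynomial.degree_C_le (by norm_num)
      · rw [← hq]; simp
    · intro x
      obtain ⟨h, rfl⟩ := Ideal.Quotient.mk_surjective x
      obtain ⟨q, r, hqr⟩ := PowerSeries.exists_isWeierstrassDivision h hne
      refine ⟨r.coeff 0, ?_⟩
      rw [hj, Ideal.Quotient.eq, Ideal.mem_span_singleton]
      have hr : r = Polynomial.C (r.coeff 0) := by
        apply Polynomial.eq_C_of_degree_le_zero
        have := hqr.degree_lt
        rw [hord'] at this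
        exact Nat.WithBot.lt_one_iff_le_zero.1 (by simpa using this)
      refine ⟨-q, ?_⟩
      have := hqr.eq_mul_add
      rw [hr] at this
      rw [this]
      simp
  let e := AlgEquiv.ofBijective j hbij
  refine ⟨(e.symm : (PowerSeries A ⧸ Ideal.span {Q}) →ₐ[A] A).comp
    (Ideal.Quotient.mkₐ A (Ideal.span {Q})), fun h => ?_⟩
  change e.symm (Ideal.Quotient.mk (Ideal.span {Q}) h) = 0 ↔ _
  rw [EmbeddingLike.map_eq_zero_iff, Ideal.Quotient.eq_zero_iff_mem, Ideal.mem_span_singleton]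

lemma eval_C (π : PowerSeries A →ₐ[A] A) (a : A) : π (PowerSeries.C a) = a := π.commutes a

/-- The complex point of `A⟦X⟧` lying over a complex point of `A`. -/
def psPoint (κ : A →ₐ[ℂ] ℂ) : PowerSeries A →ₐ[ℂ] ℂ :=
  AlgHom.mk (κ.toRingHom.comp PowerSeries.constantCoeff) fun r => by
    simp [PowerSeries.algebraMap_apply]

lemma psPoint_apply {A : Type*} [CommRing A] [Algebra ℂ A] (κ : A →ₐ[ℂ] ℂ)
    (h : PowerSeries A) : psPoint κ h = κ (PowerSeries.constantCoeff h) := rfl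

lemma point_eval (κ : A →ₐ[ℂ] ℂ) (π : PowerSeries A →ₐ[A] A) (h : PowerSeries A) :
    κ (π h) = κ (PowerSeries.constantCoeff h) :=
  congrArg (fun k : PowerSeries A →ₐ[ℂ] ℂ => k h)
    (point_unique (κ.comp (π.restrictScalars ℂ)) (psPoint κ))

/-- Substitution of an element of the maximal ideal is unique. -/
lemma eval_unique (κ : A →ₐ[ℂ] ℂ) (π π' : PowerSeries A →ₐ[A] A) (h : π PowerSeries.X = π' PowerSeries.X)
    (hκ : κ (π PowerSeries.X) = 0) : π = π' := by
  obtain ⟨ρ, hρ⟩ := exists_eval κ (PowerSeries.X - PowerSeries.C (π PowerSeries.X)) (by simp [hκ]) (by simp)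
  have key : ∀ (π₁ : PowerSeries A →ₐ[A] A), π₁ PowerSeries.X = π PowerSeries.X → ∀ p, π₁ p = ρ p := by
    intro π₁ h₁ p
    have : PowerSeries.X - PowerSeries.C (π PowerSeries.X) ∣ p - PowerSeries.C (ρ p) := by
      rw [← hρ]; simp [eval_C]
    obtain ⟨q, hq⟩ := this
    have := congrArg π₁ hq
    simpa [eval_C, h₁, sub_eq_zero] using this
  ext p
  rw [key π rfl, key π' h.symm]

lemma exists_eval_at (κ : A →ₐ[ℂ] ℂ) (τ : A) (hτ : κ τ = 0) :
    ∃ π : PowerSeries A →ₐ[A] A, π PowerSeries.X = τ := by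
  obtain ⟨ρ, hρ⟩ := exists_eval κ (PowerSeries.X - PowerSeries.C τ) (by simp [hτ]) (by simp)
  exact ⟨ρ, by have := (hρ (PowerSeries.X - PowerSeries.C τ)).2 dvd_rfl; simpa [eval_C, sub_eq_zero] using this⟩

end Evaluation

/-! ### The exponential of a derivation -/

section Exponential

variable {A : Type*} [CommRing A] [Algebra ℂ A]

/-- The power series `exp(T·D)a = ∑ Tⁿ Dⁿ(a)/n!`. -/
def expSeries (D : Derivation ℂ A A) (a : A) : PowerSeries A :=
  PowerSeries.mk fun n => ((n.factorial : ℂ)⁻¹) • (D^[n] a)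

lemma coeff_expSeries (D : Derivation ℂ A A) (a : A) (n : ℕ) :
    PowerSeries.coeff n (expSeries D a) = ((n.factorial : ℂ)⁻¹) • (D^[n] a) :=
  PowerSeries.coeff_mk _ _

lemma expSeries_add (D : Derivation ℂ A A) (a b : A) :
    expSeries D (a + b) = expSeries D a + expSeries D b := by
  ext n; simp [coeff_expSeries]

lemma derivative_expSeries (D : Derivation ℂ A A) (a : A) :
    PowerSeries.derivative A (expSeries D a) = expSeries D (D a) := by
  ext n
  rw [PowerSeries.coeff_derivative, coeff_expSeries, coeff_expSeries, Function.iterate_succ_apply]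
  have : ((n : A) + 1) = algebraMap ℂ A (n + 1) := by simp
  rw [this, mul_comm, ← Algebra.smul_def, smul_smul, Nat.factorial_succ]
  congr 1
  have h1 : ((n : ℂ) + 1) ≠ 0 := by exact_mod_cast Nat.succ_ne_zero n
  have h2 : (n.factorial : ℂ) ≠ 0 := by exact_mod_cast Nat.factorial_ne_zero n
  push_cast
  field_simp

lemma cancel_succ (n : ℕ) {a b : A} (h : a * ((n : A) + 1) = b * ((n : A) + 1)) : a = b := by
  have : IsUnit ((n : A) + 1) := by
    have e : ((n : A) + 1) = algebraMap ℂ A (n + 1) := by simp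
    rw [e]
    refine (IsUnit.mk0 _ ?_).map (algebraMap ℂ A)
    exact_mod_cast Nat.succ_ne_zero n
  exact this.mul_left_injective h

lemma expSeries_mul (D : Derivation ℂ A A) (a b : A) :
    expSeries D (a * b) = expSeries D a * expSeries D b := by
  ext n
  induction n generalizing a b with
  | zero => simp [coeff_expSeries, PowerSeries.coeff_mul]
  | succ n ih =>
    apply cancel_succ n
    rw [← PowerSeries.coeff_derivative, ← PowerSeries.coeff_derivative, derivative_expSeries,
      D.leibniz, Derivation.leibniz, derivative_expSeries, derivative_expSeries, smul_eq_mul,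
      smul_eq_mul, expSeries_add, map_add, ih, ih, smul_eq_mul, smul_eq_mul, map_add]

lemma iterate_of_eq_zero (D : Derivation ℂ A A) {a : A} (h : D a = 0) (n : ℕ) :
    D^[n + 1] a = 0 := by
  rw [Function.iterate_succ_apply, h]
  induction n with
  | zero => rfl
  | succ n ih => rw [Function.iterate_succ_apply, map_zero, ih]

lemma expSeries_const (D : Derivation ℂ A A) {a : A} (h : D a = 0) :
    expSeries D a = PowerSeries.C a := by
  ext n
  rw [coeff_expSeries, PowerSeries.coeff_C]
  cases n with
  | zero => simp
  | succ n => rw [iterate_of_eq_zero D h]; simp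

/-- The exponential `exp(T·D) : A → A⟦T⟧` of a derivation, the formal flow of a vector field. -/
def expHom (D : Derivation ℂ A A) : A →ₐ[ℂ] PowerSeries A where
  toFun := expSeries D
  map_one' := by rw [expSeries_const D (by simp), map_one]
  map_mul' := expSeries_mul D
  map_zero' := by rw [expSeries_const D (by simp), map_zero]
  map_add' := expSeries_add D
  commutes' r := by
    rw [expSeries_const D (by simp), PowerSeries.algebraMap_apply]

lemma coeff_expHom (D : Derivation ℂ A A) (a : A) (n : ℕ) :
    PowerSeries.coeff n (expHom D a) = ((n.factorial : ℂ)⁻¹) • (D^[n] a) :=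
  coeff_expSeries D a n

/-- A flow for which the second derivative of `a` vanishes moves `a` linearly in time. -/
lemma expHom_linear (D : Derivation ℂ A A) {a : A} (h : D (D a) = 0) :
    expHom D a = PowerSeries.C a + PowerSeries.X * PowerSeries.C (D a) := by
  ext n
  rw [coeff_expHom]
  rcases n with _ | _ | n
  · simp
  · simp
  · rw [Function.iterate_succ_apply, iterate_of_eq_zero D h]
    simp [PowerSeries.coeff_X]

lemma expand_two (h : PowerSeries A) : ∃ r, h = PowerSeries.C (PowerSeries.coeff 0 h) +
    PowerSeries.X * PowerSeries.C (PowerSeries.coeff 1 h) + PowerSeries.X ^ 2 * r := by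
  have : PowerSeries.X ^ 2 ∣ h - (PowerSeries.C (PowerSeries.coeff 0 h) +
    PowerSeries.X * PowerSeries.C (PowerSeries.coeff 1 h)) := by
    rw [PowerSeries.X_pow_dvd_iff]
    intro m hm
    interval_cases m
    · simp
    · simp
  obtain ⟨r, hr⟩ := this
  exact ⟨r, by rw [← hr]; ring⟩

lemma expHom_expand (D : Derivation ℂ A A) (a : A) : ∃ r, expHom D a = PowerSeries.C a +
    PowerSeries.X * PowerSeries.C (D a) +
    PowerSeries.X ^ 2 * PowerSeries.C ((2⁻¹ : ℂ) • D (D a)) + PowerSeries.X ^ 3 * r := by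
  have : PowerSeries.X ^ 3 ∣ expHom D a - (PowerSeries.C a +
    PowerSeries.X * PowerSeries.C (D a) +
    PowerSeries.X ^ 2 * PowerSeries.C ((2⁻¹ : ℂ) • D (D a))) := by
    rw [PowerSeries.X_pow_dvd_iff]
    intro m hm
    rw [pow_two, mul_assoc]
    interval_cases m
    · simp [coeff_expHom, PowerSeries.coeff_zero_X_mul, -PowerSeries.coeff_zero_eq_constantCoeff]
    · simp [coeff_expHom, PowerSeries.coeff_succ_X_mul]
    · simp [coeff_expHom, PowerSeries.coeff_succ_X_mul, PowerSeries.coeff_X]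
  obtain ⟨r, hr⟩ := this
  exact ⟨r, by rw [← hr]; ring⟩

end Exponential

/-! ### Flows -/

section Flow

variable {A : Type*} [CommRing A] [Algebra ℂ A] [IsLocalRing A] [IsNoetherianRing A]
  [IsAdicComplete (maximalIdeal A) A]

/-- The automorphism `a ↦ ∑ τⁿ Dⁿ(a)/n!`: the flow of `D` stopped at the (non-constant) time `τ`. -/
lemma exists_flow (κ : A →ₐ[ℂ] ℂ) (D : Derivation ℂ A A) (τ : A) (hτ : κ τ = 0)
    (hD : 1 + κ (D τ) ≠ 0) : ∃ Φ : A ≃ₐ[ℂ] A,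
      (∀ π : PowerSeries A →ₐ[A] A, π PowerSeries.X = τ → ∀ a, Φ a = π (expHom D a)) ∧
      (∀ a, ∃ r, Φ a = a + τ * D a + τ ^ 2 * ((2⁻¹ : ℂ) • D (D a)) + τ ^ 3 * r) ∧
      (∀ a, D (D a) = 0 → Φ a = a + τ * D a) := by
  obtain ⟨π, hπ⟩ := exists_eval_at κ τ hτ
  have hexp : ∀ a, ∃ r, π (expHom D a) =
      a + τ * D a + τ ^ 2 * ((2⁻¹ : ℂ) • D (D a)) + τ ^ 3 * r := fun a => by
    obtain ⟨r, hr⟩ := expHom_expand D a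
    exact ⟨π r, by rw [hr]; simp only [map_add, map_mul, map_pow, hπ, eval_C]⟩
  have hb : Function.Bijective ((π.restrictScalars ℂ).comp (expHom D)) := by
    refine bijective_of_flow κ _ D τ hτ hD fun a => ?_
    obtain ⟨r, hr⟩ := hexp a
    exact ⟨(2⁻¹ : ℂ) • D (D a) + τ * r, by
      change π (expHom D a) = _
      rw [hr]; ring⟩
  refine ⟨AlgEquiv.ofBijective _ hb, fun π' hπ' a => ?_, hexp, fun a ha => ?_⟩
  · rw [eval_unique κ π' π (by rw [hπ, hπ']) (by rw [hπ', hτ])]; rfl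
  · change π (expHom D a) = _
    rw [expHom_linear D ha]; simp only [map_add, map_mul, hπ, eval_C]

/-- First-order effect of a flow on a derivation `d` at the closed point. -/
lemma der_flow (κ : A →ₐ[ℂ] ℂ) (D : Derivation ℂ A A) {τ : A} (hτ : κ τ = 0)
    {Φ : A ≃ₐ[ℂ] A}
    (hΦ : ∀ a, ∃ r, Φ a = a + τ * D a + τ ^ 2 * ((2⁻¹ : ℂ) • D (D a)) + τ ^ 3 * r)
    (d : Derivation ℂ A A) (h : A) : κ (d (Φ h)) = κ (d h) + κ (d τ) * κ (D h) := by
  obtain ⟨r, hr⟩ := hΦ h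
  rw [hr]
  simp [hτ, Derivation.leibniz_pow]
  ring

/-- If `D f` and `μ` vanish at the closed point, then `f` is equivalent to `f + μ (D f)²`. With
`w = D f`, the flow of `D` for time `c w` changes `f` by `w² (c + c² H(c w))`, where `X² H` is the
part of order at least two of `exp(X·D) f`; so `c` has to solve `c + c² H(c w) = μ`. -/
lemma small_solver (κ : A →ₐ[ℂ] ℂ) (D : Derivation ℂ A A) (f μ : A) (hw : κ (D f) = 0)
    (hμ : κ μ = 0) : ∃ Φ : A ≃ₐ[ℂ] A, Φ f = f + μ * (D f) ^ 2 := by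
  set w := D f with hwdef
  obtain ⟨H, hH⟩ := expand_two (expHom D f)
  have hE : expHom D f = PowerSeries.C f + PowerSeries.X * PowerSeries.C w +
      PowerSeries.X ^ 2 * H := by
    have h0 : PowerSeries.coeff 0 (expHom D f) = f := by rw [coeff_expHom]; simp
    have h1 : PowerSeries.coeff 1 (expHom D f) = w := by rw [coeff_expHom]; simp [hwdef]
    rw [h0, h1] at hH; exact hH
  let ρ : PowerSeries A →ₐ[A] PowerSeries A :=
    { PowerSeries.rescale w with
      commutes' := fun r => by
        ext n
        change PowerSeries.coeff n (PowerSeries.rescale w (PowerSeries.C r)) =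
          PowerSeries.coeff n (PowerSeries.C r)
        rw [PowerSeries.coeff_rescale, PowerSeries.coeff_C]
        split_ifs with hn <;> simp [hn] }
  have hρX : ρ PowerSeries.X = PowerSeries.C w * PowerSeries.X := PowerSeries.rescale_X w
  have hρC : ∀ a, ρ (PowerSeries.C a) = PowerSeries.C a := fun a => ρ.commutes a
  set Q : PowerSeries A := PowerSeries.X + PowerSeries.X ^ 2 * ρ H - PowerSeries.C μ with hQ
  obtain ⟨π, hπ⟩ := exists_eval κ Q (by simp [hQ, hμ]) (by
    simp [hQ, PowerSeries.coeff_X_pow_mul'])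
  have hπQ : π PowerSeries.X + π PowerSeries.X ^ 2 * π (ρ H) = μ := by
    have := (hπ Q).2 dvd_rfl
    simpa [hQ, eval_C, sub_eq_zero] using this
  set c := π PowerSeries.X with hc
  have hκc : κ c = 0 := by rw [hc, point_eval]; simp
  have hτ : κ (c * w) = 0 := by simp [hκc]
  obtain ⟨Φ, hΦ, -, -⟩ := exists_flow κ D (c * w) hτ (by simp [hκc, hw])
  refine ⟨Φ, ?_⟩
  have hπρ : (π.comp ρ) PowerSeries.X = c * w := by
    rw [AlgHom.comp_apply, hρX, map_mul, eval_C, mul_comm]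
  rw [hΦ _ hπρ, hE]
  simp only [AlgHom.comp_apply, map_add, map_mul, map_pow, hρC, hρX, eval_C]
  rw [← hπQ, ← hc]
  ring

end Flow

/-! ### Contact equivalence in a ℂ-algebra -/

section ContactRelation

variable {A : Type*} [CommRing A] [Algebra ℂ A]

/-- Contact equivalence in an arbitrary commutative `ℂ`-algebra. -/
def CE (f g : A) : Prop := ∃ (φ : A ≃ₐ[ℂ] A) (u : Aˣ), f = u * φ g

lemma CE.symm {f g : A} (h : CE f g) : CE g f := by
  obtain ⟨φ, u, h⟩ := h
  refine ⟨φ.symm, Units.map (φ.symm : A →* A) u⁻¹, ?_⟩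
  rw [h, map_mul, AlgEquiv.symm_apply_apply, ← mul_assoc]
  have : ((Units.map (φ.symm : A →* A) u⁻¹ : Aˣ) : A) * φ.symm (u : A) = 1 := by
    change φ.symm ((u⁻¹ : Aˣ) : A) * φ.symm (u : A) = 1
    rw [← map_mul, Units.inv_mul, map_one]
  rw [this, one_mul]

lemma CE.trans {f g h : A} (h₁ : CE f g) (h₂ : CE g h) : CE f h := by
  obtain ⟨φ, u, rfl⟩ := h₁
  obtain ⟨ψ, v, rfl⟩ := h₂
  refine ⟨ψ.trans φ, u * Units.map (φ : A →* A) v, ?_⟩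
  rw [map_mul, Units.val_mul, AlgEquiv.trans_apply, mul_assoc]
  rfl

lemma CE.of_isUnit {f g : A} (φ : A ≃ₐ[ℂ] A) {u : A} (hu : IsUnit u) (h : f = u * φ g) :
    CE f g := ⟨φ, hu.unit, h⟩

lemma CE.of_equiv {B : Type*} [CommRing B] [Algebra ℂ B] (e : A ≃ₐ[ℂ] B) {f g : A}
    (h : CE f g) : CE (e f) (e g) := by
  obtain ⟨φ, u, rfl⟩ := h
  refine CE.of_isUnit ((e.symm.trans φ).trans e) (u.isUnit.map e) ?_
  simp

lemma CE.equiv_iff {B : Type*} [CommRing B] [Algebra ℂ B] (e : A ≃ₐ[ℂ] B) {f g : A} :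
    CE (e f) (e g) ↔ CE f g := by
  refine ⟨fun h => ?_, CE.of_equiv e⟩
  simpa using CE.of_equiv e.symm h

end ContactRelation

/-! ### Solving equations by flows -/

section Solvers

variable {A : Type*} [CommRing A] [Algebra ℂ A] [IsLocalRing A] [IsNoetherianRing A]
  [IsAdicComplete (maximalIdeal A) A]

/-- Along a vector field transverse to both `f` and `g`, a flow takes `f` to `g`; the time is
found by the implicit function theorem. -/
lemma exists_flow_of_transverse (κ : A →ₐ[ℂ] ℂ) (D : Derivation ℂ A A) {f g : A} (hf : κ f = 0)
    (hg : κ g = 0) (hDf : κ (D f) ≠ 0) (hDg : κ (D g) ≠ 0) : ∃ Φ : A ≃ₐ[ℂ] A, Φ f = g := by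
  obtain ⟨π, hπ⟩ := exists_eval κ (expHom D f - PowerSeries.C g)
    (by rw [map_sub, coeff_expHom]; simp [hf, hg])
    (by rw [map_sub, coeff_expHom]; simpa [PowerSeries.coeff_C] using hDf)
  have hπg : π (expHom D f) = g := by
    have := (hπ _).2 dvd_rfl
    simpa [eval_C, sub_eq_zero] using this
  have hτ : κ (π PowerSeries.X) = 0 := by rw [point_eval]; simp
  have hτD : 1 + κ (D (π PowerSeries.X)) ≠ 0 := by
    obtain ⟨r, hr⟩ := expHom_expand D f
    rw [hr] at hπg
    simp only [map_add, map_mul, map_pow, eval_C] at hπg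
    have h2 := congrArg (fun x => κ (D x)) hπg
    simp [hτ, Derivation.leibniz_pow] at h2
    intro h3
    apply hDg
    rw [← h2]
    linear_combination κ (D f) * h3
  obtain ⟨Φ, hΦ, -, -⟩ := exists_flow κ D _ hτ hτD
  exact ⟨Φ, by rw [hΦ π rfl, hπg]⟩

/-- The discriminant condition yields a simple root of `α c² + c = e`, also when `α = 0`. -/
lemma exists_quadratic_root (α e : ℂ) (h : 1 + 4 * α * e ≠ 0) :
    ∃ c : ℂ, c + α * c ^ 2 = e ∧ 1 + 2 * α * c ≠ 0 := by
  by_cases hα : α = 0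
  · exact ⟨e, by simp [hα], by simp [hα]⟩
  · obtain ⟨z, hz⟩ := IsAlgClosed.exists_pow_nat_eq (1 + 4 * α * e) (n := 2) (by norm_num)
    have hz0 : z ≠ 0 := by rintro rfl; apply h; rw [← hz]; ring
    refine ⟨(-1 + z) / (2 * α), ?_, ?_⟩
    · field_simp
      linear_combination hz
    · have : 1 + 2 * α * ((-1 + z) / (2 * α)) = z := by field_simp; ring
      rwa [this]

/-- An automorphism takes `f` to `f + ε (D f)²`, as long as this does not
degenerate the second derivative `D² f`. The constant part of `ε` is absorbed by solving a
quadratic equation over `ℂ`, the rest by `small_solver`. -/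
lemma square_solver (κ : A →ₐ[ℂ] ℂ) (D : Derivation ℂ A A) (f ε : A) (hw : κ (D f) = 0)
    (hε : 1 + 2 * κ ε * κ (D (D f)) ≠ 0) : ∃ Φ : A ≃ₐ[ℂ] A, Φ f = f + ε * (D f) ^ 2 := by
  obtain ⟨c, hc, hc'⟩ := exists_quadratic_root (κ (D (D f)) / 2) (κ ε) (by
    convert hε using 1; ring)
  set w := D f with hwdef
  obtain ⟨Φ₁, -, hΦ₁, -⟩ := exists_flow κ D (algebraMap ℂ A c * w) (by simp [hw]) (by
    have : D (algebraMap ℂ A c * w) = algebraMap ℂ A c * D w := by simp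
    rw [this, map_mul, AlgHom.commutes]
    convert hc' using 1
    simp; ring)
  obtain ⟨r, hr⟩ := hΦ₁ f
  set ε' : A := algebraMap ℂ A c + algebraMap ℂ A c ^ 2 * ((2⁻¹ : ℂ) • D w) +
    algebraMap ℂ A c ^ 3 * w * r with hε'
  have hκε' : κ ε' = κ ε := by
    rw [← hc, hε']
    simp [hw]; ring
  have hΦ₁f : Φ₁ f = f + ε' * w ^ 2 := by
    rw [hr, hε', ← hwdef]; ring
  -- The flow `Φ₁` gives the right coefficient at the closed point. The new derivative of
  -- `f + ε' w²` is `w V` with `V` a unit, so the error `(ε - ε') w²` is a small multiple of its square.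
  set V : A := 1 + w * D ε' + 2 * ε' * D w with hV
  have hDf' : D (f + ε' * w ^ 2) = w * V := by
    simp only [map_add, Derivation.leibniz, Derivation.leibniz_pow, smul_eq_mul, hV, ← hwdef]
    simp
    ring
  have hVu : IsUnit V := by
    rw [isUnit_iff κ, hV]
    simp only [map_add, map_mul, map_one, hw, hκε']
    convert hε using 1
    rw [map_ofNat κ 2]; ring
  obtain ⟨V', hV'⟩ := hVu.exists_right_inv
  obtain ⟨Φ₂, hΦ₂⟩ := small_solver κ D (f + ε' * w ^ 2) ((ε - ε') * V' ^ 2)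
    (by rw [hDf']; simp [hw]) (by simp [hκε'])
  refine ⟨Φ₁.trans Φ₂, ?_⟩
  rw [AlgEquiv.trans_apply, hΦ₁f, hΦ₂, hDf']
  linear_combination ((ε - ε') * w ^ 2 * (V * V' + 1)) * hV'

/-- Any two regular functions (in `𝔪` but not in `𝔪²`) are equivalent. The hypothesis `hder`
provides derivations detecting regularity. -/
lemma CE_of_regular (κ : A →ₐ[ℂ] ℂ)
    (hder : ∀ f : A, κ f = 0 → (∀ D : Derivation ℂ A A, κ (D f) = 0) → f ∈ maximalIdeal A ^ 2)
    {f g : A} (hf : κ f = 0) (hg : κ g = 0) (hf2 : f ∉ maximalIdeal A ^ 2)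
    (hg2 : g ∉ maximalIdeal A ^ 2) : CE f g := by
  have h1 : ∃ D : Derivation ℂ A A, κ (D f) ≠ 0 := by
    by_contra! h; exact hf2 (hder f hf h)
  have h2 : ∃ D : Derivation ℂ A A, κ (D g) ≠ 0 := by
    by_contra! h; exact hg2 (hder g hg h)
  obtain ⟨D₁, h₁⟩ := h1
  obtain ⟨D₂, h₂⟩ := h2
  have h3 : ∃ D : Derivation ℂ A A, κ (D g) ≠ 0 ∧ κ (D f) ≠ 0 := by
    by_cases ha : κ (D₁ g) = 0
    · by_cases hb : κ (D₂ f) = 0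
      · exact ⟨D₁ + D₂, by simpa [ha] using h₂, by simpa [hb] using h₁⟩
      · exact ⟨D₂, h₂, hb⟩
    · exact ⟨D₁, ha, h₁⟩
  obtain ⟨D, hDg, hDf⟩ := h3
  obtain ⟨Φ, hΦ⟩ := exists_flow_of_transverse κ D hg hf hDg hDf
  exact ⟨Φ, 1, by simp [hΦ]⟩

end Solvers

/-! ### Cancellation: the transverse case -/

section Transverse

/-- Transport of a derivation along an automorphism. -/
def conjDer {R : Type*} [CommRing R] [Algebra ℂ R] (φ : R ≃ₐ[ℂ] R) (d : Derivation ℂ R R) :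
    Derivation ℂ R R :=
  Derivation.mk' (φ.toLinearMap ∘ₗ (d : R →ₗ[ℂ] R) ∘ₗ φ.symm.toLinearMap) fun a b => by
    simp [Derivation.leibniz]

lemma conjDer_apply {R : Type*} [CommRing R] [Algebra ℂ R] (φ : R ≃ₐ[ℂ] R)
    (d : Derivation ℂ R R) (a : R) : conjDer φ d a = φ (d (φ.symm a)) := rfl

variable {A : Type*} [CommRing A] [Algebra ℂ A]

/-- The vector field `∂/∂X` on `A⟦X⟧`. -/
def dX (A : Type*) [CommRing A] [Algebra ℂ A] : Derivation ℂ (PowerSeries A) (PowerSeries A) :=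
  (PowerSeries.derivative A).restrictScalars ℂ

lemma dX_C (a : A) : dX A (PowerSeries.C a) = 0 := PowerSeries.derivative_C

lemma dX_X : dX A PowerSeries.X = 1 := PowerSeries.derivative_X

lemma constantCoeff_dX (h : PowerSeries A) :
    PowerSeries.constantCoeff (dX A h) = PowerSeries.coeff 1 h := by
  have := PowerSeries.coeff_derivative (R := A) h 0
  rw [PowerSeries.coeff_zero_eq_constantCoeff] at this
  exact this.trans (by simp)

/-- Restriction of a vector field on `A⟦X⟧` to the section `π`, projected along `X`. -/
def restrictDer (π : PowerSeries A →ₐ[A] A) (δ : Derivation ℂ (PowerSeries A) (PowerSeries A)) :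
    Derivation ℂ A A :=
  Derivation.mk' ((π.restrictScalars ℂ).toLinearMap ∘ₗ (δ : PowerSeries A →ₗ[ℂ] PowerSeries A) ∘ₗ
    (IsScalarTower.toAlgHom ℂ A (PowerSeries A)).toLinearMap) fun a b => by
      change π (δ (algebraMap A (PowerSeries A) (a * b))) =
        a * π (δ (algebraMap A (PowerSeries A) b)) + b * π (δ (algebraMap A (PowerSeries A) a))
      rw [map_mul, δ.leibniz, map_add, smul_eq_mul, smul_eq_mul, map_mul, map_mul, π.commutes,
        π.commutes]
      rfl

lemma restrictDer_apply (π : PowerSeries A →ₐ[A] A)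
    (δ : Derivation ℂ (PowerSeries A) (PowerSeries A)) (a : A) :
    restrictDer π δ a = π (δ (PowerSeries.C a)) := rfl

variable [IsLocalRing A]

lemma C_mem_sq (κ : A →ₐ[ℂ] ℂ) {f : A} (hf : f ∈ maximalIdeal A ^ 2) :
    (PowerSeries.C f : PowerSeries A) ∈ maximalIdeal (PowerSeries A) ^ 2 := by
  refine sq_induction κ (P := fun f => (PowerSeries.C f : PowerSeries A) ∈ _) ?_ ?_ hf
  · intro a b ha hb; rw [map_add]; exact add_mem ha hb
  · intro a b ha hb
    have ha' : psPoint κ (PowerSeries.C a) = 0 := by simp [psPoint_apply, ha]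
    have hb' : psPoint κ (PowerSeries.C b) = 0 := by simp [psPoint_apply, hb]
    rw [map_mul]; exact mul_mem_sq (psPoint κ) ha' hb'

lemma of_C_mem_sq (κ : A →ₐ[ℂ] ℂ) {F : PowerSeries A}
    (hF : F ∈ maximalIdeal (PowerSeries A) ^ 2) :
    PowerSeries.constantCoeff F ∈ maximalIdeal A ^ 2 := by
  refine sq_induction (psPoint κ) (P := fun F => PowerSeries.constantCoeff F ∈ _) ?_ ?_ hF
  · intro a b ha hb; rw [map_add]; exact add_mem ha hb
  · intro a b ha hb
    rw [map_mul]; exact mul_mem_sq κ ha hb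

/-- Adding a square preserves criticality at the closed point. -/
lemma stab_mem_sq (κ : A →ₐ[ℂ] ℂ) {f : A} (hf : f ∈ maximalIdeal A ^ 2) :
    (PowerSeries.C f + PowerSeries.X ^ 2 : PowerSeries A) ∈ maximalIdeal (PowerSeries A) ^ 2 := by
  refine add_mem (C_mem_sq κ hf) ?_
  have hX : psPoint κ PowerSeries.X = 0 := by simp [psPoint_apply]
  rw [pow_two PowerSeries.X]
  exact mul_mem_sq (psPoint κ) hX hX

variable [IsNoetherianRing A] [IsAdicComplete (maximalIdeal A) A]

/-- If `φ X` has order one in `X`, then `φ X = 0` defines a section of `A → A⟦X⟧`, and `π` is the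
restriction to it. Since `φ` carries `A⟦X⟧ ⧸ (X)` to `A⟦X⟧ ⧸ (φ X)`, the composite
`θ = π ∘ φ ∘ C` is an automorphism of `A`. -/
lemma exists_theta (κ : A →ₐ[ℂ] ℂ) (φ : PowerSeries A ≃ₐ[ℂ] PowerSeries A)
    (hb : psPoint κ (dX A (φ PowerSeries.X)) ≠ 0) :
    ∃ (π : PowerSeries A →ₐ[A] A) (θ : A ≃ₐ[ℂ] A), π (φ PowerSeries.X) = 0 ∧
      ∀ a, π (φ (PowerSeries.C a)) = θ a := by
  have hY : psPoint κ (φ PowerSeries.X) = 0 := by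
    rw [point_equiv]; simp [psPoint_apply]
  obtain ⟨π, hπ⟩ := exists_eval κ (φ PowerSeries.X) (by
      rwa [psPoint_apply, ← PowerSeries.coeff_zero_eq_constantCoeff_apply] at hY) (by
    rwa [psPoint_apply, constantCoeff_dX] at hb)
  have hπY : π (φ PowerSeries.X) = 0 := (hπ _).2 dvd_rfl
  let θ : A →ₐ[ℂ] A := (π.restrictScalars ℂ).comp
    ((φ : PowerSeries A →ₐ[ℂ] PowerSeries A).comp (IsScalarTower.toAlgHom ℂ A (PowerSeries A)))
  have hθ : ∀ a, θ a = π (φ (PowerSeries.C a)) := fun a => rfl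
  have hbij : Function.Bijective θ := by
    constructor
    · rw [injective_iff_map_eq_zero]
      intro a ha
      rw [hθ, hπ, map_dvd_iff, PowerSeries.X_dvd_iff] at ha
      simpa using ha
    · intro b
      obtain ⟨r, hr⟩ : ∃ r, φ.symm (PowerSeries.C b) = PowerSeries.C
          (PowerSeries.constantCoeff (φ.symm (PowerSeries.C b))) + PowerSeries.X * r := by
        have : PowerSeries.X ∣ φ.symm (PowerSeries.C b) - PowerSeries.C
          (PowerSeries.constantCoeff (φ.symm (PowerSeries.C b))) := by
          rw [PowerSeries.X_dvd_iff]; simp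
        obtain ⟨r, hr⟩ := this
        exact ⟨r, by rw [← hr]; ring⟩
      refine ⟨_, (hθ (PowerSeries.constantCoeff (φ.symm (PowerSeries.C b)))).trans ?_⟩
      have := congrArg (fun x => π (φ x)) hr
      simp only [AlgEquiv.apply_symm_apply, eval_C, map_add, map_mul, hπY, zero_mul,
        add_zero] at this
      exact this.symm
  exact ⟨π, AlgEquiv.ofBijective θ hbij, hπY, fun a => rfl⟩

/-- Second-order data, at the closed point, of the vector field `δ = φ ∂ φ⁻¹` attached to a
contact equivalence between `f + X²` and `g + X²`, where `f` has a critical point. Commuting `δ`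
with `∂` computes `δ X`; applying `δ` twice computes the Hessian of `f` along `δ`. -/
lemma conj_second_order (κ : A →ₐ[ℂ] ℂ) {f g : A} (hf : f ∈ maximalIdeal A ^ 2) (hg : κ g = 0)
    (φ : PowerSeries A ≃ₐ[ℂ] PowerSeries A) {u : PowerSeries A} (hu : IsUnit u)
    (h : PowerSeries.C f + PowerSeries.X ^ 2 = u * φ (PowerSeries.C g + PowerSeries.X ^ 2)) :
    conjDer φ (dX A) (PowerSeries.C f + PowerSeries.X ^ 2) =
      conjDer φ (dX A) u * φ (PowerSeries.C g + PowerSeries.X ^ 2) +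
        2 * u * φ PowerSeries.X ∧
    psPoint κ (conjDer φ (dX A) PowerSeries.X) =
      psPoint κ u * psPoint κ (dX A (φ PowerSeries.X)) ∧
    ∀ π : PowerSeries A →ₐ[A] A,
      κ (restrictDer π (conjDer φ (dX A)) (restrictDer π (conjDer φ (dX A)) f)) =
        2 * psPoint κ u - 2 * psPoint κ (conjDer φ (dX A) PowerSeries.X) ^ 2 := by
  set P := psPoint κ with hP
  set Y := φ PowerSeries.X with hYdef
  have hPX : P PowerSeries.X = 0 := by simp [hP, psPoint_apply]
  have hY : P Y = 0 := by rw [hYdef, point_equiv, hPX]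
  set G := φ (PowerSeries.C g + PowerSeries.X ^ 2) with hG
  have hPG : P G = 0 := by rw [hG, point_equiv]; simp [hPX]; simp [hP, psPoint_apply, hg]
  have hu0 : P u ≠ 0 := (isUnit_iff P).1 hu
  have hFsq := stab_mem_sq κ hf
  set F : PowerSeries A := PowerSeries.C f + PowerSeries.X ^ 2 with hF
  have hdF : dX A F = 2 * PowerSeries.X := by
    rw [hF, map_add, dX_C, Derivation.leibniz_pow, dX_X]; simp
  have hPdG : P (dX A G) = 0 := by
    have h1 := congrArg (fun x => P (dX A x)) h
    simp [hdF, hPX, hPG] at h1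
    tauto
  set δ := conjDer φ (dX A) with hδ
  have hδY : δ Y = 1 := by rw [hδ, conjDer_apply, hYdef, AlgEquiv.symm_apply_apply, dX_X, map_one]
  have hδG : δ G = 2 * Y := by
    rw [hδ, conjDer_apply, hG, AlgEquiv.symm_apply_apply, map_add, dX_C, Derivation.leibniz_pow,
      dX_X]
    simp [hYdef, map_ofNat φ 2]
  have hδF : δ F = δ u * G + 2 * u * Y := by
    rw [h, Derivation.leibniz, hδG, smul_eq_mul, smul_eq_mul]; ring
  have hδF' : δ F = δ (PowerSeries.C f) + 2 * PowerSeries.X * δ PowerSeries.X := by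
    rw [hF, map_add, Derivation.leibniz_pow]; simp; ring
  have h2 : ∀ (D : Derivation ℂ (PowerSeries A) (PowerSeries A)), D 2 = 0 := fun D => by
    have := D.map_natCast 2; simpa using this
  have hP2 : P 2 = 2 := map_ofNat P 2
  have hδX : P (δ PowerSeries.X) = P u * P (dX A Y) := by
    have h1 := der_comm P δ (dX A) hFsq
    rw [hdF, hδF] at h1
    simp [h2, hP2, hPG, hPdG, hY] at h1
    linear_combination h1 / 2
  refine ⟨hδF, hδX, fun π => ?_⟩
  have hκπ : ∀ x, κ (π x) = P x := point_eval κ π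
  have hδδ : P (δ (δ (PowerSeries.C f))) = 2 * P u - 2 * P (δ PowerSeries.X) ^ 2 := by
    have h1 : P (δ (δ F)) = 2 * P u := by
      rw [hδF]; simp [h2, hP2, hδY, hδG, hPG, hY]
    rw [hδF'] at h1
    simp [h2, hP2, hPX] at h1
    linear_combination h1
  set d := restrictDer π δ with hd
  have hκd : ∀ a, κ (d a) = P (δ (PowerSeries.C a)) := fun a => by
    rw [hd, restrictDer_apply, hκπ]
  have hdd : κ (d (d f)) = P (δ (δ (PowerSeries.C f))) := by
    refine sq_induction κ (P := fun f => κ (d (d f)) = P (δ (δ (PowerSeries.C f)))) ?_ ?_ hf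
    · intro a b ha hb; simp [ha, hb]
    · intro a b ha hb
      have ha' : P (PowerSeries.C a) = 0 := by simp [hP, psPoint_apply, ha]
      have hb' : P (PowerSeries.C b) = 0 := by simp [hP, psPoint_apply, hb]
      simp [ha, hb, ha', hb', hκd]
  rw [hdd, hδδ]

/-- Cancellation of the square when `φ X` has order one in `X`: restricting the relation to the
section `φ X = 0` gives `f + s² ~ g`, and differentiating it along `φ ∂ φ⁻¹` shows that `s` is a
derivative of `f` up to a multiple of `f`, so that `s²` can be removed by `square_solver`. -/
lemma CE_of_transverse (κ : A →ₐ[ℂ] ℂ) {f g : A} (hf : f ∈ maximalIdeal A ^ 2) (hg : κ g = 0)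
    (φ : PowerSeries A ≃ₐ[ℂ] PowerSeries A) {u : PowerSeries A} (hu : IsUnit u)
    (h : PowerSeries.C f + PowerSeries.X ^ 2 = u * φ (PowerSeries.C g + PowerSeries.X ^ 2))
    (hb : psPoint κ (dX A (φ PowerSeries.X)) ≠ 0) : CE f g := by
  obtain ⟨π, θ, hπY, hθ⟩ := exists_theta κ φ hb
  set P := psPoint κ with hP
  set Y := φ PowerSeries.X with hYdef
  have hPX : P PowerSeries.X = 0 := by simp [hP, psPoint_apply]
  have hY : P Y = 0 := by rw [hYdef, point_equiv, hPX]
  have hκπ : ∀ x, κ (π x) = P x := point_eval κ π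
  set G := φ (PowerSeries.C g + PowerSeries.X ^ 2) with hG
  have hPG : P G = 0 := by rw [hG, point_equiv]; simp [hPX]; simp [hP, psPoint_apply, hg]
  have hκf : κ f = 0 := by
    rw [← mem_max κ]; exact Ideal.pow_le_self (two_ne_zero) hf
  set s := π PowerSeries.X with hs
  have hκs : κ s = 0 := by rw [hs, hκπ, hPX]
  have hrel : f + s ^ 2 = π u * θ g := by
    have := congrArg π h
    rw [hG] at this
    simpa [eval_C, ← hYdef, hπY, hθ] using this
  have hu0 : P u ≠ 0 := (isUnit_iff P).1 hu
  set F : PowerSeries A := PowerSeries.C f + PowerSeries.X ^ 2 with hF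
  obtain ⟨hδF, hδX, hdd⟩ := conj_second_order κ hf hg φ hu h
  specialize hdd π
  set δ := conjDer φ (dX A) with hδ
  have hδF' : δ F = δ (PowerSeries.C f) + 2 * PowerSeries.X * δ PowerSeries.X := by
    rw [hF, map_add, Derivation.leibniz_pow]; simp; ring
  set η := π (δ PowerSeries.X) with hη
  have hκη : κ η = P (δ PowerSeries.X) := hκπ _
  rw [← hP, ← hκη] at hdd
  have hη0 : κ η ≠ 0 := by rw [hκη, hδX]; exact mul_ne_zero hu0 hb
  set d := restrictDer π δ with hd
  obtain ⟨u', hu'⟩ := hu.exists_right_inv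
  set α := π (δ u) * π u' with hα
  have hdf : d f + 2 * s * η = α * (f + s ^ 2) := by
    have e1 : δ F = δ u * u' * F + 2 * u * Y := by
      rw [hδF, h]; linear_combination (-(δ u * G)) * hu'
    rw [hδF'] at e1
    have e2 := congrArg π e1
    rw [hF] at e2
    simp only [map_add, map_mul, map_pow, eval_C, hπY, mul_zero, add_zero, map_ofNat] at e2
    exact e2
  have hden : IsUnit (2 * η - α * s) := by
    rw [isUnit_iff κ]; simpa [hκs, map_ofNat κ 2] using hη0
  obtain ⟨v, hv⟩ := hden.exists_right_inv
  have hκv : 2 * κ η * κ v = 1 := by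
    have := congrArg κ hv
    simpa [hκs, map_ofNat κ 2] using this
  -- The relation `hdf` is linear in `s` up to the factor `2 η - α s`, a unit with inverse `v`.
  set D : Derivation ℂ A A := (-v) • d with hD
  have hDa : ∀ a, D a = -v * d a := fun a => rfl
  have hκDf : κ (D f) = 0 := der_sq κ D hf
  have hκdf : κ (d f) = 0 := der_sq κ d hf
  set w := D f with hw
  have hsw : s = w + v * α * f := by
    rw [hw, hDa]
    linear_combination (-s) * hv + v * hdf
  -- `f + s² = V f + w²` with `V` a unit.
  set V := 1 + 2 * (v * α) * w + (v * α) ^ 2 * f with hV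
  have hκV : κ V = 1 := by simp [hV, hκf, hκDf]
  have hVu : IsUnit V := by rw [isUnit_iff κ, hκV]; exact one_ne_zero
  obtain ⟨V', hV'⟩ := hVu.exists_right_inv
  have hκV' : κ V' = 1 := by
    have := congrArg κ hV'
    simpa [hκV] using this
  obtain ⟨Φ, hΦ⟩ := square_solver κ D f V' hκDf (by
    rw [← hw, hκV', hw, hDa, hDa]
    simp only [Derivation.leibniz, map_neg, smul_eq_mul, map_add, map_mul, hκdf, hdd, neg_mul,
      zero_mul, mul_one]
    intro h0
    apply hu0
    linear_combination κ η ^ 2 * h0 - (P u * (1 + 2 * κ η * κ v) - 1 * κ η ^ 2 * (1 + 2 * κ η * κ v)) * hκv)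
  have hfin : V * Φ f = π u * θ g := by
    rw [hΦ, ← hw, ← hrel, hsw, hV]
    have e : V * V' * w ^ 2 = w ^ 2 := by rw [hV', one_mul]
    rw [hV] at e
    linear_combination e
  exact (CE.of_isUnit Φ hVu hfin.symm).symm.trans (CE.of_isUnit θ (hu.map π) rfl)

end Transverse

/-! ### Cancellation: the degenerate case -/

section Degenerate

variable {A : Type*} [CommRing A] [Algebra ℂ A]

/-- The derivation of `A⟦X⟧` applying `D` to every coefficient. -/
def mapDer (D : Derivation ℂ A A) : Derivation ℂ (PowerSeries A) (PowerSeries A) :=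
  Derivation.mk'
    { toFun := fun h => PowerSeries.mk fun n => D (PowerSeries.coeff n h)
      map_add' := fun a b => by ext n; simp
      map_smul' := fun c a => by ext n; simp } fun a b => by
    ext n
    simp [PowerSeries.coeff_mul, Finset.sum_add_distrib]
    rw [← Finset.Nat.sum_antidiagonal_swap (n := n)
      (f := fun p => PowerSeries.coeff p.1 b * D (PowerSeries.coeff p.2 a))]
    rfl

lemma coeff_mapDer (D : Derivation ℂ A A) (h : PowerSeries A) (n : ℕ) :
    PowerSeries.coeff n (mapDer D h) = D (PowerSeries.coeff n h) := by
  change PowerSeries.coeff n (PowerSeries.mk fun n => D (PowerSeries.coeff n h)) = _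
  exact PowerSeries.coeff_mk _ _

lemma mapDer_C (D : Derivation ℂ A A) (a : A) :
    mapDer D (PowerSeries.C a) = PowerSeries.C (D a) := by
  ext n
  rw [coeff_mapDer, PowerSeries.coeff_C, PowerSeries.coeff_C]
  split_ifs <;> simp

lemma mapDer_X (D : Derivation ℂ A A) : mapDer D PowerSeries.X = 0 := by
  ext n
  rw [coeff_mapDer, PowerSeries.coeff_X]
  split_ifs <;> simp

lemma mem_sq_equiv [IsLocalRing A] (κ : A →ₐ[ℂ] ℂ) (φ : A ≃ₐ[ℂ] A) {a : A}
    (ha : a ∈ maximalIdeal A ^ 2) : φ a ∈ maximalIdeal A ^ 2 := by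
  refine sq_induction κ (P := fun a => φ a ∈ _) ?_ ?_ ha
  · intro a b h1 h2; rw [map_add]; exact add_mem h1 h2
  · intro a b h1 h2
    rw [map_mul]
    exact mul_mem_sq κ (by rwa [point_equiv]) (by rwa [point_equiv])

variable [IsLocalRing A] [IsNoetherianRing A] [IsAdicComplete (maximalIdeal A) A]

/-- A series of order two modulo `𝔪` is, up to a unit and a translation of `X`, of the form
`k + X²`: Weierstrass preparation followed by completing the square. -/
lemma exists_split (κ : A →ₐ[ℂ] ℂ) [IsAdicComplete (maximalIdeal (PowerSeries A)) (PowerSeries A)]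
    (F : PowerSeries A) (h0 : κ (PowerSeries.coeff 0 F) = 0) (h1 : κ (PowerSeries.coeff 1 F) = 0)
    (h2 : κ (PowerSeries.coeff 2 F) ≠ 0) :
    ∃ (k : A) (S : PowerSeries A ≃ₐ[ℂ] PowerSeries A) (v : PowerSeries A), IsUnit v ∧
      PowerSeries.C k + PowerSeries.X ^ 2 = v * S F ∧
      ∀ h, psPoint κ (dX A (S h)) = psPoint κ (dX A h) := by
  have hord : (F.map (residue A)).order = (2 : ℕ) := by
    refine order_map_residue κ F 2 (fun i hi => ?_) h2
    interval_cases i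
    · exact h0
    · exact h1
  have hne : F.map (residue A) ≠ 0 := by
    intro h; rw [h, PowerSeries.order_zero] at hord; simp at hord
  obtain ⟨p, q, hpq⟩ := PowerSeries.exists_isWeierstrassFactorization hne
  have hdeg : p.natDegree = 2 := by
    rw [hpq.natDegree_eq_toNat_order_map, hord]; rfl
  have hmon : p.Monic := hpq.isDistinguishedAt.monic
  have hp1 : κ (p.coeff 1) = 0 := by
    rw [← mem_max κ]; exact hpq.isDistinguishedAt.mem (by rw [hdeg]; norm_num)
  have hp : (p : PowerSeries A) = PowerSeries.X ^ 2 +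
      PowerSeries.C (p.coeff 1) * PowerSeries.X + PowerSeries.C (p.coeff 0) := by
    have : p = Polynomial.X ^ 2 + Polynomial.C (p.coeff 1) * Polynomial.X +
        Polynomial.C (p.coeff 0) := by
      conv_lhs => rw [hmon.as_sum, hdeg]
      simp [Finset.sum_range_succ]; ring
    conv_lhs => rw [this]
    simp
  set τ : PowerSeries A := PowerSeries.C (-((2⁻¹ : ℂ) • p.coeff 1)) with hτ
  have hPτ : psPoint κ τ = 0 := by rw [psPoint_apply]; simp [hτ, hp1]
  have hdτ : dX A τ = 0 := dX_C _
  obtain ⟨S, -, hS, hSlin⟩ := exists_flow (psPoint κ) (dX A) τ hPτ (by simp [hdτ])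
  have hSC : ∀ a, S (PowerSeries.C a) = PowerSeries.C a := fun a => by
    rw [hSlin _ (by simp [dX_C]), dX_C]; simp
  have hSX : S PowerSeries.X = PowerSeries.X + τ := by
    rw [hSlin _ (by simp [dX_X]), dX_X, mul_one]
  have hu : IsUnit (S q) := hpq.isUnit.map S
  obtain ⟨v, hv⟩ := hu.exists_right_inv
  refine ⟨p.coeff 0 - (4⁻¹ : ℂ) • (p.coeff 1) ^ 2, S, v, IsUnit.of_mul_eq_one _ (mul_comm v _ ▸ hv),
    ?_, fun h => ?_⟩
  · conv_rhs => rw [hpq.eq_mul, map_mul, hp]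
    simp only [map_add, map_mul, map_pow, hSC, hSX]
    have e2 : p.coeff 1 = -2 * (-((2⁻¹ : ℂ) • p.coeff 1)) := by
      rw [neg_mul_neg, two_mul, ← add_smul]; norm_num
    have e4 : (4⁻¹ : ℂ) • (p.coeff 1) ^ 2 = (-((2⁻¹ : ℂ) • p.coeff 1)) ^ 2 := by
      rw [neg_sq, smul_pow]; norm_num
    have e2' : PowerSeries.C (p.coeff 1) = -2 * τ := by
      rw [hτ]; conv_lhs => rw [e2]
      rw [map_mul, map_neg, map_ofNat]
    rw [map_sub, e4, map_pow, ← hτ, e2']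
    linear_combination (-(PowerSeries.C (p.coeff 0) + PowerSeries.X ^ 2 - τ ^ 2)) * hv
  · rw [der_flow (psPoint κ) (dX A) hPτ hS, hdτ]; simp

/-- Cancellation of the square when `φ X` has vanishing linear `X`-term. An auxiliary
automorphism `S ∘ N` turns `f + X²` into another stabilisation `k + X²` in such a way that
`k ~ f` and `k ~ g` both fall under `CE_of_transverse`. -/
lemma CE_of_degenerate (κ : A →ₐ[ℂ] ℂ)
    [IsAdicComplete (maximalIdeal (PowerSeries A)) (PowerSeries A)]
    {f g : A} (hf : f ∈ maximalIdeal A ^ 2) (hg : κ g = 0)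
    (φ : PowerSeries A ≃ₐ[ℂ] PowerSeries A) {u : PowerSeries A} (hu : IsUnit u)
    (h : PowerSeries.C f + PowerSeries.X ^ 2 = u * φ (PowerSeries.C g + PowerSeries.X ^ 2))
    (hb : psPoint κ (dX A (φ PowerSeries.X)) = 0) : CE f g := by
  obtain ⟨-, hδX, hdd⟩ := conj_second_order κ hf hg φ hu h
  set P := psPoint κ with hP
  set δ := conjDer φ (dX A) with hδ
  have hPX : P PowerSeries.X = 0 := by simp [hP, psPoint_apply]
  rw [hb, mul_zero] at hδX
  have hu0 : P u ≠ 0 := (isUnit_iff P).1 hu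
  have hκf : κ f = 0 := by
    rw [← mem_max κ]; exact Ideal.pow_le_self (two_ne_zero) hf
  -- The vector field on `A` induced by `δ` on the section `X = 0`, extended constantly in `X`.
  let π : PowerSeries A →ₐ[A] A :=
    { (PowerSeries.constantCoeff : PowerSeries A →+* A) with
      commutes' := fun r => by simp }
  set D := restrictDer π δ with hD
  have hκD : ∀ a, κ (D a) = P (δ (PowerSeries.C a)) := fun a => rfl
  have hDD : κ (D (D f)) = 2 * P u := by rw [hdd π, hδX]; ring
  have hPD : ∀ a, P (mapDer D a) = P (δ a) := fun a => by
    have e1 : P (mapDer D a) = κ (D (PowerSeries.constantCoeff a)) := by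
      rw [hP, psPoint_apply, ← PowerSeries.coeff_zero_eq_constantCoeff_apply, coeff_mapDer,
        PowerSeries.coeff_zero_eq_constantCoeff_apply]
    rw [e1, hκD]
    conv_rhs => rw [PowerSeries.eq_X_mul_shift_add_const a]
    simp [hδX, hPX]
  -- `c ≠ 0` makes `φ X` acquire a linear term in `X`; the other condition keeps the coefficient of
  -- `X²` in the image of `f + X²` a unit.
  obtain ⟨c, hc0, hc⟩ : ∃ c : ℂ, c ≠ 0 ∧ 1 + c ^ 2 * P u ≠ 0 := by
    by_cases h1 : 1 + P u = 0
    · refine ⟨2, two_ne_zero, ?_⟩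
      have : P u = -1 := by linear_combination h1
      rw [this]; norm_num
    · exact ⟨1, one_ne_zero, by simpa using h1⟩
  have hNτ : mapDer D (c • PowerSeries.X) = 0 := by
    rw [Derivation.map_smul, mapDer_X, smul_zero]
  obtain ⟨N, -, hN, hNlin⟩ := exists_flow P (mapDer D) (c • PowerSeries.X)
    (by rw [map_smul, hPX, smul_zero]) (by rw [hNτ]; simp)
  have hNX : N PowerSeries.X = PowerSeries.X := by
    rw [hNlin _ (by simp [mapDer_X]), mapDer_X]; simp
  obtain ⟨r, hr⟩ := hN (PowerSeries.C f)
  have hNF : N (PowerSeries.C f + PowerSeries.X ^ 2) = PowerSeries.C f +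
      PowerSeries.X * PowerSeries.C (c • D f) + PowerSeries.X ^ 2 *
        PowerSeries.C (1 + c ^ 2 • ((2⁻¹ : ℂ) • D (D f))) + PowerSeries.X ^ 3 * (c ^ 3 • r) := by
    have hC : ∀ (z : ℂ) (a : A), PowerSeries.C (z • a) = z • PowerSeries.C a := fun z a => by
      ext n; simp [PowerSeries.coeff_C]
    rw [map_add, map_pow, hNX, hr, mapDer_C, mapDer_C, map_add, hC, hC, hC, map_one]
    simp only [Algebra.smul_def, map_pow]
    ring
  obtain ⟨k, S, v, hv, hk, hS⟩ := exists_split κ (N (PowerSeries.C f + PowerSeries.X ^ 2))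
    (by rw [hNF]; simp [hκf, PowerSeries.coeff_zero_eq_constantCoeff])
    (by
      rw [hNF]
      simp [PowerSeries.coeff_X_pow_mul']
      right; exact der_sq κ D hf)
    (by
      rw [hNF]
      simp [PowerSeries.coeff_X_pow_mul', PowerSeries.coeff_X, hDD]
      exact hc)
  have hkm : k ∈ maximalIdeal A ^ 2 := by
    have : PowerSeries.C k + PowerSeries.X ^ 2 ∈ maximalIdeal (PowerSeries A) ^ 2 := by
      rw [hk]
      exact Ideal.mul_mem_left _ _ (mem_sq_equiv P S (mem_sq_equiv P N (stab_mem_sq κ hf)))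
    simpa using of_C_mem_sq κ this
  have hkf : CE k f := by
    refine CE_of_transverse κ hkm hκf (N.trans S) hv hk ?_
    change P (dX A (S (N PowerSeries.X))) ≠ 0
    rw [hS, hNX, dX_X, map_one]; exact one_ne_zero
  have hkg : CE k g := by
    refine CE_of_transverse κ hkm hg ((φ.trans N).trans S) (u := v * S (N u))
      (hv.mul ((hu.map N).map S)) ?_ ?_
    · rw [hk, h, map_mul, map_mul, mul_assoc]; rfl
    · change P (dX A (S (N (φ PowerSeries.X)))) ≠ 0
      rw [hS, der_flow P (mapDer D) (by rw [map_smul, hPX, smul_zero]) hN, hb, hPD]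
      rw [hδ, conjDer_apply, AlgEquiv.symm_apply_apply, dX_X, Derivation.map_smul, dX_X]
      simpa using hc0
  exact hkf.symm.trans hkg

end Degenerate

/-! ### Adding one square -/

section OneVariable

variable {A : Type*} [CommRing A] [Algebra ℂ A]

/-- The automorphism of `A⟦X⟧` extending `φ` on `A` and sending `X` to `v X`, for a unit `v`. -/
lemma exists_lift (φ : A ≃ₐ[ℂ] A) {v v' : A} (hv : v * v' = 1) :
    ∃ Ψ : PowerSeries A ≃ₐ[ℂ] PowerSeries A, (∀ a, Ψ (PowerSeries.C a) = PowerSeries.C (φ a)) ∧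
      Ψ PowerSeries.X = PowerSeries.C v * PowerSeries.X := by
  let ψ : PowerSeries A →+* PowerSeries A :=
    (PowerSeries.rescale v).comp (PowerSeries.map (φ : A →+* A))
  have hψ : ∀ n h, PowerSeries.coeff n (ψ h) = v ^ n * φ (PowerSeries.coeff n h) := fun n h => by
    change PowerSeries.coeff n (PowerSeries.rescale v (PowerSeries.map (φ : A →+* A) h)) = _
    rw [PowerSeries.coeff_rescale, PowerSeries.coeff_map]; rfl
  have hvn : ∀ n, v ^ n * v' ^ n = 1 := fun n => by rw [← mul_pow, hv, one_pow]
  have hC : ∀ a, ψ (PowerSeries.C a) = PowerSeries.C (φ a) := fun a => by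
    ext n
    rw [hψ, PowerSeries.coeff_C, PowerSeries.coeff_C]
    split_ifs with hn <;> simp [hn]
  let Ψ : PowerSeries A →ₐ[ℂ] PowerSeries A :=
    { ψ with
      commutes' := fun r => by
        change ψ (algebraMap ℂ _ r) = _
        rw [PowerSeries.algebraMap_apply, hC, AlgEquiv.commutes] }
  have hbij : Function.Bijective Ψ := by
    constructor
    · intro a b hab
      ext n
      have := congrArg (PowerSeries.coeff n) (show ψ a = ψ b from hab)
      rw [hψ, hψ] at this
      apply φ.injective
      linear_combination v' ^ n * this -
        (φ (PowerSeries.coeff n a) - φ (PowerSeries.coeff n b)) * hvn n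
    · intro b
      refine ⟨PowerSeries.mk fun n => φ.symm (v' ^ n * PowerSeries.coeff n b), ?_⟩
      change ψ _ = b
      ext n
      rw [hψ, PowerSeries.coeff_mk, AlgEquiv.apply_symm_apply, ← mul_assoc, hvn, one_mul]
  refine ⟨AlgEquiv.ofBijective Ψ hbij, hC, ?_⟩
  change ψ PowerSeries.X = _
  ext n
  rw [hψ, PowerSeries.coeff_C_mul, PowerSeries.coeff_X]
  split_ifs with hn <;> simp [hn]

variable [IsLocalRing A] [IsNoetherianRing A] [IsAdicComplete (maximalIdeal A) A]

/-- Units have square roots, by Hensel's lemma in the form of `exists_eval`. -/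
lemma exists_sqrt (κ : A →ₐ[ℂ] ℂ) {u : A} (hu : IsUnit u) : ∃ w : A, w ^ 2 = u := by
  obtain ⟨z, hz⟩ := IsAlgClosed.exists_pow_nat_eq (κ u) (n := 2) (by norm_num)
  have hz0 : z ≠ 0 := by
    rintro rfl
    exact (isUnit_iff κ).1 hu (by rw [← hz]; simp)
  set c := algebraMap ℂ A z with hc
  have hκc : κ c = z := by simp [hc]
  obtain ⟨π, hπ⟩ := exists_eval κ
    ((PowerSeries.X + PowerSeries.C c) ^ 2 - PowerSeries.C u : PowerSeries A)
    (by simp [hκc, hz])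
    (by
      have e : ((PowerSeries.X + PowerSeries.C c) ^ 2 - PowerSeries.C u : PowerSeries A) =
          PowerSeries.X * (PowerSeries.X + PowerSeries.C (2 * c)) + PowerSeries.C (c ^ 2 - u) := by
        rw [map_sub, map_mul, map_pow, map_ofNat]; ring
      have h2 : κ 2 = 2 := map_ofNat κ 2
      rw [e, map_add, PowerSeries.coeff_succ_X_mul, PowerSeries.coeff_C, if_neg one_ne_zero,
        add_zero, map_add, PowerSeries.coeff_zero_X, zero_add, PowerSeries.coeff_C, if_pos rfl,
        map_mul, h2, hκc]
      exact mul_ne_zero two_ne_zero hz0)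
  refine ⟨π PowerSeries.X + c, ?_⟩
  have := (hπ _).2 dvd_rfl
  simpa [eval_C, sub_eq_zero] using this

/-- Adding one square preserves and reflects contact equivalence. -/
lemma CE_stab_iff (κ : A →ₐ[ℂ] ℂ)
    [IsAdicComplete (maximalIdeal (PowerSeries A)) (PowerSeries A)]
    (hder : ∀ f : A, κ f = 0 → (∀ D : Derivation ℂ A A, κ (D f) = 0) → f ∈ maximalIdeal A ^ 2)
    {f g : A} (hf : κ f = 0) (hg : κ g = 0) :
    CE (PowerSeries.C f + PowerSeries.X ^ 2) (PowerSeries.C g + PowerSeries.X ^ 2) ↔ CE f g := by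
  constructor
  · rintro ⟨φ, u, h⟩
    by_cases hf2 : f ∈ maximalIdeal A ^ 2
    · by_cases hb : psPoint κ (dX A (φ PowerSeries.X)) = 0
      · exact CE_of_degenerate κ hf2 hg φ u.isUnit h hb
      · exact CE_of_transverse κ hf2 hg φ u.isUnit h hb
    · refine CE_of_regular κ hder hf hg hf2 fun hg2 => hf2 ?_
      have h1 : PowerSeries.C f + PowerSeries.X ^ 2 ∈ maximalIdeal (PowerSeries A) ^ 2 := by
        rw [h]
        exact Ideal.mul_mem_left _ _ (mem_sq_equiv (psPoint κ) φ (stab_mem_sq κ hg2))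
      simpa using of_C_mem_sq κ h1
  · rintro ⟨φ, u, rfl⟩
    obtain ⟨w, hw⟩ := exists_sqrt κ u.isUnit
    have hwu : IsUnit w := isUnit_of_dvd_unit (Dvd.intro_left w (by rw [← pow_two, hw])) u.isUnit
    obtain ⟨v, hv⟩ := hwu.exists_right_inv
    obtain ⟨Ψ, hC, hX⟩ := exists_lift φ (v := v) (v' := w) (by rw [mul_comm, hv])
    refine CE.of_isUnit Ψ (u.isUnit.map (PowerSeries.C (R := A))) ?_
    rw [map_add, map_pow, hC, hX, mul_pow, mul_add, ← mul_assoc, ← map_pow, ← map_mul, ← map_mul,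
      ← hw, ← mul_pow, hv, one_pow, map_one, one_mul]

end OneVariable

/-! ### Power series in several variables -/

section Concrete

/-- The isomorphism `ℂ⟦x₁,…,xₙ₊₁⟧ ≃ ℂ⟦x₁,…,xₙ⟧⟦X⟧` splitting off the last variable. -/
def lastEquiv (n : ℕ) :
    MvPowerSeries (Fin (n + 1)) ℂ ≃ₐ[ℂ] PowerSeries (MvPowerSeries (Fin n) ℂ) :=
  (MvPowerSeries.renameEquiv ℂ finSuccEquivLast).trans (MvPowerSeries.optionEquivLeft (Fin n) ℂ)

lemma lastEquiv_last (n : ℕ) : lastEquiv n (MvPowerSeries.X (Fin.last n)) = PowerSeries.X := by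
  simp [lastEquiv]

lemma lastEquiv_castSucc (n : ℕ) (i : Fin n) :
    lastEquiv n (MvPowerSeries.X i.castSucc) = PowerSeries.C (MvPowerSeries.X i) := by
  simp [lastEquiv]

lemma lastEquiv_rename (n : ℕ) (p : MvPolynomial (Fin n) ℂ) :
    lastEquiv n ((rename Fin.castSucc p : MvPolynomial (Fin (n + 1)) ℂ) :
      MvPowerSeries (Fin (n + 1)) ℂ) = PowerSeries.C (p : MvPowerSeries (Fin n) ℂ) := by
  induction p using MvPolynomial.induction_on with
  | C r =>
    rw [rename_C, coe_C, coe_C]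
    have := (lastEquiv n).commutes r
    rwa [MvPowerSeries.algebraMap_apply, PowerSeries.algebraMap_apply,
      MvPowerSeries.algebraMap_apply] at this
  | add p q hp hq => rw [map_add, coe_add, map_add, hp, hq, coe_add, map_add]
  | mul_X p i hp =>
    rw [map_mul, rename_X, coe_mul, map_mul, hp, coe_X, lastEquiv_castSucc, coe_mul, coe_X, map_mul]

/-- The constant coefficient as a `ℂ`-algebra map: the closed point of formal affine space. -/
def mvPoint (n : ℕ) : MvPowerSeries (Fin n) ℂ →ₐ[ℂ] ℂ :=
  { (MvPowerSeries.constantCoeff : MvPowerSeries (Fin n) ℂ →+* ℂ) with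
    commutes' := fun r => by simp [MvPowerSeries.algebraMap_apply] }

lemma mvPoint_apply (n : ℕ) (f : MvPowerSeries (Fin n) ℂ) :
    mvPoint n f = MvPowerSeries.constantCoeff f := rfl

lemma maximalIdeal_eq_span (n : ℕ) : maximalIdeal (MvPowerSeries (Fin n) ℂ) =
    Ideal.span (Set.range MvPowerSeries.X) := by
  refine le_antisymm ?_ ?_
  · induction n with
    | zero =>
      intro f hf
      rw [mem_max (mvPoint 0), mvPoint_apply] at hf
      have : f = 0 := by
        ext d
        rw [Subsingleton.elim d 0]
        simpa using hf
      rw [this]; exact zero_mem _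
    | succ n ih =>
      intro f hf
      set I : Ideal (MvPowerSeries (Fin (n + 1)) ℂ) := Ideal.span (Set.range MvPowerSeries.X)
      have h0 : psPoint (mvPoint n) (lastEquiv n f) = 0 := by
        rw [mem_max (mvPoint (n + 1))] at hf
        rw [← hf]
        exact congrArg (fun k : _ →ₐ[ℂ] ℂ => k f) (point_unique
          ((psPoint (mvPoint n)).comp (lastEquiv n).toAlgHom) (mvPoint (n + 1)))
      have h1 : PowerSeries.constantCoeff (lastEquiv n f) ∈ maximalIdeal _ :=
        (mem_max (mvPoint n)).2 h0
      have h2 : maximalIdeal (MvPowerSeries (Fin n) ℂ) ≤ I.comap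
          (((lastEquiv n).symm : _ →+* _).comp PowerSeries.C) := by
        refine ih.trans ?_
        rw [Ideal.span_le]
        rintro _ ⟨i, rfl⟩
        change (lastEquiv n).symm (PowerSeries.C (MvPowerSeries.X i)) ∈ I
        rw [← lastEquiv_castSucc, AlgEquiv.symm_apply_apply]
        exact Ideal.subset_span ⟨_, rfl⟩
      have h3 : (lastEquiv n).symm (PowerSeries.C
        (PowerSeries.constantCoeff (lastEquiv n f))) ∈ I := h2 h1
      have h4 := congrArg (lastEquiv n).symm (PowerSeries.eq_X_mul_shift_add_const (lastEquiv n f))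
      rw [AlgEquiv.symm_apply_apply, map_add, map_mul, ← lastEquiv_last,
        AlgEquiv.symm_apply_apply] at h4
      rw [h4]
      exact add_mem (Ideal.mul_mem_right _ _ (Ideal.subset_span ⟨_, rfl⟩)) h3
  · rw [Ideal.span_le]
    rintro _ ⟨i, rfl⟩
    rw [SetLike.mem_coe, mem_max (mvPoint n), mvPoint_apply]
    simp

instance isAdicComplete_mv (n : ℕ) :
    IsAdicComplete (maximalIdeal (MvPowerSeries (Fin n) ℂ)) (MvPowerSeries (Fin n) ℂ) := by
  rw [maximalIdeal_eq_span]; infer_instance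

/-- Completeness of `ℂ⟦x₁,…,xₙ⟧⟦X⟧`, transported from `ℂ⟦x₁,…,xₙ₊₁⟧`. -/
instance isAdicComplete_ps (n : ℕ) :
    IsAdicComplete (maximalIdeal (PowerSeries (MvPowerSeries (Fin n) ℂ)))
      (PowerSeries (MvPowerSeries (Fin n) ℂ)) := by
  have h : (maximalIdeal (MvPowerSeries (Fin (n + 1)) ℂ)).map (lastEquiv n).toRingEquiv =
      maximalIdeal (PowerSeries (MvPowerSeries (Fin n) ℂ)) := by
    have := Ideal.map_isMaximal_of_equiv (lastEquiv n).toRingEquiv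
      (p := maximalIdeal (MvPowerSeries (Fin (n + 1)) ℂ))
    exact IsLocalRing.eq_maximalIdeal this
  rw [← h, IsAdicComplete.congr_ringEquiv]
  infer_instance

/-- A formal function all of whose derivatives vanish at the closed point lies in `𝔪²`. -/
lemma mem_sq_of_derivations (n : ℕ) (f : MvPowerSeries (Fin n) ℂ) (hf : mvPoint n f = 0)
    (h : ∀ D : Derivation ℂ (MvPowerSeries (Fin n) ℂ) (MvPowerSeries (Fin n) ℂ),
      mvPoint n (D f) = 0) : f ∈ maximalIdeal (MvPowerSeries (Fin n) ℂ) ^ 2 := by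
  rw [← mem_max (mvPoint n), maximalIdeal_eq_span, Ideal.mem_span_range_iff_exists_fun] at hf
  obtain ⟨c, rfl⟩ := hf
  have hX : ∀ i, mvPoint n (MvPowerSeries.X i) = 0 := fun i => by simp [mvPoint_apply]
  refine Ideal.sum_mem _ fun i _ => mul_mem_sq (mvPoint n) ?_ (hX i)
  have := h (MvPowerSeries.pderiv ℂ i)
  rw [map_sum, map_sum, Finset.sum_eq_single i] at this
  · simpa [hX, MvPowerSeries.pderiv_X_self] using this
  · intro j _ hj
    simp [hX, MvPowerSeries.pderiv_X_of_ne hj]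
  · simp

/-- The polynomial `f + x_{l+1}² + … + x_n²`. -/
def stab {l n : ℕ} (hln : l ≤ n) (f : MvPolynomial (Fin l) ℂ) : MvPolynomial (Fin n) ℂ :=
  rename (Fin.castLE hln) f + ∑ i ∈ Finset.univ.filter (fun i : Fin n => l ≤ (i : ℕ)), X i ^ 2

lemma stab_self {l : ℕ} (f : MvPolynomial (Fin l) ℂ) : stab le_rfl f = f := by
  have : (Fin.castLE le_rfl : Fin l → Fin l) = id := rfl
  rw [stab, this, rename_id_apply, Finset.sum_eq_zero, add_zero]
  intro i hi
  have := (Finset.mem_filter.1 hi).2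
  omega

lemma stab_succ {l n : ℕ} (hln : l ≤ n) (f : MvPolynomial (Fin l) ℂ) :
    stab (Nat.le_succ_of_le hln) f = rename Fin.castSucc (stab hln f) + X (Fin.last n) ^ 2 := by
  have : (Fin.castSucc ∘ Fin.castLE hln : Fin l → Fin (n + 1)) =
    Fin.castLE (Nat.le_succ_of_le hln) := rfl
  simp only [stab, map_add, rename_rename, this, Finset.sum_filter, Fin.sum_univ_castSucc,
    map_sum, Fin.val_castSucc, Fin.val_last, if_pos hln, add_assoc]
  congr 3
  ext1 i
  split_ifs <;> simp

lemma constantCoeff_stab {l n : ℕ} (hln : l ≤ n) {f : MvPolynomial (Fin l) ℂ}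
    (hf : constantCoeff f = 0) : constantCoeff (stab hln f) = 0 := by
  simp [stab, constantCoeff_rename, hf]

/-- The theorem, by induction on the number of added variables. -/
lemma CE_stab {l n : ℕ} (hln : l ≤ n) {f g : MvPolynomial (Fin l) ℂ}
    (hf : constantCoeff f = 0) (hg : constantCoeff g = 0) :
    CE (stab hln f : MvPowerSeries (Fin n) ℂ) (stab hln g : MvPowerSeries (Fin n) ℂ) ↔
      CE (f : MvPowerSeries (Fin l) ℂ) (g : MvPowerSeries (Fin l) ℂ) := by
  induction n, hln using Nat.le_induction with
  | base => rw [stab_self, stab_self]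
  | succ n hln ih =>
    have key : ∀ f, lastEquiv n (stab (Nat.le_succ_of_le hln) f : MvPowerSeries (Fin (n + 1)) ℂ) =
        PowerSeries.C (stab hln f : MvPowerSeries (Fin n) ℂ) + PowerSeries.X ^ 2 := fun f => by
      rw [stab_succ, coe_add, map_add, lastEquiv_rename, coe_pow, coe_X, map_pow, lastEquiv_last]
    have h0 : ∀ f, constantCoeff f = 0 →
        mvPoint n (stab hln f : MvPowerSeries (Fin n) ℂ) = 0 := fun f hf => by
      rw [mvPoint_apply, ← constantCoeff_stab hln hf, ← MvPowerSeries.coeff_zero_eq_constantCoeff_apply,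
        coeff_coe]
      rfl
    rw [← CE.equiv_iff (lastEquiv n), key, key,
      CE_stab_iff (mvPoint n) (mem_sq_of_derivations n) (h0 f hf) (h0 g hg), ih]

end Concrete

end StableContact

/-- **Stable contact equivalence.** For polynomials f, g in l variables (with zero constant
term), f + x_{l+1}² + … + xₙ² and g + x_{l+1}² + … + xₙ² are contact equivalent in
ℂ[[x₁,…,xₙ]] iff f and g are contact equivalent in ℂ[[x₁,…,x_l]]. -/
theorem statement_3 {l n : ℕ} (hln : l ≤ n) (f g : MvPolynomial (Fin l) ℂ)
    (hf0 : constantCoeff f = 0) (hg0 : constantCoeff g = 0) :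
    ContactEquiv
      (((rename (Fin.castLE hln) f +
          ∑ i ∈ Finset.univ.filter (fun i : Fin n => l ≤ (i : ℕ)), X i ^ 2 :
        MvPolynomial (Fin n) ℂ)) : MvPowerSeries (Fin n) ℂ)
      (((rename (Fin.castLE hln) g +
          ∑ i ∈ Finset.univ.filter (fun i : Fin n => l ≤ (i : ℕ)), X i ^ 2 :
        MvPolynomial (Fin n) ℂ)) : MvPowerSeries (Fin n) ℂ) ↔
    ContactEquiv (f : MvPowerSeries (Fin l) ℂ) (g : MvPowerSeries (Fin l) ℂ) := by
  exact StableContact.CE_stab hln hf0 hg0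
end
end

section
/- Let f ∈ ℂ[x₁,…,xₙ] be quasihomogeneous of type (w;d) with positive integer weights w₁,…,wₙ and positive degree d, and let g ∈ ℂ[[x₁,…,xₙ]]. If there exist a unit u of ℂ[[x₁,…,xₙ]] and a ℂ-algebra automorphism ψ of ℂ[[x₁,…,xₙ]] such that u·f = ψ(g), then there exists a ℂ-algebra automorphism φ of ℂ[[x₁,…,xₙ]] such that φ(g) = f. -/
/-!
The unit can be absorbed into a rescaling of the coordinates. Since `ℂ` contains `d`-th roots and
`d ≠ 0` there, the unit `u` has a `d`-th root `v` among the units (`exists_pow_eq_unit`). The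
substitution `θ : xᵢ ↦ v ^ wᵢ * xᵢ` sends a monomial `x ^ β` to `v ^ (w · β) * x ^ β`, so it
multiplies a quasihomogeneous polynomial of degree `d` by `v ^ d = u`, and `θ f = u f = ψ g`.

The substitution `θ` is an automorphism (`weightedTwist_bijective`): the coefficient of `θ p` at `α`
is `v(0) ^ (w · α)` times that of `p` at `α` plus a combination of the coefficients of `p` at
indices `β < α`, a triangular system with nonzero diagonal. Hence `φ = θ⁻¹ ∘ ψ` maps `g` to `f`.
-/

open MvPolynomial

noncomputable section

/-- Roots exist for constants because `ℂ` is algebraically closed; a series with constant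
coefficient `1` has the root obtained by substituting it into the binomial series of exponent
`1 / d`. -/
theorem exists_pow_eq_unit {σ : Type*} {d : ℕ} (hd : 0 < d) (u : (MvPowerSeries σ ℂ)ˣ) :
    ∃ v : MvPowerSeries σ ℂ,
      v ^ d = (u : MvPowerSeries σ ℂ) ∧ MvPowerSeries.constantCoeff v ≠ 0 := by
  set a : ℂ := MvPowerSeries.constantCoeff (u : MvPowerSeries σ ℂ) with ha
  have ha0 : a ≠ 0 := (u.isUnit.map (MvPowerSeries.constantCoeff (σ := σ) (R := ℂ))).ne_zero
  obtain ⟨c, hc⟩ := IsAlgClosed.exists_pow_nat_eq a hd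
  have hroot : ∀ k : ℕ, PowerSeries.binomialSeries ℂ (1 / d : ℚ) ^ k =
      PowerSeries.binomialSeries ℂ (k / d : ℚ) := by
    intro k
    induction k with
    | zero => simp
    | succ k ih => rw [pow_succ, ih, ← PowerSeries.binomialSeries_add]; congr 1; push_cast; ring
  have hroot' : PowerSeries.binomialSeries ℂ (1 / d : ℚ) ^ d = 1 + PowerSeries.X := by
    rw [hroot, div_self (by exact_mod_cast hd.ne')]
    simpa using PowerSeries.binomialSeries_nat (R := ℚ) (A := ℂ) 1
  set t : MvPowerSeries σ ℂ := MvPowerSeries.C a⁻¹ * (u : MvPowerSeries σ ℂ) - 1 with ht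
  have ht0 : MvPowerSeries.constantCoeff t = 0 := by
    simp [ht, ← ha, ha0]
  have hts : PowerSeries.HasSubst t := PowerSeries.HasSubst.of_constantCoeff_zero ht0
  have hv : (MvPowerSeries.C c *
      PowerSeries.subst t (PowerSeries.binomialSeries ℂ (1 / d : ℚ))) ^ d =
      (u : MvPowerSeries σ ℂ) := by
    rw [mul_pow, ← PowerSeries.subst_pow hts, hroot', ← map_pow, hc, PowerSeries.subst_add hts,
      PowerSeries.subst_X hts, ← map_one (PowerSeries.C (R := ℂ)), PowerSeries.subst_C, ht, map_one,
      add_sub_cancel, ← mul_assoc, ← map_mul, mul_inv_cancel₀ ha0, map_one, one_mul]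
  refine ⟨_, hv, fun h0 => ha0 ?_⟩
  rw [ha, ← hv, map_pow, h0, zero_pow hd.ne']

theorem hasSubst_weightedTwist {n : ℕ} (w : Fin n → ℕ) (v : MvPowerSeries (Fin n) ℂ) :
    MvPowerSeries.HasSubst (fun i => v ^ w i * MvPowerSeries.X i) :=
  MvPowerSeries.hasSubst_of_constantCoeff_zero (by simp)

/-- The substitution `xᵢ ↦ v ^ wᵢ * xᵢ`, as an endomorphism of the power series algebra. -/
def weightedTwist {n : ℕ} (w : Fin n → ℕ) (v : MvPowerSeries (Fin n) ℂ) :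
    MvPowerSeries (Fin n) ℂ →ₐ[ℂ] MvPowerSeries (Fin n) ℂ :=
  MvPowerSeries.substAlgHom (hasSubst_weightedTwist w v)

theorem prod_weightedTwist {n : ℕ} (w : Fin n → ℕ) (v : MvPowerSeries (Fin n) ℂ) (β : Fin n →₀ ℕ) :
    (β.prod fun i k => (v ^ w i * MvPowerSeries.X i) ^ k) =
      v ^ Finsupp.weight w β * MvPowerSeries.monomial β 1 := by
  rw [MvPowerSeries.monomial_one_eq, Finsupp.weight_apply, Finsupp.prod, Finsupp.sum, Finsupp.prod,
    ← Finset.prod_pow_eq_pow_sum, ← Finset.prod_mul_distrib]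
  refine Finset.prod_congr rfl fun i _ => ?_
  rw [mul_pow, ← pow_mul, smul_eq_mul, mul_comm (w i)]

/-- A weighted homogeneous polynomial of degree `d` is an eigenvector of the twist, with
eigenvalue `v ^ d`. -/
theorem weightedTwist_of_isWeightedHomogeneous {n : ℕ} (w : Fin n → ℕ) (v : MvPowerSeries (Fin n) ℂ)
    {d : ℕ} {f : MvPolynomial (Fin n) ℂ} (hf : f.IsWeightedHomogeneous w d) :
    weightedTwist w v (f : MvPowerSeries (Fin n) ℂ) = v ^ d * (f : MvPowerSeries (Fin n) ℂ) := by
  have hmon : ∀ (β : Fin n →₀ ℕ) (r : ℂ),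
      weightedTwist w v (MvPowerSeries.monomial β r) =
        v ^ Finsupp.weight w β * MvPowerSeries.monomial β r := by
    intro β r
    rw [weightedTwist, MvPowerSeries.substAlgHom_monomial, prod_weightedTwist, ← mul_assoc,
      mul_comm (algebraMap _ _ r), mul_assoc, ← Algebra.smul_def, ← map_smul, smul_eq_mul, mul_one]
  have hsum : (f : MvPowerSeries (Fin n) ℂ) =
      ∑ β ∈ f.support, MvPowerSeries.monomial β (MvPolynomial.coeff β f) := by
    conv_lhs => rw [f.as_sum]
    rw [← MvPolynomial.coeToMvPowerSeries.ringHom_apply, map_sum]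
    simp
  rw [hsum, map_sum, Finset.mul_sum]
  refine Finset.sum_congr rfl fun β hβ => ?_
  rw [hmon, hf (MvPolynomial.mem_support_iff.mp hβ)]

/-- In coefficients the twist is triangular for the divisibility order on monomials, with
diagonal entries the powers of the constant coefficient of `v`. -/
theorem coeff_weightedTwist {n : ℕ} (w : Fin n → ℕ) (v p : MvPowerSeries (Fin n) ℂ) (α : Fin n →₀ ℕ) :
    MvPowerSeries.coeff α (weightedTwist w v p) =
      MvPowerSeries.coeff α p * MvPowerSeries.constantCoeff v ^ Finsupp.weight w α +
        ∑ β ∈ Finset.Iio α, MvPowerSeries.coeff β p *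
          MvPowerSeries.coeff (α - β) (v ^ Finsupp.weight w β) := by
  classical
  have hcoeff : ∀ β : Fin n →₀ ℕ,
      MvPowerSeries.coeff α (β.prod fun i k => (v ^ w i * MvPowerSeries.X i) ^ k) =
        if β ≤ α then MvPowerSeries.coeff (α - β) (v ^ Finsupp.weight w β) else 0 := by
    intro β
    rw [prod_weightedTwist, MvPowerSeries.coeff_mul_monomial, mul_one]
  rw [weightedTwist, MvPowerSeries.substAlgHom_apply,
    MvPowerSeries.coeff_subst (hasSubst_weightedTwist w v)]
  simp only [hcoeff, smul_eq_mul]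
  rw [finsum_eq_sum_of_support_subset (s := Finset.Iic α), ← Finset.Iio_insert,
    Finset.sum_insert (by simp)]
  · congr 1
    · simp
    · refine Finset.sum_congr rfl fun β hβ => ?_
      rw [if_pos (Finset.mem_Iio.mp hβ).le]
  · intro β hβ
    by_contra hle
    simp only [Finset.coe_Iic, Set.mem_Iic] at hle
    simp [hle] at hβ

theorem weightedTwist_bijective {n : ℕ} (w : Fin n → ℕ) (v : MvPowerSeries (Fin n) ℂ)
    (hv : MvPowerSeries.constantCoeff v ≠ 0) : Function.Bijective (weightedTwist w v) := by
  constructor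
  · rw [injective_iff_map_eq_zero]
    intro p hp
    ext α
    induction α using WellFoundedLT.induction with
    | ind α ih =>
      have h := coeff_weightedTwist w v p α
      rw [hp, Finset.sum_eq_zero, add_zero, map_zero] at h
      · simpa using (mul_eq_zero.mp h.symm).resolve_right (pow_ne_zero _ hv)
      · intro β hβ
        rw [ih β (Finset.mem_Iio.mp hβ), map_zero, zero_mul]
  · intro q
    -- The coefficients of a preimage, solved for by recursion along the triangular system.
    let c : (Fin n →₀ ℕ) → ℂ := WellFoundedLT.fix fun α rec =>
      (MvPowerSeries.coeff α q - ∑ β ∈ (Finset.Iio α).attach,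
        rec β.1 (Finset.mem_Iio.mp β.2) *
          MvPowerSeries.coeff (α - β.1) (v ^ Finsupp.weight w β.1)) /
        MvPowerSeries.constantCoeff v ^ Finsupp.weight w α
    have hc : ∀ α, c α = (MvPowerSeries.coeff α q - ∑ β ∈ Finset.Iio α,
        c β * MvPowerSeries.coeff (α - β) (v ^ Finsupp.weight w β)) /
        MvPowerSeries.constantCoeff v ^ Finsupp.weight w α := by
      intro α
      rw [← Finset.sum_attach]
      exact WellFoundedLT.fix_eq _ α
    let p : MvPowerSeries (Fin n) ℂ := c
    have hp : ∀ α, MvPowerSeries.coeff α p = c α := fun _ => rfl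
    refine ⟨p, ?_⟩
    ext α
    rw [coeff_weightedTwist]
    simp only [hp]
    rw [hc α, div_mul_cancel₀ _ (pow_ne_zero _ hv), sub_add_cancel]

/-- If a quasihomogeneous polynomial f is contact equivalent to a power series g
(i.e. u·f = ψ(g) for a unit u and automorphism ψ), then g can be mapped to f by an
automorphism alone. -/
theorem statement_6 {n : ℕ} (w : Fin n → ℕ) (hw : ∀ i, 0 < w i) (d : ℕ) (hd : 0 < d)
    (f : MvPolynomial (Fin n) ℂ) (hf : f.IsWeightedHomogeneous w d)
    (g : MvPowerSeries (Fin n) ℂ)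
    (u : (MvPowerSeries (Fin n) ℂ)ˣ)
    (ψ : MvPowerSeries (Fin n) ℂ ≃ₐ[ℂ] MvPowerSeries (Fin n) ℂ)
    (h : (u : MvPowerSeries (Fin n) ℂ) * (f : MvPowerSeries (Fin n) ℂ) = ψ g) :
    ∃ φ : MvPowerSeries (Fin n) ℂ ≃ₐ[ℂ] MvPowerSeries (Fin n) ℂ,
      φ g = (f : MvPowerSeries (Fin n) ℂ) := by
  obtain ⟨v, hvu, hv0⟩ := exists_pow_eq_unit hd u
  let θ := AlgEquiv.ofBijective (weightedTwist w v) (weightedTwist_bijective w v hv0)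
  refine ⟨ψ.trans θ.symm, ?_⟩
  rw [AlgEquiv.trans_apply, AlgEquiv.symm_apply_eq, ← h, ← hvu]
  exact (weightedTwist_of_isWeightedHomogeneous w v hf).symm
end
end
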